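/- arXiv:1504.03227 — 2 statements merged into one kernel-verified Lean document; each statement's English description precedes it below -/
import Mathlib

section
/- Let p ≥ 11 be a prime and r ≥ 2 an integer. Then the sum of 1/(l_1 l_2 l_3 l_4 l_5 l_6) over all 6-tuples of positive integers with l_1+⋯+l_6 = p^r and each l_i coprime to p is congruent to -(5!/18)·p^{r-1}·B_{p-3}² modulo p^r. -/
/-- `x ≡ y (mod p^r)` as p-integral rationals. -/
def ratCong (p r : ℕ) (x y : ℚ) : Prop :=
  ∃ z : ℚ, x - y = (p : ℚ) ^ r * z ∧ ¬ (p ∣ z.den)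

/-- Sum of `1/(l₁⋯lₙ)` over positive `n`-tuples summing to `N` with each `lᵢ` coprime to `p`. -/
def hsum (p n N : ℕ) : ℚ :=
  ∑ l ∈ (Fintype.piFinset fun _ : Fin n => Finset.Icc 1 N) |>.filter
      (fun l => ∑ i, l i = N ∧ ∀ i, ¬ p ∣ l i),
    ∏ i, (1 : ℚ) / l i

namespace St13

section basics
variable (p : ℕ) [Fact p.Prime]

/-- the inverse of `n` in the `p`-adic integers, `0` if `p ∣ n`. -/
noncomputable def v (n : ℕ) : ℤ_[p] := if p ∣ n then 0 else Ring.inverse (n : ℤ_[p])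

lemma isUnit_natCast {n : ℕ} (h : ¬ p ∣ n) : IsUnit (n : ℤ_[p]) := by
  rw [PadicInt.isUnit_iff, PadicInt.norm_natCast_eq_one_iff]
  exact (Nat.Prime.coprime_iff_not_dvd Fact.out).2 h

lemma mul_v {n : ℕ} (h : ¬ p ∣ n) : (n : ℤ_[p]) * v p n = 1 := by
  rw [v, if_neg h, Ring.mul_inverse_cancel _ (isUnit_natCast p h)]

lemma v_of_dvd {n : ℕ} (h : p ∣ n) : v p n = 0 := by
  rw [v, if_pos h]

lemma v_coe (n : ℕ) : ((v p n : ℤ_[p]) : ℚ_[p]) = if p ∣ n then 0 else (n : ℚ_[p])⁻¹ := by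
  split_ifs with h
  · rw [v_of_dvd p h]; rfl
  · have h1 := congrArg (fun x : ℤ_[p] => (x : ℚ_[p])) (mul_v p h)
    simp only [PadicInt.coe_mul, PadicInt.coe_natCast, PadicInt.coe_one] at h1
    exact eq_inv_of_mul_eq_one_right h1

/-- generating function -/
noncomputable def f : PowerSeries ℤ_[p] := PowerSeries.mk (v p)

lemma hsum_eq (k N : ℕ) :
    ((hsum p k N : ℚ) : ℚ_[p]) = ((PowerSeries.coeff N (f p ^ k) : ℤ_[p]) : ℚ_[p]) := by
  have e : f p ^ k = ∏ _i : Fin k, f p := by simp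
  rw [e, PowerSeries.coeff_prod, hsum, PadicInt.coe_sum, Rat.cast_sum]
  symm
  have hsub : ∀ l : Fin k →₀ ℕ, (((∏ i : Fin k, PowerSeries.coeff (l i) (f p) : ℤ_[p])) : ℚ_[p])
      = if ∀ i, ¬ p ∣ l i then ∏ i, ((l i : ℚ_[p]))⁻¹ else 0 := by
    intro l
    have : (((∏ i : Fin k, PowerSeries.coeff (l i) (f p) : ℤ_[p])) : ℚ_[p])
        = ∏ i : Fin k, ((v p (l i) : ℤ_[p]) : ℚ_[p]) := by
      rw [← PadicInt.algebraMap_apply, map_prod]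
      simp [f]
    rw [this]
    split_ifs with h
    · exact Finset.prod_congr rfl fun i _ => by rw [v_coe, if_neg (h i)]
    · push Not at h
      obtain ⟨i, hi⟩ := h
      exact Finset.prod_eq_zero (Finset.mem_univ i) (by rw [v_coe, if_pos hi])
  simp_rw [hsub]
  rw [← Finset.sum_filter]
  refine Finset.sum_bij (fun l _ => (l : Fin k → ℕ)) ?_ ?_ ?_ ?_
  · intro l hl
    simp only [Finset.mem_filter, Finset.mem_finsuppAntidiag] at hl
    simp only [Finset.mem_filter, Fintype.mem_piFinset, Finset.mem_Icc]
    refine ⟨fun i => ⟨?_, ?_⟩, hl.1.1, hl.2⟩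
    · rcases Nat.eq_zero_or_pos (l i) with h0 | h0
      · exact absurd (h0 ▸ dvd_zero p) (hl.2 i)
      · exact h0
    · rw [← hl.1.1]
      exact Finset.single_le_sum (f := fun i => l i) (fun _ _ => Nat.zero_le _) (Finset.mem_univ i)
  · intro a _ b _ h
    exact DFunLike.coe_injective h
  · intro l hl
    simp only [Finset.mem_filter, Fintype.mem_piFinset, Finset.mem_Icc] at hl
    refine ⟨Finsupp.equivFunOnFinite.symm l, ?_, by simp⟩
    simp only [Finset.mem_filter, Finset.mem_finsuppAntidiag]
    exact ⟨⟨by simpa using hl.2.1, fun x _ => Finset.mem_univ x⟩, by simpa using hl.2.2⟩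
  · intro l _
    simp

lemma ratCong_of_dvd {r : ℕ} {x y : ℚ} {a b : ℤ_[p]} (ha : (x : ℚ_[p]) = a) (hb : (y : ℚ_[p]) = b)
    (h : (p : ℤ_[p]) ^ r ∣ a - b) : ratCong p r x y := by
  obtain ⟨c, hc⟩ := h
  have hp0 : (p : ℚ) ≠ 0 := Nat.cast_ne_zero.2 (Nat.Prime.ne_zero Fact.out)
  have hp0' : (p : ℚ_[p]) ≠ 0 := Nat.cast_ne_zero.2 (Nat.Prime.ne_zero Fact.out)
  refine ⟨(x - y) / (p : ℚ) ^ r, by field_simp, ?_⟩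
  have hz : (((x - y) / (p : ℚ) ^ r : ℚ) : ℚ_[p]) = c := by
    push_cast
    rw [ha, hb, ← PadicInt.coe_sub, hc, div_eq_iff (pow_ne_zero _ hp0')]
    push_cast
    ring
  have hn : ‖(((x - y) / (p : ℚ) ^ r : ℚ) : ℚ_[p])‖ ≤ 1 := by
    rw [hz]; exact c.2
  have hu := PadicInt.isUnit_den _ hn
  rw [PadicInt.isUnit_iff, PadicInt.norm_natCast_eq_one_iff] at hu
  exact (Nat.Prime.coprime_iff_not_dvd Fact.out).1 hu

lemma dvd_cancel {n : ℕ} (h : ¬ p ∣ n) {d x : ℤ_[p]} (hd : d ∣ n * x) : d ∣ x :=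
  ((isUnit_natCast p h).dvd_mul_left).1 hd

end basics
end St13

namespace St13
section red
variable (p : ℕ) [Fact p.Prime]
open PowerSeries

/-- coefficients beyond `d` vanish -/
def Deg (F : PowerSeries ℤ_[p]) (d : ℕ) : Prop := ∀ n, d < n → coeff n F = 0

variable {p}
lemma Deg.mul {F G : PowerSeries ℤ_[p]} {a b : ℕ} (hF : Deg p F a) (hG : Deg p G b) :
    Deg p (F * G) (a + b) := by
  intro n hn
  rw [coeff_mul]
  refine Finset.sum_eq_zero fun x hx => ?_
  rw [Finset.HasAntidiagonal.mem_antidiagonal] at hx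
  rcases lt_or_ge a x.1 with h | h
  · rw [hF _ h, zero_mul]
  · rw [hG _ (by omega), mul_zero]

lemma Deg.pow {F : PowerSeries ℤ_[p]} {a : ℕ} (hF : Deg p F a) (k : ℕ) :
    Deg p (F ^ k) (k * a) := by
  induction k with
  | zero =>
    intro n hn
    rw [pow_zero, coeff_one, if_neg (by omega)]
  | succ k ih =>
    rw [pow_succ, Nat.succ_mul]
    exact ih.mul hF

lemma v_sub (q n : ℕ) (hq : p ∣ q) (hn : q ≤ n) :
    v p n - v p (n - q) = q * (- v p n * v p (n - q)) := by
  by_cases h : p ∣ n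
  · have h2 : p ∣ n - q := Nat.dvd_sub h hq
    rw [v_of_dvd p h, v_of_dvd p h2]; ring
  · have h2 : ¬ p ∣ n - q := fun h2 => h (by simpa [Nat.sub_add_cancel hn] using dvd_add h2 hq)
    have e1 := mul_v p h
    have e2 := mul_v p h2
    have e3 : (n : ℤ_[p]) = ((n - q : ℕ) : ℤ_[p]) + q := by
      rw [← Nat.cast_add, Nat.sub_add_cancel hn]
    rw [e3] at e1
    linear_combination (-v p n) * e2 + (v p (n-q)) * e1

lemma coeff_mul_D (F : PowerSeries ℤ_[p]) (q n : ℕ) :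
    coeff n (F * (1 - X ^ q)) = coeff n F - if q ≤ n then coeff (n - q) F else 0 := by
  rw [mul_sub, mul_one, map_sub, coeff_mul_X_pow']

/-- first decomposition -/
lemma decomp (q : ℕ) (hq : p ∣ q) : ∃ h0 f1 g1 f2 : PowerSeries ℤ_[p],
    f p * (1 - X ^ q) = h0 + C (q : ℤ_[p]) * f1 ∧ f1 * (1 - X ^ q) = g1 + C (q : ℤ_[p]) * f2 ∧
    Deg p h0 (q - 1) ∧ Deg p g1 (2 * q - 1) := by
  let f1 : PowerSeries ℤ_[p] := mk fun n => if q ≤ n then - v p n * v p (n - q) else 0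
  have key : ∀ n, ∃ c : ℤ_[p], 2 * q ≤ n → coeff n (f1 * (1 - X ^ q)) = q * c := by
    intro n
    by_cases hn : 2 * q ≤ n
    · have h1 := v_sub (p := p) q n hq (by omega)
      have h2 := v_sub (p := p) q (n - q) hq (by omega)
      refine ⟨v p (n - q) * (v p n * v p (n - q) + v p (n - q) * v p (n - q - q)), fun _ => ?_⟩
      rw [coeff_mul_D, if_pos (by omega)]
      simp only [f1, coeff_mk]
      rw [if_pos (by omega), if_pos (by omega)]
      linear_combination (-v p (n - q)) * h1 - (v p (n - q)) * h2
    · exact ⟨0, fun h => absurd h hn⟩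
  choose c hc using key
  refine ⟨mk fun n => if q ≤ n then 0 else v p n, f1,
    mk fun n => if 2 * q ≤ n then 0 else coeff n (f1 * (1 - X ^ q)),
    mk fun n => if 2 * q ≤ n then c n else 0, ?_, ?_, ?_, ?_⟩
  · ext n
    rw [coeff_mul_D, map_add, coeff_C_mul]
    simp only [f, f1, coeff_mk]
    split_ifs with h
    · rw [v_sub q n hq h]; ring
    · ring
  · ext n
    rw [map_add, coeff_C_mul]
    simp only [coeff_mk]
    split_ifs with h
    · rw [hc n h]; ring
    · ring
  · intro n hn
    rw [coeff_mk, if_pos (by omega)]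
  · intro n hn
    rw [coeff_mk, if_pos (by omega)]

lemma Deg_D (q : ℕ) : Deg p (1 - X ^ q) q := by
  intro n hn
  rw [map_sub, coeff_one, coeff_X_pow, if_neg (by omega), if_neg (by omega), sub_zero]

lemma dvd_coeff7 (q : ℕ) (hq : p ∣ q) (hq0 : 0 < q) (n : ℕ) (hn : 7 * q ≤ n) :
    (q : ℤ_[p]) ^ 2 ∣ coeff n (f p ^ 6 * (1 - X ^ q) ^ 7) := by
  obtain ⟨h0, f1, g1, f2, e1, e2, d1, d2⟩ := decomp (p := p) q hq
  obtain ⟨G, hG⟩ : ∃ G, f p ^ 6 * (1 - X ^ q) ^ 7 = h0 ^ 6 * (1 - X ^ q)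
      + C (6 * (q : ℤ_[p])) * (h0 ^ 5 * g1) + C ((q : ℤ_[p]) ^ 2) * G := by
    refine ⟨6 * h0 ^ 5 * f2 + (1 - X ^ q) * (15 * h0 ^ 4 * f1 ^ 2 + 20 * h0 ^ 3 * (C (q : ℤ_[p])) * f1 ^ 3
      + 15 * h0 ^ 2 * (C (q : ℤ_[p])) ^ 2 * f1 ^ 4 + 6 * h0 * (C (q : ℤ_[p])) ^ 3 * f1 ^ 5
      + (C (q : ℤ_[p])) ^ 4 * f1 ^ 6), ?_⟩
    have : f p ^ 6 * (1 - X ^ q) ^ 7 = (f p * (1 - X ^ q)) ^ 6 * (1 - X ^ q) := by ring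
    rw [this, e1, map_mul, map_pow]
    simp only [map_ofNat]
    linear_combination (6 * h0 ^ 5 * C (q : ℤ_[p])) * e2
  rw [hG, map_add, map_add, coeff_C_mul, coeff_C_mul]
  rw [((d1.pow 6).mul (Deg_D q)) n (by omega), ((d1.pow 5).mul d2) n (by omega)]
  simp

lemma dvd_coeff6 (q : ℕ) (hq : p ∣ q) (hq0 : 0 < q) (n : ℕ) (hn : 6 * q ≤ n) :
    (q : ℤ_[p]) ∣ coeff n (f p ^ 6 * (1 - X ^ q) ^ 6) := by
  obtain ⟨h0, f1, g1, f2, e1, e2, d1, d2⟩ := decomp (p := p) q hq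
  obtain ⟨G, hG⟩ : ∃ G, f p ^ 6 * (1 - X ^ q) ^ 6 = h0 ^ 6 + C (q : ℤ_[p]) * G := by
    refine ⟨6 * h0 ^ 5 * f1 + (15 * h0 ^ 4 * f1 ^ 2 * (C (q : ℤ_[p])) + 20 * h0 ^ 3 * (C (q : ℤ_[p])) ^ 2 * f1 ^ 3
      + 15 * h0 ^ 2 * (C (q : ℤ_[p])) ^ 3 * f1 ^ 4 + 6 * h0 * (C (q : ℤ_[p])) ^ 4 * f1 ^ 5
      + (C (q : ℤ_[p])) ^ 5 * f1 ^ 6), ?_⟩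
    rw [← mul_pow, e1]
    ring
  rw [hG, map_add, coeff_C_mul, (d1.pow 6) n (by omega)]
  simp

lemma seq_D (F : PowerSeries ℤ_[p]) (q k n : ℕ) :
    coeff ((n + k) * q) (F * (1 - X ^ q) ^ k) = ((fwdDiff 1)^[k] (fun m : ℕ => coeff (m * q) F)) n := by
  induction k generalizing n F with
  | zero => simp
  | succ k ih =>
    rw [pow_succ, ← mul_assoc, coeff_mul_D, Function.iterate_succ_apply', fwdDiff, ← ih, ← ih]
    rw [if_pos (by nlinarith [Nat.zero_le n])]
    congr 3
    · ring
    · rw [Nat.sub_eq_iff_eq_add (by nlinarith [Nat.zero_le n])]; ring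

variable (p) in
/-- the sums -/
noncomputable def T (k n : ℕ) : ℤ_[p] := coeff (n * p ^ k) (f p ^ 6)

lemma diff7 (k : ℕ) (hk : 1 ≤ k) (j n : ℕ) (hj : 7 ≤ j) :
    ((p : ℤ_[p]) ^ k) ^ 2 ∣ ((fwdDiff 1)^[j] (T p k)) n := by
  induction j, hj using Nat.le_induction generalizing n with
  | base =>
    have := dvd_coeff7 (p := p) (p ^ k) (dvd_pow_self p (by omega))
      (pow_pos (Nat.Prime.pos Fact.out) k) ((n + 7) * p ^ k)
      (Nat.mul_le_mul_right _ (by omega))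
    rw [seq_D] at this
    rw [Nat.cast_pow] at this
    exact this
  | succ j hj ih =>
    rw [Function.iterate_succ_apply', fwdDiff]
    exact dvd_sub (ih _) (ih _)

lemma diff6 (k : ℕ) (hk : 1 ≤ k) (n : ℕ) :
    ((p : ℤ_[p]) ^ k) ∣ ((fwdDiff 1)^[6] (T p k)) n := by
  have := dvd_coeff6 (p := p) (p ^ k) (dvd_pow_self p (by omega))
      (pow_pos (Nat.Prime.pos Fact.out) k) ((n + 6) * p ^ k)
      (Nat.mul_le_mul_right _ (by omega))
  rw [seq_D] at this
  rw [Nat.cast_pow] at this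
  exact this

lemma T_zero (k : ℕ) : T p k 0 = 0 := by
  rw [T, zero_mul, coeff_zero_eq_constantCoeff, map_pow]
  have : constantCoeff (f p) = 0 := by
    rw [← coeff_zero_eq_constantCoeff, f, coeff_mk, v_of_dvd p (dvd_zero p)]
  rw [this]; simp

lemma T_succ (hp : 11 ≤ p) (k a : ℕ) (hk : 1 ≤ k) (ha : 1 ≤ a) :
    (p : ℤ_[p]) ^ (k + 1) ∣ T p (k + 1) a
      - ∑ i ∈ Finset.range 6, ((a * p).choose i : ℤ_[p]) * ((fwdDiff 1)^[i] (T p k)) 0 := by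
  have hm : 11 ≤ a * p := by nlinarith
  have e : T p (k + 1) a = T p k (0 + (a * p) • 1) := by
    simp only [T, smul_eq_mul, mul_one, zero_add]
    congr 1
    ring
  rw [e, shift_eq_sum_fwdDiff_iter 1 (T p k), ← Finset.sum_range_add_sum_Ico _ (show 6 ≤ a * p + 1 by omega)]
  simp only [nsmul_eq_mul]
  rw [add_sub_cancel_left]
  refine Finset.dvd_sum fun i hi => ?_
  rw [Finset.mem_Ico] at hi
  rcases Nat.eq_or_lt_of_le hi.1 with h | h
  · subst h
    rw [pow_succ, mul_comm]
    refine mul_dvd_mul ?_ (diff6 k hk 0)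
    have h1 : p ∣ 6 * (a * p).choose 6 := by
      have := Nat.add_one_mul_choose_eq (a * p - 1) 5
      rw [Nat.sub_add_cancel (by omega)] at this
      exact ⟨a * (a * p - 1).choose 5, by linarith⟩
    have h2 : p ∣ (a * p).choose 6 := by
      rcases (Nat.Prime.dvd_mul Fact.out).1 h1 with h | h
      · exact absurd (Nat.le_of_dvd (by norm_num) h) (by omega)
      · exact h
    exact_mod_cast (Nat.cast_dvd_cast (α := ℤ_[p]) h2)
  · refine Dvd.dvd.mul_left (dvd_trans ?_ (diff7 k hk i 0 h)) _
    rw [← pow_mul]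
    exact pow_dvd_pow _ (by omega)

lemma chooses (m : ℕ) (hm : 11 ≤ m) : (m.choose 0 : ℤ_[p]) = 1 ∧ (m.choose 1 : ℤ_[p]) = m ∧
    (2 * m.choose 2 : ℤ_[p]) = m * (m - 1) ∧ (6 * m.choose 3 : ℤ_[p]) = m * (m - 1) * (m - 2) ∧
    (24 * m.choose 4 : ℤ_[p]) = m * (m - 1) * (m - 2) * (m - 3) ∧
    (120 * m.choose 5 : ℤ_[p]) = m * (m - 1) * (m - 2) * (m - 3) * (m - 4) := by
  have h2 := Nat.choose_succ_right_eq m 1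
  have h3 := Nat.choose_succ_right_eq m 2
  have h4 := Nat.choose_succ_right_eq m 3
  have h5 := Nat.choose_succ_right_eq m 4
  have g2 := congrArg (Nat.cast : ℕ → ℤ_[p]) h2
  have g3 := congrArg (Nat.cast : ℕ → ℤ_[p]) h3
  have g4 := congrArg (Nat.cast : ℕ → ℤ_[p]) h4
  have g5 := congrArg (Nat.cast : ℕ → ℤ_[p]) h5
  push_cast [Nat.cast_sub (show 1 ≤ m by omega), Nat.cast_sub (show 2 ≤ m by omega),
    Nat.cast_sub (show 3 ≤ m by omega), Nat.cast_sub (show 4 ≤ m by omega), Nat.choose_one_right]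
    at g2 g3 g4 g5
  have k2 : (2 * m.choose 2 : ℤ_[p]) = m * (m - 1) := by linear_combination g2
  have k3 : (6 * m.choose 3 : ℤ_[p]) = m * (m - 1) * (m - 2) := by
    linear_combination 2 * g3 + (m - 2) * k2
  have k4 : (24 * m.choose 4 : ℤ_[p]) = m * (m - 1) * (m - 2) * (m - 3) := by
    linear_combination 6 * g4 + (m - 3) * k3
  refine ⟨by simp, by simp, k2, k3, k4, ?_⟩
  linear_combination 24 * g5 + (m - 4) * k4

variable (p) in
/-- the linear form -/
noncomputable def L (k : ℕ) : ℤ_[p] :=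
  300 * T p k 1 - 300 * T p k 2 + 200 * T p k 3 - 75 * T p k 4 + 12 * T p k 5

lemma T_succ_L (hp : 11 ≤ p) (k a : ℕ) (hk : 1 ≤ k) (ha : 1 ≤ a)
    (h : ∀ n, 1 ≤ n → (p : ℤ_[p]) ^ (k - 1) ∣ T p k n) :
    (p : ℤ_[p]) ^ (k + 1) ∣ 60 * T p (k + 1) a - a * p * L p k := by
  have hm : 11 ≤ a * p := by nlinarith
  have h0 := T_succ hp k a hk ha
  obtain ⟨c0, c1, c2, c3, c4, c5⟩ := chooses (p := p) (a * p) hm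
  obtain ⟨t1, e1⟩ := h 1 (by norm_num)
  obtain ⟨t2, e2⟩ := h 2 (by norm_num)
  obtain ⟨t3, e3⟩ := h 3 (by norm_num)
  obtain ⟨t4, e4⟩ := h 4 (by norm_num)
  obtain ⟨t5, e5⟩ := h 5 (by norm_num)
  simp only [Finset.sum_range_succ, Finset.sum_range_zero, fwdDiff, Function.iterate_succ_apply',
    Function.iterate_zero, id, T_zero, zero_add] at h0
  norm_num at h0
  obtain ⟨z, hz⟩ := h0
  have hp2 : ¬ p ∣ 2 := fun hh => absurd (Nat.le_of_dvd (by norm_num) hh) (by omega)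
  apply dvd_cancel p hp2
  have ek : (p : ℤ_[p]) ^ (k + 1) = p ^ (k - 1) * p ^ 2 := by rw [← pow_add]; congr 1; omega
  rw [ek] at hz ⊢
  simp only [L, T_zero, e1, e2, e3, e4, e5] at hz ⊢
  push_cast at c1 c2 c3 c4 c5 ⊢
  generalize ((a * p).choose 2 : ℤ_[p]) = C2 at *
  generalize ((a * p).choose 3 : ℤ_[p]) = C3 at *
  generalize ((a * p).choose 4 : ℤ_[p]) = C4 at *
  generalize ((a * p).choose 5 : ℤ_[p]) = C5 at *
  generalize T p (k + 1) a = Y at *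
  generalize (p : ℤ_[p]) ^ (k - 1) = Q at *
  generalize hP : (p : ℤ_[p]) = P at *
  generalize (a : ℤ_[p]) = A at *
  have d2 : 120 * C2 = 60 * (A * P * (A * P - 1)) := by linear_combination 60 * c2
  have d3 : 120 * C3 = 20 * (A * P * (A * P - 1) * (A * P - 2)) := by linear_combination 20 * c3
  have d4 : 120 * C4 = 5 * (A * P * (A * P - 1) * (A * P - 2) * (A * P - 3)) := by
    linear_combination 5 * c4
  let D2 := t2 - 2 * t1
  let D3 := t3 - 3 * t2 + 3 * t1
  let D4 := t4 - 4 * t3 + 6 * t2 - 4 * t1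
  let D5 := t5 - 5 * t4 + 10 * t3 - 10 * t2 + 5 * t1
  refine ⟨120 * z + A ^ 2 * (60 * D2 + 20 * (A * P - 3) * D3
    + 5 * ((A * P) ^ 2 - 6 * (A * P) + 11) * D4
    + ((A * P) ^ 3 - 10 * (A * P) ^ 2 + 35 * (A * P) - 50) * D5), ?_⟩
  simp only [D2, D3, D4, D5]
  linear_combination 120 * hz + Q * (t2 - 2 * t1) * d2 + Q * (t3 - 3 * t2 + 3 * t1) * d3
    + Q * (t4 - 4 * t3 + 6 * t2 - 4 * t1) * d4
    + Q * (t5 - 5 * t4 + 10 * t3 - 10 * t2 + 5 * t1) * c5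

lemma T_ind (hp : 11 ≤ p) (k : ℕ) (hk : 1 ≤ k) :
    (∀ n, 1 ≤ n → (p : ℤ_[p]) ^ (k - 1) ∣ T p k n) ∧
    (p : ℤ_[p]) ^ k ∣ L p k - p ^ (k - 1) * L p 1 := by
  have hp60 : ¬ p ∣ 60 := by
    intro hh
    have h1 : p ∣ 2 * 2 * 3 * 5 := hh
    have hpr : p.Prime := Fact.out
    rw [hpr.dvd_mul, hpr.dvd_mul, hpr.dvd_mul] at h1
    rcases h1 with ((h1 | h1) | h1) | h1 <;>
      exact absurd (Nat.le_of_dvd (by norm_num) h1) (by omega)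
  induction k, hk using Nat.le_induction with
  | base => exact ⟨fun n _ => by simp, by simp⟩
  | succ k hk ih =>
    obtain ⟨ih1, ih2⟩ := ih
    have hs := fun a ha => T_succ_L hp k a hk ha ih1
    have hL : (p : ℤ_[p]) ^ (k - 1) ∣ L p k := by
      have i1 := ih1 1 (by norm_num)
      have i2 := ih1 2 (by norm_num)
      have i3 := ih1 3 (by norm_num)
      have i4 := ih1 4 (by norm_num)
      have i5 := ih1 5 (by norm_num)
      exact dvd_add (dvd_sub (dvd_add (dvd_sub (i1.mul_left _) (i2.mul_left _)) (i3.mul_left _))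
        (i4.mul_left _)) (i5.mul_left _)
    have ek : (p : ℤ_[p]) ^ k = p * p ^ (k - 1) := by
      rw [← pow_succ']; congr 1; omega
    refine ⟨fun n hn => ?_, ?_⟩
    · apply dvd_cancel p hp60
      have h1 := dvd_trans (pow_dvd_pow (p : ℤ_[p]) (show k ≤ k + 1 by omega)) (hs n hn)
      have h2 : (p : ℤ_[p]) ^ k ∣ n * p * L p k := by
        rw [ek, mul_assoc]
        exact (mul_dvd_mul_left _ hL).mul_left _
      simpa using dvd_add h1 h2
    · apply dvd_cancel p hp60
      obtain ⟨z1, h1⟩ := hs 1 (by norm_num)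
      obtain ⟨z2, h2⟩ := hs 2 (by norm_num)
      obtain ⟨z3, h3⟩ := hs 3 (by norm_num)
      obtain ⟨z4, h4⟩ := hs 4 (by norm_num)
      obtain ⟨z5, h5⟩ := hs 5 (by norm_num)
      obtain ⟨y, hy⟩ := ih2
      refine ⟨300 * z1 - 300 * z2 + 200 * z3 - 75 * z4 + 12 * z5 + 60 * y, ?_⟩
      rw [Nat.add_sub_cancel, ek]
      push_cast at h1 h2 h3 h4 h5 ⊢
      have e2 : (p : ℤ_[p]) ^ (k + 1) = p * p ^ k := pow_succ' _ _
      rw [L]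
      linear_combination 300 * h1 - 300 * h2 + 200 * h3 - 75 * h4 + 12 * h5 + 60 * p * hy
        - 60 * y * e2

lemma T_main (hp : 11 ≤ p) (r : ℕ) (hr : 2 ≤ r) :
    (p : ℤ_[p]) ^ r ∣ 60 * T p r 1 - p ^ (r - 1) * L p 1 := by
  obtain ⟨k, rfl⟩ : ∃ k, r = k + 1 := ⟨r - 1, by omega⟩
  obtain ⟨h1, z, h2⟩ := T_ind hp k (by omega)
  obtain ⟨y, h3⟩ := T_succ_L hp k 1 (by omega) le_rfl h1
  refine ⟨y + z, ?_⟩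
  have ek : (p : ℤ_[p]) ^ k = p * p ^ (k - 1) := by
    rw [← pow_succ']; congr 1; omega
  have e2 : (p : ℤ_[p]) ^ (k + 1) = p * p ^ k := pow_succ' _ _
  rw [Nat.add_sub_cancel]
  push_cast at h3
  linear_combination h3 + p * h2 - z * e2 - L p 1 * ek

end red
end St13

namespace St13
section logs
variable (K : Type*) [Field K] [CharZero K]

/-- the series of `-log (1-x)` -/
noncomputable def u : PowerSeries K := PowerSeries.mk fun n => (n : K)⁻¹

/-- scaled coefficients of rising factorials -/
noncomputable def W (n : ℕ) : PowerSeries K :=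
  PowerSeries.mk fun N => (ascPochhammer K N).coeff n / (N.factorial : K)

lemma one_sub_mul_du : (1 - PowerSeries.X) * PowerSeries.derivative K (u K) = 1 := by
  ext n
  rw [sub_mul, one_mul, map_sub, PowerSeries.coeff_derivative, u, PowerSeries.coeff_mk]
  cases n with
  | zero => simp
  | succ n =>
    rw [PowerSeries.coeff_succ_X_mul, PowerSeries.coeff_derivative, PowerSeries.coeff_mk,
      PowerSeries.coeff_one, if_neg (by omega)]
    have h1 : ((n : K) + 1) ≠ 0 := by exact_mod_cast Nat.succ_ne_zero n
    have h2 : ((n : K) + 1 + 1) ≠ 0 := by exact_mod_cast Nat.succ_ne_zero (n + 1)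
    push_cast
    field_simp
    simp

lemma one_sub_mul_dW (n : ℕ) :
    (1 - PowerSeries.X) * PowerSeries.derivative K (W K (n + 1)) = W K n := by
  have key : ∀ N : ℕ, (ascPochhammer K (N + 1)).coeff (n + 1)
      = (ascPochhammer K N).coeff n + N * (ascPochhammer K N).coeff (n + 1) := by
    intro N
    rw [ascPochhammer_succ_right, mul_add, Polynomial.coeff_add, Polynomial.coeff_mul_X,
      ← Polynomial.C_eq_natCast, Polynomial.coeff_mul_C]
    ring
  have hf : ∀ N : ℕ, (N.factorial : K) ≠ 0 := fun N => by exact_mod_cast N.factorial_ne_zero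
  ext N
  rw [sub_mul, one_mul, map_sub, PowerSeries.coeff_derivative]
  have h1 : ((N : K) + 1) ≠ 0 := by exact_mod_cast Nat.succ_ne_zero N
  have e1 : PowerSeries.coeff (N + 1) (W K (n + 1)) * ((N : K) + 1)
      = ((ascPochhammer K N).coeff n + N * (ascPochhammer K N).coeff (n + 1)) / N.factorial := by
    rw [W, PowerSeries.coeff_mk, key, Nat.factorial_succ]
    have := hf N
    push_cast
    field_simp
  rw [e1]
  cases N with
  | zero => simp [W]
  | succ N =>
    rw [PowerSeries.coeff_succ_X_mul, PowerSeries.coeff_derivative]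
    simp only [W, PowerSeries.coeff_mk]
    push_cast
    ring

lemma u_pow (n : ℕ) : u K ^ n = PowerSeries.C (n.factorial : K) * W K n := by
  induction n with
  | zero =>
    ext N
    simp only [pow_zero, Nat.factorial_zero, Nat.cast_one, map_one, one_mul, W,
      PowerSeries.coeff_mk, PowerSeries.coeff_one]
    rw [Polynomial.coeff_zero_eq_eval_zero, ascPochhammer_eval_zero]
    split_ifs with h
    · subst h; simp
    · simp
  | succ n ih =>
    apply PowerSeries.derivative.ext
    · have hne : (1 - PowerSeries.X : PowerSeries K) ≠ 0 := by
        intro h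
        have := congrArg (PowerSeries.coeff 0) h
        simp at this
      apply mul_left_cancel₀ hne
      have h1 := one_sub_mul_du K
      have h2 := one_sub_mul_dW K n
      rw [PowerSeries.derivative_pow, Derivation.leibniz, PowerSeries.derivative_C, smul_zero,
        add_zero, smul_eq_mul, Nat.add_sub_cancel, Nat.factorial_succ, ih]
      push_cast
      simp only [map_mul, map_add, map_natCast, map_one]
      linear_combination ((n : PowerSeries K) + 1) * (n.factorial : PowerSeries K) * W K n * h1
         - ((n : PowerSeries K) + 1) * (n.factorial : PowerSeries K) * h2
    · rw [map_pow, map_mul]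
      have e1 : PowerSeries.constantCoeff (u K) = 0 := by
        rw [← PowerSeries.coeff_zero_eq_constantCoeff, u, PowerSeries.coeff_mk]; simp
      have e2 : PowerSeries.constantCoeff (W K (n + 1)) = 0 := by
        rw [← PowerSeries.coeff_zero_eq_constantCoeff, W, PowerSeries.coeff_mk]
        simp [Polynomial.coeff_one]
      rw [e1, e2]; simp

lemma coeff_u_pow (n N : ℕ) : PowerSeries.coeff N (u K ^ n) =
    n.factorial * ((ascPochhammer K N).coeff n / N.factorial) := by
  rw [u_pow, PowerSeries.coeff_C_mul, W, PowerSeries.coeff_mk]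

lemma coeff_mul_expand (G H : PowerSeries K) (p : ℕ) (hp : p ≠ 0) (m : ℕ) :
    PowerSeries.coeff (p * m) (G * PowerSeries.expand p hp H) =
      ∑ x ∈ Finset.HasAntidiagonal.antidiagonal m, PowerSeries.coeff (p * x.1) G * PowerSeries.coeff x.2 H := by
  rw [PowerSeries.coeff_mul]
  symm
  apply Finset.sum_of_injOn (fun x : ℕ × ℕ => (p * x.1, p * x.2))
  · intro a _ b _ h
    simp only [Prod.mk.injEq] at h
    exact Prod.ext (Nat.eq_of_mul_eq_mul_left (Nat.pos_of_ne_zero hp) h.1)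
      (Nat.eq_of_mul_eq_mul_left (Nat.pos_of_ne_zero hp) h.2)
  · intro a ha
    simp only [Finset.mem_coe, Finset.HasAntidiagonal.mem_antidiagonal] at ha ⊢
    rw [← mul_add, ha]
  · intro y hy hny
    rw [Finset.HasAntidiagonal.mem_antidiagonal] at hy
    by_cases h : p ∣ y.2
    · exfalso
      apply hny
      have h1 : p ∣ y.1 := (Nat.dvd_add_left h).1 (hy ▸ dvd_mul_right p m)
      obtain ⟨a, ha⟩ := h1
      obtain ⟨b, hb⟩ := h
      refine ⟨(a, b), ?_, ?_⟩
      · simp only [Finset.mem_coe, Finset.HasAntidiagonal.mem_antidiagonal]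
        rw [ha, hb, ← mul_add] at hy
        exact Nat.eq_of_mul_eq_mul_left (Nat.pos_of_ne_zero hp) hy
      · exact Prod.ext ha.symm hb.symm
    · rw [PowerSeries.coeff_expand_of_not_dvd p hp _ h, mul_zero]
  · intro x _
    rw [PowerSeries.coeff_expand_mul]

/-- rising factorial of `p X` -/
noncomputable def PA (p M : ℕ) : Polynomial K :=
  Polynomial.C ((p * M).factorial : K)⁻¹ *
    (ascPochhammer K (p * M)).comp (Polynomial.C (p : K) * Polynomial.X)

/-- rising factorial of `-X` -/
noncomputable def PB (j : ℕ) : Polynomial K :=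
  Polynomial.C (j.factorial : K)⁻¹ *
    (ascPochhammer K j).comp (Polynomial.C (-1 : K) * Polynomial.X)

lemma coeff_PA (p M n : ℕ) : (PA K p M).coeff n * n.factorial
    = p ^ n * PowerSeries.coeff (p * M) (u K ^ n) := by
  rw [coeff_u_pow, PA, Polynomial.coeff_C_mul, Polynomial.comp_C_mul_X_coeff]
  field_simp

lemma coeff_PB (j n : ℕ) : (PB K j).coeff n * n.factorial
    = (-1) ^ n * PowerSeries.coeff j (u K ^ n) := by
  rw [coeff_u_pow, PB, Polynomial.coeff_C_mul, Polynomial.comp_C_mul_X_coeff]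
  field_simp

lemma coeff_formula (p : ℕ) (hp : p ≠ 0) (n m : ℕ) :
    (p : K) ^ n * PowerSeries.coeff (p * m)
      ((u K - PowerSeries.C (p : K)⁻¹ * PowerSeries.expand p hp (u K)) ^ n)
    = n.factorial * (∑ x ∈ Finset.HasAntidiagonal.antidiagonal m, PA K p x.1 * PB K x.2).coeff n := by
  have hpK : (p : K) ≠ 0 := Nat.cast_ne_zero.2 hp
  have e : (u K - PowerSeries.C (p : K)⁻¹ * PowerSeries.expand p hp (u K)) ^ n
      = ∑ k ∈ Finset.HasAntidiagonal.antidiagonal n, PowerSeries.C ((n.choose k.1 : K) * (-(p : K)⁻¹) ^ k.2) *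
        (u K ^ k.1 * PowerSeries.expand p hp (u K ^ k.2)) := by
    rw [sub_eq_add_neg, (Commute.all _ _).add_pow']
    refine Finset.sum_congr rfl fun k _ => ?_
    rw [nsmul_eq_mul, map_mul, map_natCast, map_pow, map_pow, ← neg_mul, mul_pow, ← map_neg]
    ring
  rw [e, map_sum, Polynomial.finsetSum_coeff, Finset.mul_sum, Finset.mul_sum]
  simp_rw [PowerSeries.coeff_C_mul, coeff_mul_expand, Polynomial.coeff_mul, Finset.mul_sum]
  rw [Finset.sum_comm]
  refine Finset.sum_congr rfl fun x _ => Finset.sum_congr rfl fun k hk => ?_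
  rw [Finset.HasAntidiagonal.mem_antidiagonal] at hk
  have hA := coeff_PA K p x.1 k.1
  have hB := coeff_PB K x.2 k.2
  have hf : ∀ N : ℕ, (N.factorial : K) ≠ 0 := fun N => by exact_mod_cast N.factorial_ne_zero
  have hA' : (PA K p x.1).coeff k.1
      = p ^ k.1 * PowerSeries.coeff (p * x.1) (u K ^ k.1) / k.1.factorial := by
    rw [← hA]; field_simp [hf k.1]
  have hB' : (PB K x.2).coeff k.2
      = (-1) ^ k.2 * PowerSeries.coeff x.2 (u K ^ k.2) / k.2.factorial := by
    rw [← hB]; field_simp [hf k.2]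
  have hch : (n.choose k.1 : K) = n.factorial / (k.1.factorial * k.2.factorial) := by
    rw [eq_div_iff (mul_ne_zero (hf _) (hf _)), ← hk, Nat.choose_symm_add, ← mul_assoc]
    exact_mod_cast Nat.add_choose_mul_factorial_mul_factorial k.1 k.2
  rw [hA', hB', hch]
  have h1 := hf k.1
  have h2 := hf k.2
  have hpn : (p : K) ^ n = p ^ k.1 * p ^ k.2 := by rw [← pow_add, hk]
  rw [hpn, neg_pow, inv_pow]
  field_simp

end logs
end St13

namespace St13
section factor
variable (p : ℕ) [Fact p.Prime]
open Polynomial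

/-- product of linear factors -/
noncomputable def e : ℤ_[p][X] := ∏ k ∈ Finset.Ico 1 p, (1 + C ((p : ℤ_[p]) * v p k) * X)

/-- rising factorial as a product -/
noncomputable def asc (R : Type*) [CommRing R] (M : ℕ) : R[X] :=
  ∏ i ∈ Finset.range M, (X + C (i : R))

lemma asc_eq (R : Type*) [CommRing R] (M : ℕ) : ascPochhammer R M = asc R M := by
  induction M with
  | zero => simp [asc]
  | succ n ih => rw [ascPochhammer_succ_right, ih, asc, asc, Finset.prod_range_succ, C_eq_natCast]

/-- value of `e` at integers -/
noncomputable def ev (i : ℕ) : ℤ_[p] := (e p).eval (i : ℤ_[p])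

lemma not_dvd_of_mem {k : ℕ} (hk : k ∈ Finset.Ico 1 p) : ¬ p ∣ k := by
  rw [Finset.mem_Ico] at hk
  exact Nat.not_dvd_of_pos_of_lt hk.1 hk.2

lemma isUnit_one_add (x : ℤ_[p]) : IsUnit (1 + p * x) := by
  rw [PadicInt.isUnit_iff]
  have : ‖(p : ℤ_[p]) * x‖ < 1 := (PadicInt.norm_lt_one_iff_dvd _).2 (dvd_mul_right _ _)
  have h1 : ‖(1 : ℤ_[p])‖ = 1 := norm_one
  rw [PadicInt.norm_add_eq_max_of_ne (by rw [h1]; exact this.ne'), h1]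
  exact max_eq_left this.le

lemma isUnit_ev (i : ℕ) : IsUnit (ev p i) := by
  rw [ev, e, eval_prod]
  refine Finset.prod_induction _ IsUnit (fun a b => IsUnit.mul) isUnit_one ?_
  intro k _
  simp only [eval_add, eval_one, eval_mul, eval_C, eval_X]
  rw [mul_assoc]
  exact isUnit_one_add p _

/-- normalised shifted product -/
noncomputable def eh (i : ℕ) : ℤ_[p][X] :=
  C (Ring.inverse (ev p i)) * (e p).comp (X + C (i : ℤ_[p]))

/-- product of normalised shifts -/
noncomputable def E (M : ℕ) : ℤ_[p][X] := ∏ i ∈ Finset.range M, eh p i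

lemma prod_shift (M : ℕ) : ∏ k ∈ Finset.Ico 1 p, (C (p : ℤ_[p]) * X + C ((p * M + k : ℕ) : ℤ_[p]))
    = C (∏ k ∈ Finset.Ico 1 p, (k : ℤ_[p])) * (e p).comp (X + C (M : ℤ_[p])) := by
  rw [e, prod_comp, map_prod, ← Finset.prod_mul_distrib]
  refine Finset.prod_congr rfl fun k hk => ?_
  have h := mul_v p (not_dvd_of_mem p hk)
  have h' : C (k : ℤ_[p]) * C (v p k) = 1 := by rw [← C_mul, h, C_1]
  simp only [add_comp, one_comp, mul_comp, C_comp, X_comp, Nat.cast_add, Nat.cast_mul, C_add, C_mul]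
  linear_combination (-C (p : ℤ_[p]) * (X + C (M : ℤ_[p]))) * h'

lemma prod_shift_eval (M : ℕ) : ∏ k ∈ Finset.Ico 1 p, ((p * M + k : ℕ) : ℤ_[p])
    = (∏ k ∈ Finset.Ico 1 p, (k : ℤ_[p])) * ev p M := by
  have h := congrArg (eval 0) (prod_shift p M)
  simpa [eval_prod, eval_comp, ev] using h

lemma prod_range_p {R : Type*} [CommRing R] (g : ℕ → R) :
    ∏ k ∈ Finset.range p, g k = g 0 * ∏ k ∈ Finset.Ico 1 p, g k := by
  have hp : 0 < p := Nat.Prime.pos Fact.out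
  rw [Finset.range_eq_Ico, Finset.prod_eq_prod_Ico_succ_bot hp]

lemma fact_step (M : ℕ) : (((p * (M + 1)).factorial : ℕ) : ℤ_[p])
    = ((p * M).factorial : ℕ) * ((p : ℤ_[p]) * (M + 1) *
      ((∏ k ∈ Finset.Ico 1 p, (k : ℤ_[p])) * ev p M)) := by
  rw [← prod_shift_eval, mul_add, mul_one, ← Finset.prod_range_add_one_eq_factorial,
    Finset.prod_range_add, Finset.prod_range_add_one_eq_factorial]
  push_cast
  congr 1
  have hp : 0 < p := Nat.Prime.pos Fact.out
  have h1 : ∏ x ∈ Finset.range p, ((p : ℤ_[p]) * M + x + 1)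
      = ∏ k ∈ Finset.Ico 1 (p + 1), ((p : ℤ_[p]) * M + k) := by
    have h2 := Finset.prod_Ico_add' (fun k : ℕ => ((p : ℤ_[p]) * M + k)) 0 p 1
    rw [zero_add] at h2
    rw [Finset.range_eq_Ico, ← h2]
    refine Finset.prod_congr rfl fun x _ => ?_
    push_cast; ring
  rw [h1, Finset.prod_Ico_succ_top hp]
  ring

lemma key_prod (M : ℕ) :
    (∏ k ∈ Finset.range (p * M), (C (p : ℤ_[p]) * X + C (k : ℤ_[p]))) * C (M.factorial : ℤ_[p])
      = C ((p * M).factorial : ℤ_[p]) * (asc ℤ_[p] M * E p M) := by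
  induction M with
  | zero => simp [asc, E]
  | succ M ih =>
    have hη : C (ev p M) * C (Ring.inverse (ev p M)) = 1 := by
      rw [← C_mul, Ring.mul_inverse_cancel _ (isUnit_ev p M), C_1]
    have h2 : asc ℤ_[p] (M + 1) = asc ℤ_[p] M * (X + C (M : ℤ_[p])) := by
      rw [asc, Finset.prod_range_succ]; rfl
    have h3 : E p (M + 1) = E p M * (C (Ring.inverse (ev p M)) *
        (e p).comp (X + C (M : ℤ_[p]))) := by
      rw [E, Finset.prod_range_succ]; rfl
    have h4 : ∏ k ∈ Finset.range (p * (M + 1)), (C (p : ℤ_[p]) * X + C (k : ℤ_[p]))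
        = (∏ k ∈ Finset.range (p * M), (C (p : ℤ_[p]) * X + C (k : ℤ_[p]))) *
          (C (p : ℤ_[p]) * (X + C (M : ℤ_[p])) * (C (∏ k ∈ Finset.Ico 1 p, (k : ℤ_[p])) *
            (e p).comp (X + C (M : ℤ_[p])))) := by
      rw [mul_add, mul_one, Finset.prod_range_add, prod_range_p p
        (fun x => (C (p : ℤ_[p]) * X + C ((p * M + x : ℕ) : ℤ_[p]))), prod_shift]
      congr 2
      simp; ring
    rw [h2, h3, h4, fact_step, Nat.factorial_succ]
    simp only [Nat.cast_mul, Nat.cast_add, Nat.cast_one, C_mul, C_add, C_1]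
    linear_combination (C (p : ℤ_[p]) * (X + C (M : ℤ_[p])) * (C (∏ k ∈ Finset.Ico 1 p, (k : ℤ_[p])) *
            (e p).comp (X + C (M : ℤ_[p])))) * (C (M : ℤ_[p]) + 1) * ih
       - (C (p : ℤ_[p]) * (X + C (M : ℤ_[p])) * (C (∏ k ∈ Finset.Ico 1 p, (k : ℤ_[p])) *
            (e p).comp (X + C (M : ℤ_[p])))) * (C (M : ℤ_[p]) + 1) *
            (C ((p * M).factorial : ℤ_[p]) * (asc ℤ_[p] M * E p M)) * hη

/-- the basic polynomials -/
noncomputable def Q (m : ℕ) : ℤ_[p][X] :=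
  ∑ x ∈ Finset.HasAntidiagonal.antidiagonal m,
    C (m.choose x.1 : ℤ_[p]) * (asc ℤ_[p] x.1 * E p x.1 * (asc ℤ_[p] x.2).comp (-X))

lemma map_asc (M : ℕ) : (asc ℤ_[p] M).map (algebraMap ℤ_[p] ℚ_[p]) = asc ℚ_[p] M := by
  rw [asc, Polynomial.map_prod, asc]; simp

lemma PA_eq (M : ℕ) : C (M.factorial : ℚ_[p]) * PA ℚ_[p] p M
    = asc ℚ_[p] M * (E p M).map (algebraMap ℤ_[p] ℚ_[p]) := by
  have h := congrArg (Polynomial.map (algebraMap ℤ_[p] ℚ_[p])) (key_prod p M)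
  rw [Polynomial.map_mul, Polynomial.map_mul, Polynomial.map_mul, map_asc, Polynomial.map_prod] at h
  have h0 : C (((p * M).factorial : ℚ_[p])⁻¹) * C ((p * M).factorial : ℚ_[p]) = 1 := by
    rw [← C_mul, inv_mul_cancel₀ (by exact_mod_cast Nat.factorial_ne_zero _), C_1]
  have h1 : (ascPochhammer ℚ_[p] (p * M)).comp (C (p : ℚ_[p]) * X)
      = ∏ k ∈ Finset.range (p * M), (C (p : ℚ_[p]) * X + C (k : ℚ_[p])) := by
    rw [asc_eq, asc, prod_comp]; simp
  rw [PA, h1]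
  simp only [Polynomial.map_add, Polynomial.map_mul, map_C, map_X, map_natCast, Polynomial.map_natCast] at h h0 ⊢
  linear_combination ((C (((p * M).factorial : ℚ_[p])⁻¹))) * h +
    (asc ℚ_[p] M * (E p M).map (algebraMap ℤ_[p] ℚ_[p])) * h0

lemma PB_eq (j : ℕ) : C (j.factorial : ℚ_[p]) * PB ℚ_[p] j
    = (asc ℚ_[p] j).comp (-X) := by
  rw [PB, asc_eq, ← mul_assoc, ← C_mul, mul_inv_cancel₀ (by exact_mod_cast Nat.factorial_ne_zero _)]
  simp

lemma map_Q (m : ℕ) : (Q p m).map (algebraMap ℤ_[p] ℚ_[p])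
    = C (m.factorial : ℚ_[p]) * ∑ x ∈ Finset.HasAntidiagonal.antidiagonal m,
      PA ℚ_[p] p x.1 * PB ℚ_[p] x.2 := by
  rw [Q, Polynomial.map_sum, Finset.mul_sum]
  refine Finset.sum_congr rfl fun x hx => ?_
  rw [Finset.HasAntidiagonal.mem_antidiagonal] at hx
  have hch : (m.factorial : ℚ_[p]) = m.choose x.1 * x.1.factorial * x.2.factorial := by
    rw [← hx, Nat.choose_symm_add]
    exact_mod_cast (Nat.add_choose_mul_factorial_mul_factorial x.1 x.2).symm
  simp only [Polynomial.map_mul, map_asc, map_C, Polynomial.map_comp, Polynomial.map_neg, map_X, map_natCast, Polynomial.map_natCast]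
  have hch' := congrArg (C : ℚ_[p] → ℚ_[p][X]) hch
  simp only [C_mul, map_natCast] at hch'
  rw [← PB_eq, ← PA_eq, hch']
  simp only [C_mul, map_natCast]
  ring

lemma map_f : PowerSeries.map (algebraMap ℤ_[p] ℚ_[p]) (f p)
    = u ℚ_[p] - PowerSeries.C (p : ℚ_[p])⁻¹ *
      PowerSeries.expand p (Nat.Prime.ne_zero Fact.out) (u ℚ_[p]) := by
  have hp0 : (p : ℚ_[p]) ≠ 0 := Nat.cast_ne_zero.2 (Nat.Prime.ne_zero Fact.out)
  ext n
  rw [PowerSeries.coeff_map, f, PowerSeries.coeff_mk, map_sub, PowerSeries.coeff_C_mul,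
    PadicInt.algebraMap_apply, v_coe, PowerSeries.coeff_expand]
  split_ifs with h
  · obtain ⟨k, rfl⟩ := h
    rw [Nat.mul_div_cancel_left _ (Nat.Prime.pos Fact.out)]
    simp [u]
    ring
  · simp [u]

lemma coeff_Q (n m : ℕ) : (p : ℤ_[p]) ^ n * (m.factorial * PowerSeries.coeff (p * m) (f p ^ n))
    = n.factorial * (Q p m).coeff n := by
  have h := coeff_formula ℚ_[p] p (Nat.Prime.ne_zero Fact.out) n m
  rw [← map_f, ← map_pow, PowerSeries.coeff_map] at h
  have h2 := congrArg (fun P => Polynomial.coeff P n) (map_Q p m)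
  simp only [coeff_map, coeff_C_mul] at h2
  apply IsFractionRing.injective ℤ_[p] ℚ_[p]
  simp only [map_mul, map_pow, map_natCast]
  rw [h2]
  linear_combination (m.factorial : ℚ_[p]) * h

end factor
end St13

namespace St13
section pairing
variable (p : ℕ) [Fact p.Prime]
open Polynomial

lemma toZMod_eq_zero (x : ℤ_[p]) : PadicInt.toZMod x = 0 ↔ (p : ℤ_[p]) ∣ x := by
  rw [← RingHom.mem_ker, PadicInt.ker_toZMod, PadicInt.maximalIdeal_eq_span_p,
    Ideal.mem_span_singleton]

/-- half product -/
noncomputable def hp (h : ℕ) : ℤ_[p][X] :=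
  ∏ k ∈ Finset.Ico 1 (h + 1), (1 + C (v p k * v p (p - k)) * X)

lemma e_eq (h : ℕ) (hh : p = 2 * h + 1) :
    e p = (hp p h).comp (C ((p : ℤ_[p]) ^ 2) * (X ^ 2 + X)) := by
  have h1 : e p = (∏ k ∈ Finset.Ico 1 (h + 1), (1 + C ((p : ℤ_[p]) * v p k) * X)) *
      ∏ k ∈ Finset.Ico 1 (h + 1), (1 + C ((p : ℤ_[p]) * v p (p - k)) * X) := by
    rw [Finset.prod_Ico_reflect (fun k => (1 + C ((p : ℤ_[p]) * v p k) * X)) 1 (by omega : h + 1 ≤ p + 1)]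
    rw [show p + 1 - (h + 1) = h + 1 by omega, Nat.add_sub_cancel, e,
      Finset.prod_Ico_consecutive _ (by omega) (by omega)]
  rw [h1, ← Finset.prod_mul_distrib, hp, prod_comp]
  refine Finset.prod_congr rfl fun k hk => ?_
  rw [Finset.mem_Ico] at hk
  have a1 := mul_v p (n := k) (not_dvd_of_mem p (Finset.mem_Ico.2 (by omega)))
  have a2 := mul_v p (n := p - k) (not_dvd_of_mem p (Finset.mem_Ico.2 (by omega)))
  rw [Nat.cast_sub (by omega)] at a2
  have a3 : v p k + v p (p - k) = p * (v p k * v p (p - k)) := by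
    linear_combination (-v p (p - k)) * a1 - v p k * a2
  have a4 := congrArg (C : ℤ_[p] → ℤ_[p][X]) a3
  simp only [C_add, C_mul] at a4
  simp only [add_comp, one_comp, mul_comp, C_comp, X_comp, C_mul, C_pow]
  linear_combination C (p : ℤ_[p]) * X * a4

lemma hp_coeff_zero (h : ℕ) : (hp p h).coeff 0 = 1 := by
  rw [coeff_zero_eq_eval_zero, hp, eval_prod]
  simp

lemma map_hp (h : ℕ) (hh : p = 2 * h + 1) :
    expand (ZMod p) 2 ((hp p h).map PadicInt.toZMod) = 1 - X ^ (p - 1) := by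
  have hlt : 1 < p := Nat.Prime.one_lt Fact.out
  refine eq_of_natDegree_lt_card_of_eval_eq _ _ (Function.injective_id (α := ZMod p)) ?_ ?_
  · intro a
    rw [id, expand_eval]
    by_cases ha : a = 0
    · subst ha
      rw [zero_pow (by norm_num), ← coeff_zero_eq_eval_zero, coeff_map, hp_coeff_zero]
      simp [show p - 1 ≠ 0 by omega]
    · have h1 : a ^ (p - 1) = 1 := ZMod.pow_card_sub_one_eq_one ha
      have : ∃ k ∈ Finset.Ico 1 (h + 1), a ^ 2 = (k : ZMod p) ^ 2 := by
        have hv : a.val ≠ 0 := by rwa [Ne, ZMod.val_eq_zero]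
        have hl := ZMod.val_lt a
        by_cases hc : a.val ≤ h
        · exact ⟨a.val, Finset.mem_Ico.2 (by omega), by rw [ZMod.natCast_zmod_val]⟩
        · refine ⟨p - a.val, Finset.mem_Ico.2 (by omega), ?_⟩
          rw [Nat.cast_sub hl.le, ZMod.natCast_zmod_val]
          simp
      obtain ⟨k, hk, hak⟩ := this
      rw [hp, Polynomial.map_prod, eval_prod, Finset.prod_eq_zero hk]
      · simp [h1]
      · rw [Finset.mem_Ico] at hk
        have a1 := congrArg (PadicInt.toZMod) (mul_v p (n := k) (not_dvd_of_mem p (Finset.mem_Ico.2 (by omega))))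
        have a2 := congrArg (PadicInt.toZMod) (mul_v p (n := p - k) (not_dvd_of_mem p (Finset.mem_Ico.2 (by omega))))
        rw [Nat.cast_sub (by omega)] at a2
        simp only [map_mul, map_sub, map_natCast, map_one, CharP.cast_eq_zero, zero_sub] at a1 a2
        simp only [Polynomial.map_add, Polynomial.map_mul, Polynomial.map_one, map_C, map_X,
          eval_add, eval_mul, eval_one, eval_C, eval_X, map_mul]
        rw [hak]
        linear_combination (k : ZMod p) * PadicInt.toZMod (v p (p - k)) * a1 - a2
  · rw [ZMod.card, max_lt_iff]
    constructor
    · rw [natDegree_expand]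
      have : ((hp p h).map PadicInt.toZMod).natDegree ≤ h := by
        refine (natDegree_map_le).trans ?_
        rw [hp]
        refine (natDegree_prod_le _ _).trans ?_
        refine (Finset.sum_le_card_nsmul _ _ 1 ?_).trans (by simp)
        intro k _
        compute_degree
      omega
    · have : (1 - X ^ (p - 1) : (ZMod p)[X]).natDegree ≤ p - 1 := by compute_degree
      omega

lemma dvd_coeff_hp (h : ℕ) (hh : p = 2 * h + 1) (i : ℕ) (hi : 0 < i) (hi2 : 2 * i < p - 1) :
    (p : ℤ_[p]) ∣ (hp p h).coeff i := by
  rw [← toZMod_eq_zero, ← coeff_map, ← coeff_expand_mul' (by norm_num : 0 < 2), map_hp p h hh]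
  rw [coeff_sub, coeff_X_pow, if_neg (by omega), coeff_one, if_neg (by omega), sub_zero]

lemma e_exp (hp11 : 11 ≤ p) : ∃ (α β : ℤ_[p]) (τ : ℤ_[p][X]),
    e p = 1 + C (p : ℤ_[p]) ^ 3 * C α * (X ^ 2 + X) + C (p : ℤ_[p]) ^ 5 * C β * (X ^ 2 + X) ^ 2
      + C (p : ℤ_[p]) ^ 7 * τ := by
  obtain ⟨h, hh⟩ : ∃ h, p = 2 * h + 1 := (Nat.Prime.odd_of_ne_two Fact.out (by omega))
  obtain ⟨α, hα⟩ := dvd_coeff_hp p h hh 1 (by omega) (by omega)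
  obtain ⟨β, hβ⟩ := dvd_coeff_hp p h hh 2 (by omega) (by omega)
  obtain ⟨γ, hγ⟩ := dvd_coeff_hp p h hh 3 (by omega) (by omega)
  have key : ∃ ρ : ℤ_[p][X], hp p h = 1 + C (p : ℤ_[p]) * (C α * X + C β * X ^ 2 + C γ * X ^ 3) + X ^ 4 * ρ := by
    refine ⟨(hp p h).divX.divX.divX.divX, ?_⟩
    have b0 := divX_mul_X_add (hp p h)
    have b1 := divX_mul_X_add (hp p h).divX
    have b2 := divX_mul_X_add (hp p h).divX.divX
    have b3 := divX_mul_X_add (hp p h).divX.divX.divX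
    simp only [coeff_divX, hp_coeff_zero, zero_add, Nat.reduceAdd, hα, hβ, hγ, C_mul, C_1] at b0 b1 b2 b3
    linear_combination - b0 - X * b1 - X ^ 2 * b2 - X ^ 3 * b3
  obtain ⟨ρ, hρ⟩ := key
  refine ⟨α, β, C γ * (X ^ 2 + X) ^ 3 + C (p : ℤ_[p]) * (X ^ 2 + X) ^ 4 *
    ρ.comp (C ((p : ℤ_[p]) ^ 2) * (X ^ 2 + X)), ?_⟩
  rw [e_eq p h hh]
  conv_lhs => rw [hρ]
  simp only [add_comp, one_comp, mul_comp, C_comp, X_comp, pow_comp, C_pow]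
  ring

/-- shifted quadratic, minus its value at zero -/
noncomputable def xs (R : Type*) [CommRing R] (i : ℕ) : R[X] :=
  (X + C (i : R)) * (X + C (i : R) + 1) - C (i : R) * (C (i : R) + 1)

/-- square of the shifted quadratic, minus its value at zero -/
noncomputable def ys (R : Type*) [CommRing R] (i : ℕ) : R[X] :=
  ((X + C (i : R)) * (X + C (i : R) + 1)) ^ 2 - (C (i : R) * (C (i : R) + 1)) ^ 2

/-- the statement that all the `eh` have a given shape -/
def Shape (α β h : ℤ_[p]) (P x y : ℤ_[p][X]) : Prop := ∃ τ, P =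
  1 + C (p : ℤ_[p]) ^ 3 * C α * x + C (p : ℤ_[p]) ^ 5 * C β * y
   + C (p : ℤ_[p]) ^ 6 * C α ^ 2 * C h * x ^ 2 + C (p : ℤ_[p]) ^ 7 * τ

lemma Shape.mul {α β h : ℤ_[p]} (hh : 2 * h = 1) {P x y P' x' y' : ℤ_[p][X]}
    (H : Shape p α β h P x y) (H' : Shape p α β h P' x' y') :
    Shape p α β h (P * P') (x + x') (y + y') := by
  obtain ⟨τ, rfl⟩ := H
  obtain ⟨τ', rfl⟩ := H'
  have hc : (2 : ℤ_[p][X]) * C h = 1 := by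
    have := congrArg (C : ℤ_[p] → ℤ_[p][X]) hh
    rwa [C_mul, C_1, show (C (2 : ℤ_[p])) = 2 from rfl] at this
  set π := C (p : ℤ_[p])
  set a := C α
  set b := C β
  set c := C h
  refine ⟨τ + τ' * (1 + π ^ 3 * a * x + π ^ 5 * b * y + π ^ 6 * a ^ 2 * c * x ^ 2 + π ^ 7 * τ)
    + τ * (π ^ 3 * a * x' + π ^ 5 * b * y' + π ^ 6 * a ^ 2 * c * x' ^ 2)
    + (a * x) * (π * b * y' + π ^ 2 * a ^ 2 * c * x' ^ 2)
    + (b * y) * (π * a * x' + π ^ 3 * b * y' + π ^ 4 * a ^ 2 * c * x' ^ 2)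
    + (a ^ 2 * c * x ^ 2) * (π ^ 2 * a * x' + π ^ 4 * b * y' + π ^ 5 * a ^ 2 * c * x' ^ 2), ?_⟩
  linear_combination (-π ^ 6 * a ^ 2 * x * x') * hc

lemma eh_shape (hp11 : 11 ≤ p) : ∃ α β h : ℤ_[p], 2 * h = 1 ∧
    ∀ i, Shape p α β h (eh p i) (xs _ i) (ys _ i) := by
  obtain ⟨α, β, τ, he⟩ := e_exp p hp11
  have h2 : (2 : ℤ_[p]) * v p 2 = 1 := by
    have := mul_v p (n := 2) (fun h => by have := Nat.le_of_dvd (by norm_num) h; omega)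
    exact_mod_cast this
  refine ⟨α, β - p * v p 2 * α ^ 2, v p 2, h2, fun i => ?_⟩
  have hη : C (Ring.inverse (ev p i)) * C (ev p i) = 1 := by
    rw [← C_mul, Ring.inverse_mul_cancel _ (isUnit_ev p i), C_1]
  have hev : C (ev p i) = 1 + C (p : ℤ_[p]) ^ 3 * C α * (C (i : ℤ_[p]) * (C (i : ℤ_[p]) + 1))
    + C (p : ℤ_[p]) ^ 5 * C β * (C (i : ℤ_[p]) * (C (i : ℤ_[p]) + 1)) ^ 2
    + C (p : ℤ_[p]) ^ 7 * C (τ.eval (i : ℤ_[p])) := by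
    rw [ev, he]
    simp only [eval_add, eval_mul, eval_pow, eval_C, eval_one, eval_X, C_add, C_mul, C_pow, C_1]
    ring
  have hei : (e p).comp (X + C (i : ℤ_[p])) = 1 + C (p : ℤ_[p]) ^ 3 * C α *
      ((X + C (i : ℤ_[p])) * (X + C (i : ℤ_[p]) + 1))
    + C (p : ℤ_[p]) ^ 5 * C β * ((X + C (i : ℤ_[p])) * (X + C (i : ℤ_[p]) + 1)) ^ 2
    + C (p : ℤ_[p]) ^ 7 * τ.comp (X + C (i : ℤ_[p])) := by
    rw [he]
    simp only [add_comp, mul_comp, pow_comp, C_comp, one_comp, X_comp]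
    ring
  have hc : (2 : ℤ_[p][X]) * C (v p 2) = 1 := by
    have := congrArg (C : ℤ_[p] → ℤ_[p][X]) h2
    rwa [C_mul, C_1, show (C (2 : ℤ_[p])) = 2 from rfl] at this
  rw [Shape, eh, xs, ys]
  simp only [C_sub, C_mul, C_pow]
  generalize C (Ring.inverse (ev p i)) = η at *
  generalize C (ev p i) = E1 at *
  generalize (e p).comp (X + C (i : ℤ_[p])) = E2 at *
  generalize (X + C (i : ℤ_[p])) * (X + C (i : ℤ_[p]) + 1) = σ at *
  generalize C (i : ℤ_[p]) * (C (i : ℤ_[p]) + 1) = s at *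
  generalize C (τ.eval (i : ℤ_[p])) = t at *
  generalize τ.comp (X + C (i : ℤ_[p])) = τ' at *
  generalize C (p : ℤ_[p]) = π at *
  generalize C α = a at *
  generalize C β = b at *
  generalize C (v p 2) = c at *
  refine ⟨η * (τ' - t * (1 + π ^ 3 * a * (σ - s) + π ^ 5 * (b - π * c * a ^ 2) * (σ ^ 2 - s ^ 2)
     + π ^ 6 * a ^ 2 * c * (σ - s) ^ 2)
    - a * s * (π * (b - π * c * a ^ 2) * (σ ^ 2 - s ^ 2) + π ^ 2 * a ^ 2 * c * (σ - s) ^ 2)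
    - b * s ^ 2 * (π * a * (σ - s) + π ^ 3 * (b - π * c * a ^ 2) * (σ ^ 2 - s ^ 2)
      + π ^ 4 * a ^ 2 * c * (σ - s) ^ 2)), ?_⟩
  subst hev hei
  linear_combination ((1 + π ^ 3 * a * (σ - s) + π ^ 5 * (b - π * c * a ^ 2) * (σ ^ 2 - s ^ 2)
     + π ^ 6 * a ^ 2 * c * (σ - s) ^ 2)) * hη + (-η * π ^ 6 * a ^ 2 * s * (s - σ)) * hc

lemma E_shape (hp11 : 11 ≤ p) : ∃ α β h : ℤ_[p], 2 * h = 1 ∧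
    ∀ M, Shape p α β h (E p M) (∑ i ∈ Finset.range M, xs _ i) (∑ i ∈ Finset.range M, ys _ i) := by
  obtain ⟨α, β, h, hh, H⟩ := eh_shape p hp11
  refine ⟨α, β, h, hh, fun M => ?_⟩
  induction M with
  | zero => exact ⟨0, by simp [E]⟩
  | succ M ih =>
    rw [E, Finset.prod_range_succ, Finset.sum_range_succ, Finset.sum_range_succ]
    exact ih.mul p hh (H M)

end pairing
end St13

namespace St13
section expl
set_option linter.unusedSimpArgs false
variable (p : ℕ) [Fact p.Prime]
open Polynomial

/-- binomial sums -/
noncomputable def S (m : ℕ) (g : ℕ → ℤ_[p][X]) : ℤ_[p][X] :=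
  ∑ x ∈ Finset.HasAntidiagonal.antidiagonal m,
    C (m.choose x.1 : ℤ_[p]) * (asc ℤ_[p] x.1 * (asc ℤ_[p] x.2).comp (-X)) * g x.1

/-- sums of `xs` -/
noncomputable def As (M : ℕ) : ℤ_[p][X] := ∑ i ∈ Finset.range M, xs _ i

/-- sums of `ys` -/
noncomputable def Bs (M : ℕ) : ℤ_[p][X] := ∑ i ∈ Finset.range M, ys _ i

lemma Q_exp (hp11 : 11 ≤ p) : ∃ α β h : ℤ_[p], 2 * h = 1 ∧ ∀ m, ∃ R : ℤ_[p][X],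
    Q p m = S p m (fun _ => 1) + C ((p : ℤ_[p]) ^ 3 * α) * S p m (As p)
      + C ((p : ℤ_[p]) ^ 5 * β) * S p m (Bs p)
      + C ((p : ℤ_[p]) ^ 6 * (α ^ 2 * h)) * S p m (fun M => As p M ^ 2)
      + C ((p : ℤ_[p]) ^ 7) * R := by
  obtain ⟨α, β, h, hh, H⟩ := E_shape p hp11
  refine ⟨α, β, h, hh, fun m => ?_⟩
  choose τ hτ using H
  refine ⟨S p m τ, ?_⟩
  simp only [S, Q, Finset.mul_sum, ← Finset.sum_add_distrib]
  refine Finset.sum_congr rfl fun x _ => ?_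
  rw [hτ, ← As, ← Bs]
  simp only [C_mul, C_pow]
  ring

lemma S_eq (m : ℕ) (g : ℕ → ℤ_[p][X]) : S p m g = ∑ k ∈ Finset.range (m + 1),
    (m.choose k : ℤ_[p][X]) * ((∏ i ∈ Finset.range k, (X + (i : ℤ_[p][X]))) *
      (∏ i ∈ Finset.range (m - k), (-X + (i : ℤ_[p][X])))) * g k := by
  rw [S, Finset.Nat.sum_antidiagonal_eq_sum_range_succ_mk]
  simp [asc, prod_comp]

lemma As_eq (M : ℕ) : As p M = ∑ i ∈ Finset.range M,
    ((X + (i : ℤ_[p][X])) * (X + (i : ℤ_[p][X]) + 1) - (i : ℤ_[p][X]) * ((i : ℤ_[p][X]) + 1)) := by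
  simp [As, xs]

lemma Bs_eq (M : ℕ) : Bs p M = ∑ i ∈ Finset.range M,
    (((X + (i : ℤ_[p][X])) * (X + (i : ℤ_[p][X]) + 1)) ^ 2 - ((i : ℤ_[p][X]) * ((i : ℤ_[p][X]) + 1)) ^ 2) := by
  simp [Bs, ys]

lemma S_1_0 : S p 1 (fun _ => 1) = 0 := by
  simp only [S_eq, As_eq, Bs_eq, Finset.sum_range_succ, Finset.prod_range_succ, Finset.sum_range_zero,
    Finset.prod_range_zero, Nat.choose, Nat.reduceAdd, Nat.reduceSub, Nat.cast_ofNat, Nat.cast_zero,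
    Nat.cast_one, Nat.sub_zero, Nat.sub_self]
  ring
lemma S_1_1 : S p 1 (As p) = 1 * X ^ 2 + 1 * X ^ 3 := by
  simp only [S_eq, As_eq, Bs_eq, Finset.sum_range_succ, Finset.prod_range_succ, Finset.sum_range_zero,
    Finset.prod_range_zero, Nat.choose, Nat.reduceAdd, Nat.reduceSub, Nat.cast_ofNat, Nat.cast_zero,
    Nat.cast_one, Nat.sub_zero, Nat.sub_self]
  ring
lemma S_1_2 : S p 1 (Bs p) = 1 * X ^ 3 + 2 * X ^ 4 + 1 * X ^ 5 := by
  simp only [S_eq, As_eq, Bs_eq, Finset.sum_range_succ, Finset.prod_range_succ, Finset.sum_range_zero,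
    Finset.prod_range_zero, Nat.choose, Nat.reduceAdd, Nat.reduceSub, Nat.cast_ofNat, Nat.cast_zero,
    Nat.cast_one, Nat.sub_zero, Nat.sub_self]
  ring
lemma S_1_3 : S p 1 (fun M => As p M ^ 2) = 1 * X ^ 3 + 2 * X ^ 4 + 1 * X ^ 5 := by
  simp only [S_eq, As_eq, Bs_eq, Finset.sum_range_succ, Finset.prod_range_succ, Finset.sum_range_zero,
    Finset.prod_range_zero, Nat.choose, Nat.reduceAdd, Nat.reduceSub, Nat.cast_ofNat, Nat.cast_zero,
    Nat.cast_one, Nat.sub_zero, Nat.sub_self]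
  ring
lemma S_2_0 : S p 2 (fun _ => 1) = 0 := by
  simp only [S_eq, As_eq, Bs_eq, Finset.sum_range_succ, Finset.prod_range_succ, Finset.sum_range_zero,
    Finset.prod_range_zero, Nat.choose, Nat.reduceAdd, Nat.reduceSub, Nat.cast_ofNat, Nat.cast_zero,
    Nat.cast_one, Nat.sub_zero, Nat.sub_self]
  ring
lemma S_2_1 : S p 2 (As p) = 4 * X ^ 2 + 4 * X ^ 3 := by
  simp only [S_eq, As_eq, Bs_eq, Finset.sum_range_succ, Finset.prod_range_succ, Finset.sum_range_zero,
    Finset.prod_range_zero, Nat.choose, Nat.reduceAdd, Nat.reduceSub, Nat.cast_ofNat, Nat.cast_zero,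
    Nat.cast_one, Nat.sub_zero, Nat.sub_self]
  ring
lemma S_2_2 : S p 2 (Bs p) = 12 * X ^ 2 + 26 * X ^ 3 + 20 * X ^ 4 + 6 * X ^ 5 := by
  simp only [S_eq, As_eq, Bs_eq, Finset.sum_range_succ, Finset.prod_range_succ, Finset.sum_range_zero,
    Finset.prod_range_zero, Nat.choose, Nat.reduceAdd, Nat.reduceSub, Nat.cast_ofNat, Nat.cast_zero,
    Nat.cast_one, Nat.sub_zero, Nat.sub_self]
  ring
lemma S_2_3 : S p 2 (fun M => As p M ^ 2) = 16 * X ^ 3 + 30 * X ^ 4 + 16 * X ^ 5 + 2 * X ^ 6 := by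
  simp only [S_eq, As_eq, Bs_eq, Finset.sum_range_succ, Finset.prod_range_succ, Finset.sum_range_zero,
    Finset.prod_range_zero, Nat.choose, Nat.reduceAdd, Nat.reduceSub, Nat.cast_ofNat, Nat.cast_zero,
    Nat.cast_one, Nat.sub_zero, Nat.sub_self]
  ring
lemma S_3_0 : S p 3 (fun _ => 1) = 0 := by
  simp only [S_eq, As_eq, Bs_eq, Finset.sum_range_succ, Finset.prod_range_succ, Finset.sum_range_zero,
    Finset.prod_range_zero, Nat.choose, Nat.reduceAdd, Nat.reduceSub, Nat.cast_ofNat, Nat.cast_zero,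
    Nat.cast_one, Nat.sub_zero, Nat.sub_self]
  ring
lemma S_3_1 : S p 3 (As p) = 18 * X ^ 2 + 18 * X ^ 3 := by
  simp only [S_eq, As_eq, Bs_eq, Finset.sum_range_succ, Finset.prod_range_succ, Finset.sum_range_zero,
    Finset.prod_range_zero, Nat.choose, Nat.reduceAdd, Nat.reduceSub, Nat.cast_ofNat, Nat.cast_zero,
    Nat.cast_one, Nat.sub_zero, Nat.sub_self]
  ring
lemma S_3_2 : S p 3 (Bs p) = 144 * X ^ 2 + 282 * X ^ 3 + 180 * X ^ 4 + 42 * X ^ 5 := by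
  simp only [S_eq, As_eq, Bs_eq, Finset.sum_range_succ, Finset.prod_range_succ, Finset.sum_range_zero,
    Finset.prod_range_zero, Nat.choose, Nat.reduceAdd, Nat.reduceSub, Nat.cast_ofNat, Nat.cast_zero,
    Nat.cast_one, Nat.sub_zero, Nat.sub_self]
  ring
lemma S_3_3 : S p 3 (fun M => As p M ^ 2) = 162 * X ^ 3 + 300 * X ^ 4 + 162 * X ^ 5 + 24 * X ^ 6 := by
  simp only [S_eq, As_eq, Bs_eq, Finset.sum_range_succ, Finset.prod_range_succ, Finset.sum_range_zero,
    Finset.prod_range_zero, Nat.choose, Nat.reduceAdd, Nat.reduceSub, Nat.cast_ofNat, Nat.cast_zero,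
    Nat.cast_one, Nat.sub_zero, Nat.sub_self]
  ring
lemma S_4_0 : S p 4 (fun _ => 1) = 0 := by
  simp only [S_eq, As_eq, Bs_eq, Finset.sum_range_succ, Finset.prod_range_succ, Finset.sum_range_zero,
    Finset.prod_range_zero, Nat.choose, Nat.reduceAdd, Nat.reduceSub, Nat.cast_ofNat, Nat.cast_zero,
    Nat.cast_one, Nat.sub_zero, Nat.sub_self]
  ring
lemma S_4_1 : S p 4 (As p) = 96 * X ^ 2 + 96 * X ^ 3 := by
  simp only [S_eq, As_eq, Bs_eq, Finset.sum_range_succ, Finset.prod_range_succ, Finset.sum_range_zero,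
    Finset.prod_range_zero, Nat.choose, Nat.reduceAdd, Nat.reduceSub, Nat.cast_ofNat, Nat.cast_zero,
    Nat.cast_one, Nat.sub_zero, Nat.sub_self]
  ring
lemma S_4_2 : S p 4 (Bs p) = 1440 * X ^ 2 + 2736 * X ^ 3 + 1632 * X ^ 4 + 336 * X ^ 5 := by
  simp only [S_eq, As_eq, Bs_eq, Finset.sum_range_succ, Finset.prod_range_succ, Finset.sum_range_zero,
    Finset.prod_range_zero, Nat.choose, Nat.reduceAdd, Nat.reduceSub, Nat.cast_ofNat, Nat.cast_zero,
    Nat.cast_one, Nat.sub_zero, Nat.sub_self]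
  ring
lemma S_4_3 : S p 4 (fun M => As p M ^ 2) = 1536 * X ^ 3 + 2832 * X ^ 4 + 1536 * X ^ 5 + 240 * X ^ 6 := by
  simp only [S_eq, As_eq, Bs_eq, Finset.sum_range_succ, Finset.prod_range_succ, Finset.sum_range_zero,
    Finset.prod_range_zero, Nat.choose, Nat.reduceAdd, Nat.reduceSub, Nat.cast_ofNat, Nat.cast_zero,
    Nat.cast_one, Nat.sub_zero, Nat.sub_self]
  ring
lemma S_5_0 : S p 5 (fun _ => 1) = 0 := by
  simp only [S_eq, As_eq, Bs_eq, Finset.sum_range_succ, Finset.prod_range_succ, Finset.sum_range_zero,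
    Finset.prod_range_zero, Nat.choose, Nat.reduceAdd, Nat.reduceSub, Nat.cast_ofNat, Nat.cast_zero,
    Nat.cast_one, Nat.sub_zero, Nat.sub_self]
  ring
lemma S_5_1 : S p 5 (As p) = 600 * X ^ 2 + 600 * X ^ 3 := by
  simp only [S_eq, As_eq, Bs_eq, Finset.sum_range_succ, Finset.prod_range_succ, Finset.sum_range_zero,
    Finset.prod_range_zero, Nat.choose, Nat.reduceAdd, Nat.reduceSub, Nat.cast_ofNat, Nat.cast_zero,
    Nat.cast_one, Nat.sub_zero, Nat.sub_self]
  ring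
lemma S_5_2 : S p 5 (Bs p) = 14400 * X ^ 2 + 27000 * X ^ 3 + 15600 * X ^ 4 + 3000 * X ^ 5 := by
  simp only [S_eq, As_eq, Bs_eq, Finset.sum_range_succ, Finset.prod_range_succ, Finset.sum_range_zero,
    Finset.prod_range_zero, Nat.choose, Nat.reduceAdd, Nat.reduceSub, Nat.cast_ofNat, Nat.cast_zero,
    Nat.cast_one, Nat.sub_zero, Nat.sub_self]
  ring
lemma S_5_3 : S p 5 (fun M => As p M ^ 2) = 15000 * X ^ 3 + 27600 * X ^ 4 + 15000 * X ^ 5 + 2400 * X ^ 6 := by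
  simp only [S_eq, As_eq, Bs_eq, Finset.sum_range_succ, Finset.prod_range_succ, Finset.sum_range_zero,
    Finset.prod_range_zero, Nat.choose, Nat.reduceAdd, Nat.reduceSub, Nat.cast_ofNat, Nat.cast_zero,
    Nat.cast_one, Nat.sub_zero, Nat.sub_self]
  ring

lemma Q_coeff (hp11 : 11 ≤ p) : ∃ α : ℤ_[p],
    (p : ℤ_[p]) ^ 4 ∣ (Q p 1).coeff 3 - p ^ 3 * α ∧
    ∀ m d : ℕ, (m, d) ∈ [(1, 0), (2, 2), (3, 24), (4, 240), (5, 2400)] →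
      (p : ℤ_[p]) ^ 7 ∣ 2 * (Q p m).coeff 6 - p ^ 6 * α ^ 2 * d := by
  obtain ⟨α, β, h, hh, H⟩ := Q_exp p hp11
  refine ⟨α, ?_, ?_⟩
  · obtain ⟨R, hR⟩ := H 1
    rw [hR]
    simp only [coeff_add, coeff_C_mul]
    rw [S_1_0, S_1_1, S_1_2, S_1_3]
    simp only [one_mul, coeff_add, coeff_ofNat_mul, coeff_X_pow, coeff_zero]
    norm_num
    exact ⟨p * β + p ^ 2 * (α ^ 2 * h) + p ^ 3 * R.coeff 3, by ring⟩
  · intro m d hmd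
    have key : ∀ x : ℤ_[p], (∃ ρ, x = p ^ 6 * (α ^ 2 * h) * d + p ^ 7 * ρ) →
        (p : ℤ_[p]) ^ 7 ∣ 2 * x - p ^ 6 * α ^ 2 * d := by
      rintro x ⟨ρ, rfl⟩
      exact ⟨2 * ρ, by linear_combination (p : ℤ_[p]) ^ 6 * α ^ 2 * d * hh⟩
    apply key
    obtain ⟨R, hR⟩ := H m
    refine ⟨R.coeff 6, ?_⟩
    simp only [List.mem_cons, Prod.mk.injEq, List.not_mem_nil, or_false] at hmd
    rw [hR]
    simp only [coeff_add, coeff_C_mul]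
    rcases hmd with ⟨rfl, rfl⟩ | ⟨rfl, rfl⟩ | ⟨rfl, rfl⟩ | ⟨rfl, rfl⟩ | ⟨rfl, rfl⟩
    · rw [S_1_0, S_1_1, S_1_2, S_1_3]
      simp [coeff_X_pow, coeff_ofNat_mul]
    · rw [S_2_0, S_2_1, S_2_2, S_2_3]
      simp [coeff_X_pow, coeff_ofNat_mul]
    · rw [S_3_0, S_3_1, S_3_2, S_3_3]
      simp [coeff_X_pow, coeff_ofNat_mul]
    · rw [S_4_0, S_4_1, S_4_2, S_4_3]
      simp [coeff_X_pow, coeff_ofNat_mul]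
    · rw [S_5_0, S_5_1, S_5_2, S_5_3]
      simp [coeff_X_pow, coeff_ofNat_mul]

end expl
end St13

namespace St13
section comb
variable (p : ℕ) [Fact p.Prime]

lemma alpha_exists (hp11 : 11 ≤ p) : ∃ α : ℤ_[p],
    (p : ℤ_[p]) ∣ PowerSeries.coeff p (f p ^ 3) - 6 * α ∧ (p : ℤ_[p]) ∣ L p 1 + 3600 * α ^ 2 := by
  have hp0 : (p : ℤ_[p]) ≠ 0 := Nat.cast_ne_zero.2 (Nat.Prime.ne_zero Fact.out)
  obtain ⟨α, h3, h6⟩ := Q_coeff p hp11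
  refine ⟨α, ?_, ?_⟩
  · have h := coeff_Q p 3 1
    rw [mul_one] at h
    obtain ⟨c, hc⟩ := h3
    refine ⟨6 * c, mul_left_cancel₀ (pow_ne_zero 3 hp0) ?_⟩
    simp only [Nat.factorial, Nat.cast_one, Nat.succ_eq_add_one, Nat.reduceAdd, Nat.reduceMul, Nat.cast_ofNat] at h
    linear_combination h + 6 * hc
  · have key : ∀ m d : ℕ, m ≤ 5 → (m, m.factorial * d) ∈ [(1, 0), (2, 2), (3, 24), (4, 240), (5, 2400)] →
        (p : ℤ_[p]) ∣ T p 1 m - 360 * α ^ 2 * d := by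
      intro m d hm hmd
      have h := coeff_Q p 6 m
      obtain ⟨c, hc⟩ := h6 _ _ hmd
      have hpm : ¬ p ∣ m.factorial := by
        rw [Nat.Prime.dvd_factorial Fact.out]; omega
      apply dvd_cancel p hpm
      refine ⟨360 * c, mul_left_cancel₀ (pow_ne_zero 6 hp0) ?_⟩
      have hT : T p 1 m = PowerSeries.coeff (p * m) (f p ^ 6) := by
        rw [T, pow_one, mul_comm]
      rw [hT]
      have h720 : ((Nat.factorial 6 : ℕ) : ℤ_[p]) = 720 := by norm_num [Nat.factorial]
      rw [h720] at h
      push_cast at hc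
      linear_combination h + 360 * hc
    obtain ⟨c1, h1⟩ := key 1 0 (by norm_num) (by decide)
    obtain ⟨c2, h2⟩ := key 2 1 (by norm_num) (by decide)
    obtain ⟨c3, h3⟩ := key 3 4 (by norm_num) (by decide)
    obtain ⟨c4, h4⟩ := key 4 10 (by norm_num) (by decide)
    obtain ⟨c5, h5⟩ := key 5 20 (by norm_num) (by decide)
    rw [L]
    push_cast at h1 h2 h3 h4 h5
    exact ⟨300 * c1 - 300 * c2 + 200 * c3 - 75 * c4 + 12 * c5, by
      linear_combination 300 * h1 - 300 * h2 + 200 * h3 - 75 * h4 + 12 * h5⟩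

end comb
end St13

namespace St13
section bern
variable (p : ℕ) [Fact p.Prime]

lemma sum_pow_range (l : ℕ) (hl : l ≠ 0) :
    (∑ k ∈ Finset.range p, (k : ZMod p) ^ l) = if (p - 1) ∣ l then -1 else 0 := by
  have hbij : (∑ k ∈ Finset.Ico 1 p, (k : ZMod p) ^ l) = ∑ u : (ZMod p)ˣ, (u : ZMod p) ^ l :=
    Finset.sum_bij'
      (fun v hv ↦ Units.mk0 (v : ZMod p) (mt (ZMod.natCast_eq_zero_iff v p).mp
        (not_dvd_of_mem p hv)))
      (fun u _ ↦ (u : ZMod p).val)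
      (fun _ _ ↦ Finset.mem_univ _)
      (fun u _ ↦ by
        have h1 : (u : ZMod p).val ≠ 0 := by rw [Ne, ZMod.val_eq_zero]; exact u.ne_zero
        have h2 := ZMod.val_lt (u : ZMod p)
        exact Finset.mem_Ico.2 (by omega))
      (fun v hv ↦ by simp [ZMod.val_cast_of_lt (Finset.mem_Ico.mp hv).2])
      (fun u _ ↦ Units.ext (ZMod.natCast_zmod_val _))
      (fun _ _ ↦ rfl)
  have hp : 0 < p := Nat.Prime.pos Fact.out
  rw [Finset.range_eq_Ico, Finset.sum_eq_sum_Ico_succ_bot hp, zero_add, hbij,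
    FiniteField.sum_pow_units, ZMod.card, Nat.cast_zero, zero_pow hl, zero_add]

lemma bern_integral (i : ℕ) (hi : i + 1 < p) : ∃ b : ℤ_[p], (b : ℚ_[p]) = ((bernoulli i : ℚ) : ℚ_[p]) := by
  induction i using Nat.strong_induction_on with
  | _ i ih =>
    have h := sum_bernoulli (i + 1)
    rw [Finset.sum_range_succ] at h
    have hex : ∃ s : ℤ_[p], (s : ℚ_[p]) =
        ((∑ k ∈ Finset.range i, ((i + 1).choose k : ℚ) * bernoulli k : ℚ) : ℚ_[p]) := by
      have : ∀ k : ℕ, ∃ b : ℤ_[p], k ∈ Finset.range i → (b : ℚ_[p]) = ((bernoulli k : ℚ) : ℚ_[p]) := by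
        intro k
        by_cases hk : k ∈ Finset.range i
        · obtain ⟨b, hb⟩ := ih k (Finset.mem_range.1 hk) (by have := Finset.mem_range.1 hk; omega)
          exact ⟨b, fun _ => hb⟩
        · exact ⟨0, fun h => absurd h hk⟩
      choose b hb using this
      refine ⟨∑ k ∈ Finset.range i, ((i + 1).choose k : ℤ_[p]) * b k, ?_⟩
      rw [PadicInt.coe_sum, Rat.cast_sum]
      refine Finset.sum_congr rfl fun k hk => ?_
      rw [PadicInt.coe_mul, hb k hk]
      push_cast
      rfl
    obtain ⟨s, hs⟩ := hex
    have hnd : ¬ p ∣ i + 1 := Nat.not_dvd_of_pos_of_lt (by omega) hi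
    refine ⟨v p (i + 1) * ((if i + 1 = 1 then 1 else 0) - s), ?_⟩
    have h' := congrArg (fun x : ℚ => (x : ℚ_[p])) h
    simp only [Rat.cast_add, Rat.cast_mul, Rat.cast_natCast, Nat.choose_succ_self_right] at h'
    rw [← hs] at h'
    have hm := congrArg (fun x : ℤ_[p] => (x : ℚ_[p])) (mul_v p hnd)
    simp only [PadicInt.coe_mul, PadicInt.coe_natCast, PadicInt.coe_one] at hm
    rw [PadicInt.coe_mul, PadicInt.coe_sub]
    have hif : (((if i + 1 = 1 then 1 else 0 : ℤ_[p])) : ℚ_[p]) = ((if i + 1 = 1 then 1 else 0 : ℚ) : ℚ_[p]) := by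
      split_ifs <;> simp
    rw [hif, ← h']
    linear_combination ((bernoulli i : ℚ) : ℚ_[p]) * hm

lemma faulhaber (hp11 : 11 ≤ p) : ∃ b : ℕ → ℤ_[p],
    ((b (p - 3) : ℤ_[p]) : ℚ_[p]) = ((bernoulli (p - 3) : ℚ) : ℚ_[p]) ∧
    ∀ n : ℕ, - (∑ k ∈ Finset.range n, (k : ZMod p) ^ (p - 2)) = ∑ i ∈ Finset.range (p - 1),
      PadicInt.toZMod (b i) * ((p - 1).choose i : ZMod p) * (n : ZMod p) ^ (p - 1 - i) := by
  have : ∀ k : ℕ, ∃ b : ℤ_[p], k ∈ Finset.range (p - 1) → (b : ℚ_[p]) = ((bernoulli k : ℚ) : ℚ_[p]) := by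
    intro k
    by_cases hk : k ∈ Finset.range (p - 1)
    · obtain ⟨b, hb⟩ := bern_integral p k (by have := Finset.mem_range.1 hk; omega)
      exact ⟨b, fun _ => hb⟩
    · exact ⟨0, fun h => absurd h hk⟩
  choose b hb using this
  refine ⟨b, hb _ (Finset.mem_range.2 (by omega)), fun n => ?_⟩
  have h := sum_range_pow n (p - 2)
  rw [show p - 2 + 1 = p - 1 by omega, ← Finset.sum_div] at h
  have hc : ((p - 2 : ℕ) : ℚ) + 1 = p - 1 := by rw [Nat.cast_sub (by omega)]; push_cast; ring
  have hne : (p : ℚ) - 1 ≠ 0 := by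
    have : (11 : ℚ) ≤ p := by exact_mod_cast hp11
    linarith
  rw [hc, eq_div_iff hne] at h
  have h2 : (∑ k ∈ Finset.range n, (k : ℤ_[p]) ^ (p - 2)) * (p - 1) = ∑ i ∈ Finset.range (p - 1),
      b i * ((p - 1).choose i : ℤ_[p]) * (n : ℤ_[p]) ^ (p - 1 - i) := by
    apply Subtype.coe_injective
    have h' := congrArg (fun x : ℚ => (x : ℚ_[p])) h
    simp only [Rat.cast_mul, Rat.cast_sum, Rat.cast_sub, Rat.cast_pow, Rat.cast_natCast, Rat.cast_one] at h'
    simp only [PadicInt.coe_mul, PadicInt.coe_sum, PadicInt.coe_sub, PadicInt.coe_pow, PadicInt.coe_natCast, PadicInt.coe_one]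
    rw [h']
    refine Finset.sum_congr rfl fun i hi => ?_
    rw [hb i hi]
  have h3 := congrArg PadicInt.toZMod h2
  simp only [map_mul, map_sum, map_sub, map_pow, map_natCast, map_one, CharP.cast_eq_zero, zero_sub] at h3
  rw [← h3]; ring

/-- reduction of `f` -/
noncomputable def F : PowerSeries (ZMod p) := PowerSeries.mk fun n => (n : ZMod p) ^ (p - 2)

lemma map_f_F (hp11 : 11 ≤ p) : PowerSeries.map PadicInt.toZMod (f p) = F p := by
  ext n
  rw [PowerSeries.coeff_map, f, F, PowerSeries.coeff_mk, PowerSeries.coeff_mk]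
  by_cases h : p ∣ n
  · rw [v_of_dvd p h, (ZMod.natCast_eq_zero_iff n p).2 h, zero_pow (by omega), map_zero]
  · have h1 := congrArg PadicInt.toZMod (mul_v p h)
    simp only [map_mul, map_natCast, map_one] at h1
    have h0 : (n : ZMod p) ≠ 0 := mt (ZMod.natCast_eq_zero_iff n p).mp h
    have h2 := ZMod.pow_card_sub_one_eq_one h0
    rw [show p - 1 = p - 2 + 1 by omega, pow_succ] at h2
    apply mul_left_cancel₀ h0
    rw [h1, ← h2, mul_comm]

lemma coeff_F2 (hp11 : 11 ≤ p) (b : ℕ) (hb : b < p) : (b : ZMod p) * PowerSeries.coeff b (F p ^ 2)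
    = 2 * ∑ l ∈ Finset.range b, (l : ZMod p) ^ (p - 2) := by
  have hs : ∀ n : ℕ, (n : ZMod p) ^ (p - 1) = n ^ (p - 2) * n := fun n => by
    rw [← pow_succ]; congr 1; omega
  have e1 : ∑ x ∈ Finset.HasAntidiagonal.antidiagonal b, (x.1 : ZMod p) ^ (p - 2) * (x.2 : ZMod p) ^ (p - 1)
      = ∑ l ∈ Finset.range b, (l : ZMod p) ^ (p - 2) := by
    rw [Finset.Nat.sum_antidiagonal_eq_sum_range_succ_mk, Finset.sum_range_succ]
    simp only [Nat.sub_self, Nat.cast_zero]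
    rw [zero_pow (by omega), mul_zero, add_zero]
    refine Finset.sum_congr rfl fun l hl => ?_
    have hl := Finset.mem_range.1 hl
    rw [ZMod.pow_card_sub_one_eq_one, mul_one]
    exact mt (ZMod.natCast_eq_zero_iff _ p).mp (Nat.not_dvd_of_pos_of_lt (by omega) (by omega))
  have e2 : ∑ x ∈ Finset.HasAntidiagonal.antidiagonal b, (x.2 : ZMod p) ^ (p - 2) * (x.1 : ZMod p) ^ (p - 1)
      = ∑ l ∈ Finset.range b, (l : ZMod p) ^ (p - 2) := by
    rw [← e1]
    exact Finset.Nat.sum_antidiagonal_swap (f := fun x : ℕ × ℕ => (x.1 : ZMod p) ^ (p - 2) * (x.2 : ZMod p) ^ (p - 1))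
  rw [two_mul]
  conv_rhs => rw [← e1]
  rw [e1]
  nth_rewrite 1 [← e1]
  rw [← e2, ← Finset.sum_add_distrib, pow_two, PowerSeries.coeff_mul, Finset.mul_sum]
  refine Finset.sum_congr rfl fun x hx => ?_
  rw [Finset.HasAntidiagonal.mem_antidiagonal] at hx
  rw [F, PowerSeries.coeff_mk, PowerSeries.coeff_mk, hs, hs, ← hx]
  push_cast
  ring

lemma choose_mod (hp11 : 11 ≤ p) : (((p - 1).choose (p - 3) : ℕ) : ZMod p) = 1 := by
  obtain ⟨h, hh⟩ : ∃ h, p = 2 * h + 1 := (Nat.Prime.odd_of_ne_two Fact.out (by omega))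
  have h1 : (p - 1).choose (p - 3) = h * (2 * h - 1) := by
    rw [← Nat.choose_symm (by omega), show p - 1 - (p - 3) = 2 by omega, Nat.choose_two_right,
      show p - 1 = 2 * h by omega, mul_assoc, Nat.mul_div_cancel_left _ (by norm_num)]
  have h0 : (2 : ZMod p) * h + 1 = 0 := by
    have h5 := congrArg (fun n : ℕ => (n : ZMod p)) hh
    simp only [CharP.cast_eq_zero] at h5
    push_cast at h5
    exact h5.symm
  have h2 : (2 : ZMod p) ≠ 0 := by
    have : ((2 : ℕ) : ZMod p) ≠ 0 :=
      mt (ZMod.natCast_eq_zero_iff _ p).mp (Nat.not_dvd_of_pos_of_lt (by omega) (by omega))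
    exact_mod_cast this
  rw [h1, Nat.cast_mul, Nat.cast_sub (by omega)]
  push_cast
  apply mul_left_cancel₀ h2
  linear_combination (2 * (h : ZMod p) - 2) * h0

lemma coeff_F3 (hp11 : 11 ≤ p) : ∃ b : ℤ_[p], (b : ℚ_[p]) = ((bernoulli (p - 3) : ℚ) : ℚ_[p]) ∧
    (p : ℤ_[p]) ∣ PowerSeries.coeff p (f p ^ 3) + 2 * b := by
  obtain ⟨b, hb, hF⟩ := faulhaber p hp11
  refine ⟨b (p - 3), hb, ?_⟩
  rw [← toZMod_eq_zero, map_add, ← PowerSeries.coeff_map, map_pow, map_f_F p hp11]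
  have hodd : Odd (p - 2) := by
    obtain ⟨h, hh⟩ : ∃ h, p = 2 * h + 1 := (Nat.Prime.odd_of_ne_two Fact.out (by omega))
    exact ⟨h - 1, by omega⟩
  have e1 : PowerSeries.coeff p (F p ^ 3) = ∑ k ∈ Finset.range p,
      2 * ((k : ZMod p) ^ (p - 3) * - ∑ l ∈ Finset.range k, (l : ZMod p) ^ (p - 2)) := by
    rw [pow_succ, PowerSeries.coeff_mul, Finset.Nat.sum_antidiagonal_eq_sum_range_succ_mk,
      Finset.sum_range_succ]
    have : PowerSeries.coeff (p - p) (F p) = 0 := by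
      rw [F, PowerSeries.coeff_mk, Nat.sub_self, Nat.cast_zero, zero_pow (by omega)]
    simp only [this, mul_zero, add_zero]
    refine Finset.sum_congr rfl fun k hk => ?_
    have hk := Finset.mem_range.1 hk
    have h2 := coeff_F2 p hp11 k hk
    have h3 : PowerSeries.coeff (p - k) (F p) = - ((k : ZMod p) ^ (p - 3) * k) := by
      rw [F, PowerSeries.coeff_mk, Nat.cast_sub hk.le, CharP.cast_eq_zero, zero_sub, hodd.neg_pow,
        ← pow_succ, show p - 3 + 1 = p - 2 by omega]
    rw [h3]
    linear_combination (-(k : ZMod p) ^ (p - 3)) * h2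
  have e2 : PowerSeries.coeff p (F p ^ 3) = 2 * ∑ i ∈ Finset.range (p - 1),
      PadicInt.toZMod (b i) * ((p - 1).choose i : ZMod p) *
        ∑ k ∈ Finset.range p, (k : ZMod p) ^ (p - 3 + (p - 1 - i)) := by
    rw [e1, ← Finset.mul_sum]
    simp_rw [hF, Finset.mul_sum]
    rw [Finset.sum_comm]
    simp_rw [← Finset.mul_sum]
    congr 1
    refine Finset.sum_congr rfl fun i _ => ?_
    rw [Finset.mul_sum]
    refine Finset.sum_congr rfl fun k _ => ?_
    rw [pow_add]; ring
  rw [e2, Finset.sum_eq_single (p - 3)]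
  · rw [sum_pow_range p _ (by omega), if_pos (by rw [show p - 3 + (p - 1 - (p - 3)) = p - 1 by omega]),
      choose_mod p hp11, map_mul, map_ofNat]
    ring
  · intro i hi hne
    have hi := Finset.mem_range.1 hi
    rw [sum_pow_range p _ (by omega), if_neg, mul_zero]
    rintro ⟨c, hc⟩
    match c, hc with
    | 0, hc => omega
    | 1, hc => omega
    | c + 2, hc =>
      have : (p - 1) * 2 ≤ (p - 1) * (c + 2) := Nat.mul_le_mul_left _ (by omega)
      omega
  · intro h
    exact absurd (Finset.mem_range.2 (by omega)) h

lemma final (hp11 : 11 ≤ p) (r : ℕ) (hr : 2 ≤ r) : ratCong p r (hsum p 6 (p ^ r))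
      (-((Nat.factorial 5 : ℚ) / 18) * (p : ℚ) ^ (r - 1) * bernoulli (p - 3) ^ 2) := by
  obtain ⟨b, hb, hb3⟩ := coeff_F3 p hp11
  obtain ⟨α, hα, hL⟩ := alpha_exists p hp11
  have hT := T_main (p := p) hp11 r hr
  have hnd : ¬ p ∣ 3 := Nat.not_dvd_of_pos_of_lt (by omega) (by omega)
  have h3 := mul_v p hnd
  refine ratCong_of_dvd p (hsum_eq p 6 (p ^ r))
    (b := -20 * v p 3 * p ^ (r - 1) * b ^ 2) ?_ ?_
  · have h3' := congrArg (fun x : ℤ_[p] => (x : ℚ_[p])) h3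
    simp only [PadicInt.coe_mul, PadicInt.coe_natCast, PadicInt.coe_one] at h3'
    have h33 : ((v p 3 : ℤ_[p]) : ℚ_[p]) = 1 / 3 := by
      rw [v_coe, if_neg hnd]; norm_num
    have h20 : ((20 : ℤ_[p]) : ℚ_[p]) = 20 := rfl
    push_cast
    rw [hb, h33, h20]
    norm_num [Nat.factorial]
  · have hTT : T p r 1 = PowerSeries.coeff (p ^ r) (f p ^ 6) := by rw [T, one_mul]
    rw [← hTT]
    obtain ⟨c1, h1⟩ := hT
    obtain ⟨c2, h2⟩ := hL
    obtain ⟨c3, h4⟩ := hα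
    obtain ⟨c4, h5⟩ := hb3
    have hpr : (p : ℤ_[p]) ^ r = p ^ (r - 1) * p := by
      rw [← pow_succ]; congr 1; omega
    have hpn : ¬ p ∣ 180 := by
      intro h
      have h2 : (180 : ℕ) = 2 ^ 2 * 3 ^ 2 * 5 := by norm_num
      rw [h2] at h
      have hpp : p.Prime := Fact.out
      rcases (hpp.dvd_mul).1 h with h | h
      · rcases (hpp.dvd_mul).1 h with h | h
        · have := Nat.le_of_dvd (by norm_num) (hpp.dvd_of_dvd_pow h); omega
        · have := Nat.le_of_dvd (by norm_num) (hpp.dvd_of_dvd_pow h); omega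
      · have := Nat.le_of_dvd (by norm_num) h; omega
    apply dvd_cancel p hpn
    -- 6 α + 2 b is a multiple of p
    have h6 : 6 * α + 2 * b = p * (c4 - c3) := by linear_combination h5 - h4
    rw [hpr] at h1 ⊢
    push_cast at h3 ⊢
    refine ⟨3 * c1 + 3 * c2 - 300 * (6 * α - 2 * b) * (c4 - c3), ?_⟩
    linear_combination 3 * h1 + 3 * (p : ℤ_[p]) ^ (r - 1) * h2
      - 300 * (p : ℤ_[p]) ^ (r - 1) * (6 * α - 2 * b) * h6 + 1200 * (p : ℤ_[p]) ^ (r - 1) * b ^ 2 * h3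

end bern
end St13

theorem stmt_13 (p r : ℕ) (hp : p.Prime) (hp11 : 11 ≤ p) (hr : 2 ≤ r) :
    ratCong p r (hsum p 6 (p ^ r))
      (-((Nat.factorial 5 : ℚ) / 18) * (p : ℚ) ^ (r - 1) * bernoulli (p - 3) ^ 2) := by
  haveI : Fact p.Prime := ⟨hp⟩
  exact St13.final p hp11 r hr
end

section
/- Let p ≥ 11 be a prime, r ≥ 2 an integer, and n a positive integer with p^r | n and p^{r+1} ∤ n. Then the sum of 1/(l_1⋯l_6) over all 6-tuples of positive integers with l_1+⋯+l_6 = n and each l_i coprime to p is congruent to -(5!/18)·(n/p)·B_{p-3}² modulo p^r. -/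
/-- `x ∈ p^k ℤ_(p)`. -/
def PI (p k : ℕ) (x : ℚ) : Prop := ∃ z : ℚ, x = (p : ℚ) ^ k * z ∧ ¬ (p ∣ z.den)

namespace PI

variable {p : ℕ} {k l : ℕ} {x y : ℚ}

theorem of_int (hp : p.Prime) {a : ℤ} (h : (p : ℤ) ^ k ∣ a) : PI p k (a : ℚ) := by
  obtain ⟨c, rfl⟩ := h
  refine ⟨c, by push_cast; ring, ?_⟩
  simpa using hp.one_lt.ne'

theorem int (hp : p.Prime) (a : ℤ) : PI p 0 (a : ℚ) := of_int hp (by simp)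

theorem nat (hp : p.Prime) (a : ℕ) : PI p 0 (a : ℚ) := by
  have := int hp (a : ℤ)
  simpa using this

theorem zero (hp : p.Prime) : PI p k 0 := by
  have := of_int (p := p) (k := k) hp (dvd_zero _)
  simpa using this

theorem add (hp : p.Prime) (hx : PI p k x) (hy : PI p k y) : PI p k (x + y) := by
  obtain ⟨a, rfl, ha⟩ := hx
  obtain ⟨b, rfl, hb⟩ := hy
  refine ⟨a + b, by ring, fun h => ?_⟩
  rcases hp.dvd_mul.1 (h.trans (Rat.add_den_dvd a b)) with h | h
  · exact ha h
  · exact hb h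

theorem neg (hx : PI p k x) : PI p k (-x) := by
  obtain ⟨a, rfl, ha⟩ := hx
  exact ⟨-a, by ring, by simpa using ha⟩

theorem sub (hp : p.Prime) (hx : PI p k x) (hy : PI p k y) : PI p k (x - y) := by
  rw [sub_eq_add_neg]; exact hx.add hp hy.neg

theorem mul (hp : p.Prime) (hx : PI p k x) (hy : PI p l y) : PI p (k + l) (x * y) := by
  obtain ⟨a, rfl, ha⟩ := hx
  obtain ⟨b, rfl, hb⟩ := hy
  refine ⟨a * b, by ring, fun h => ?_⟩
  rcases hp.dvd_mul.1 (h.trans (Rat.mul_den_dvd a b)) with h | h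
  · exact ha h
  · exact hb h

theorem mul_left (hp : p.Prime) (hx : PI p 0 x) (hy : PI p l y) : PI p l (x * y) := by
  simpa using hx.mul hp hy

theorem mul_right (hp : p.Prime) (hx : PI p k x) (hy : PI p 0 y) : PI p k (x * y) := by
  simpa using hx.mul hp hy

theorem ppow (hp : p.Prime) : PI p k ((p : ℚ) ^ k) := by
  have := of_int (p := p) (k := k) hp (dvd_refl _)
  simpa using this

theorem mono (hp : p.Prime) (h : k ≤ l) (hx : PI p l x) : PI p k x := by
  obtain ⟨d, rfl⟩ := Nat.exists_eq_add_of_le h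
  obtain ⟨a, rfl, ha⟩ := hx
  have h1 : PI p 0 ((p : ℚ) ^ d) := by have := nat hp (p ^ d); simpa using this
  have h2 : PI p 0 a := ⟨a, by simp, ha⟩
  have := (ppow (k := k) hp).mul_right hp (h1.mul_right hp h2)
  rwa [← mul_assoc, ← pow_add] at this

theorem inv_nat (_hp : p.Prime) {n : ℕ} (h : ¬ p ∣ n) : PI p 0 ((n : ℚ)⁻¹) := by
  refine ⟨(n : ℚ)⁻¹, by simp, fun h' => h ?_⟩
  rcases Nat.eq_zero_or_pos n with rfl | hn
  · simp
  · rwa [Rat.inv_natCast_den_of_pos hn] at h'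

theorem sum (hp : p.Prime) {ι : Type*} {s : Finset ι} {f : ι → ℚ} (h : ∀ i ∈ s, PI p k (f i)) :
    PI p k (∑ i ∈ s, f i) := by
  classical
  induction s using Finset.induction_on with
  | empty => simpa using zero hp
  | insert a s ha ih =>
    rw [Finset.sum_insert ha]
    exact (h a (by simp)).add hp (ih fun i hi => h i (by simp [hi]))

theorem prod (hp : p.Prime) {ι : Type*} {s : Finset ι} {f : ι → ℚ} {e : ι → ℕ}
    (h : ∀ i ∈ s, PI p (e i) (f i)) : PI p (∑ i ∈ s, e i) (∏ i ∈ s, f i) := by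
  classical
  induction s using Finset.induction_on with
  | empty => simpa using nat hp 1
  | insert a s ha ih =>
    rw [Finset.sum_insert ha, Finset.prod_insert ha]
    exact (h a (by simp)).mul hp (ih fun i hi => h i (by simp [hi]))

theorem div_ppow (hp : p.Prime) (h : PI p (k + l) x) : PI p k (x / (p : ℚ) ^ l) := by
  obtain ⟨a, rfl, ha⟩ := h
  have : (p : ℚ) ≠ 0 := by exact_mod_cast hp.ne_zero
  exact ⟨a, by field_simp; ring, ha⟩

/-- cancel a factor that is a unit. -/
theorem cancel (hp : p.Prime) {n : ℕ} (h : ¬ p ∣ n) (hx : PI p k ((n : ℚ) * x)) : PI p k x := by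
  have hn : (n : ℚ) ≠ 0 := by
    rintro h0
    have : n = 0 := by exact_mod_cast h0
    exact h (by simp [this])
  have := (inv_nat hp h).mul_left hp hx
  rwa [inv_mul_cancel_left₀ hn] at this

theorem prod_sub (hp : p.Prime) {ι : Type*} {s : Finset ι} {f g : ι → ℚ}
    (hf : ∀ i ∈ s, PI p 0 (f i)) (hg : ∀ i ∈ s, PI p 0 (g i))
    (h : ∀ i ∈ s, PI p k (f i - g i)) : PI p k (∏ i ∈ s, f i - ∏ i ∈ s, g i) := by
  classical
  induction s using Finset.induction_on with
  | empty => simpa using zero hp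
  | insert a s ha ih =>
    rw [Finset.prod_insert ha, Finset.prod_insert ha]
    have e : f a * ∏ i ∈ s, f i - g a * ∏ i ∈ s, g i
      = f a * (∏ i ∈ s, f i - ∏ i ∈ s, g i) + (f a - g a) * ∏ i ∈ s, g i := by ring
    rw [e]
    refine ((hf a (by simp)).mul_left hp (ih ?_ ?_ ?_)).add hp
      ((h a (by simp)).mul_right hp ?_)
    · exact fun i hi => hf i (by simp [hi])
    · exact fun i hi => hg i (by simp [hi])
    · exact fun i hi => h i (by simp [hi])
    · have := prod hp (s := s) (f := g) (e := fun _ => 0) (fun i hi => hg i (by simp [hi]))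
      simpa using this

end PI
/-! ### Bernoulli numbers and power sums -/

theorem bern_int {p : ℕ} (hp : p.Prime) (k : ℕ) (hk : k + 1 < p) : PI p 0 (bernoulli k) := by
  have key : ∀ k, k + 1 < p → PI p 0 (bernoulli' k) := by
    intro k
    induction k using Nat.strong_induction_on with
    | _ k ih =>
      intro hk
      rw [bernoulli'_def]
      refine PI.sub hp (by simpa using PI.nat hp 1) (PI.sum hp fun j hj => ?_)
      rw [Finset.mem_range] at hj
      rw [div_eq_mul_inv]
      have h1 : PI p 0 (((k - j + 1 : ℕ) : ℚ)⁻¹) :=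
        PI.inv_nat hp (fun h => by have := Nat.le_of_dvd (by omega) h; omega)
      rw [Nat.cast_add, Nat.cast_sub hj.le, Nat.cast_one] at h1
      exact (((PI.nat hp _).mul_right hp h1).mul_right hp (ih j hj (by omega)))
  have : bernoulli k = (-1) ^ k * bernoulli' k := rfl
  rw [this]
  have h1 : PI p 0 ((-1 : ℚ) ^ k) := by have := PI.int hp ((-1) ^ k); simpa using this
  exact h1.mul_right hp (key k hk)

theorem powsum_one {p : ℕ} (hp : p.Prime) (k : ℕ) (hk : k + 1 < p) :
    PI p 2 (∑ i ∈ Finset.range p, (i : ℚ) ^ k - p * bernoulli k) := by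
  rw [sum_range_pow, Finset.sum_range_succ]
  have hk1 : ((k : ℚ) + 1) ≠ 0 := by positivity
  have e : bernoulli k * ((k + 1).choose k : ℕ) * (p : ℚ) ^ (k + 1 - k) / (k + 1)
      = p * bernoulli k := by
    rw [Nat.choose_succ_self_right, Nat.add_sub_cancel_left]
    push_cast
    field_simp
  rw [e, add_sub_cancel_right]
  refine PI.sum hp fun j hj => ?_
  rw [Finset.mem_range] at hj
  have h1 : PI p 0 (((k + 1 : ℕ) : ℚ)⁻¹) :=
    PI.inv_nat hp (fun h => by have := Nat.le_of_dvd (by omega) h; omega)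
  rw [div_eq_mul_inv]
  push_cast at h1
  refine PI.mul_right hp (PI.mul_left hp ?_ ?_) h1
  · exact (bern_int hp j (by omega)).mul_right hp (PI.nat hp _)
  · exact PI.mono hp (by omega) (PI.ppow hp)

theorem PI.to_int {p k : ℕ} (hp : p.Prime) {a : ℤ} (h : PI p k (a : ℚ)) : (p : ℤ) ^ k ∣ a := by
  obtain ⟨z, hz, hd⟩ := h
  have h1 : (a : ℚ) * z.den = (p : ℚ) ^ k * z.num := by
    rw [hz, mul_assoc, Rat.mul_den_eq_num]
  have h2 : a * z.den = (p : ℤ) ^ k * z.num := by exact_mod_cast h1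
  have h3 : IsCoprime ((p : ℤ) ^ k) (z.den : ℤ) := by
    apply IsCoprime.pow_left
    rw [Nat.isCoprime_iff_coprime]
    exact (hp.coprime_iff_not_dvd).2 hd
  exact h3.dvd_of_dvd_mul_right ⟨_, h2⟩

theorem powsum_dvd {p : ℕ} (hp : p.Prime) (k : ℕ) (hk : k + 1 < p) :
    (p : ℤ) ∣ ∑ i ∈ Finset.range p, (i : ℤ) ^ k := by
  have h := (powsum_one hp k hk).mono hp (k := 1) (by omega)
  have h2 : PI p 1 ((p : ℚ) * bernoulli k) := by
    have := (PI.ppow (k := 1) hp).mul_right hp (bern_int hp k hk)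
    simpa using this
  have h3 := h.add hp h2
  rw [sub_add_cancel] at h3
  have h4 : PI p 1 ((∑ i ∈ Finset.range p, (i : ℤ) ^ k : ℤ) : ℚ) := by push_cast; exact h3
  simpa using h4.to_int hp

/-! ### The polynomial `φ = ∏_{i<p} (X + i)` -/

open Polynomial in
noncomputable def phi (p : ℕ) : ℤ[X] := ∏ i : Fin (p - 1), (X + C ((i : ℤ) + 1))

noncomputable def es (p k : ℕ) : ℤ :=
  MvPolynomial.aeval (fun i : Fin (p - 1) => ((i : ℤ) + 1)) (MvPolynomial.esymm (Fin (p - 1)) ℤ k)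

theorem phi_coeff (p k : ℕ) (hk : k ≤ p - 1) : (phi p).coeff k = es p (p - 1 - k) := by
  have h := MvPolynomial.prod_X_add_C_coeff (σ := Fin (p - 1)) ℤ k (by simpa using hk)
  have h2 := congrArg (MvPolynomial.aeval (fun i : Fin (p - 1) => ((i : ℤ) + 1))) h
  rw [es]
  simp only [Fintype.card_fin] at h2
  rw [← h2]
  have := Polynomial.coeff_map (MvPolynomial.aeval (R := ℤ)
    (fun i : Fin (p - 1) => ((i : ℤ) + 1))).toRingHom (p := ∏ i : Fin (p - 1),
      (Polynomial.X + Polynomial.C (MvPolynomial.X i))) k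
  refine Eq.trans ?_ this
  congr 1
  simp [phi, Polynomial.map_prod]

theorem es_newton (p k : ℕ) : (k : ℤ) * es p k = (-1) ^ (k + 1) *
      ∑ a ∈ Finset.HasAntidiagonal.antidiagonal k with a.1 < k, (-1) ^ a.1 * es p a.1 *
        ∑ i ∈ Finset.range p, (i : ℤ) ^ a.2 := by
  have h := congrArg (MvPolynomial.aeval (fun i : Fin (p - 1) => ((i : ℤ) + 1)))
    (MvPolynomial.mul_esymm_eq_sum (Fin (p - 1)) ℤ k)
  simp only [map_mul, map_natCast, map_pow, map_neg, map_one, map_sum] at h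
  rw [es, h]
  congr 1
  refine Finset.sum_congr rfl fun a ha => ?_
  rw [Finset.mem_filter, Finset.HasAntidiagonal.mem_antidiagonal] at ha
  rw [es]
  congr 1
  rw [MvPolynomial.psum]
  simp only [map_sum, map_pow, MvPolynomial.aeval_X]
  have h0 : a.2 ≠ 0 := by omega
  rcases p with _ | p
  · simp
  · rw [Finset.sum_range_succ', Finset.sum_range]
    simp [h0]

theorem es_zero (p : ℕ) : es p 0 = 1 := by simp [es]

theorem es_dvd {p : ℕ} (hp : p.Prime) (k : ℕ) (h0 : 0 < k) (hk : k + 1 < p) :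
    (p : ℤ) ∣ es p k := by
  have h := es_newton p k
  have h1 : (p : ℤ) ∣ (k : ℤ) * es p k := by
    rw [h]
    refine Dvd.dvd.mul_left (Finset.dvd_sum fun a ha => ?_) _
    rw [Finset.mem_filter, Finset.HasAntidiagonal.mem_antidiagonal] at ha
    exact Dvd.dvd.mul_left (powsum_dvd hp _ (by omega)) _
  rcases (Nat.prime_iff_prime_int.1 hp).dvd_or_dvd h1 with h2 | h2
  · have := Nat.le_of_dvd h0 (by exact_mod_cast h2)
    omega
  · exact h2

theorem es_sq {p : ℕ} (hp : p.Prime) (h11 : 11 ≤ p) :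
    (p : ℤ) ^ 2 ∣ 3 * es p (p - 3) - ∑ i ∈ Finset.range p, (i : ℤ) ^ (p - 3) := by
  have h := es_newton p (p - 3)
  have hodd : Odd p := hp.odd_of_ne_two (by omega)
  have hev : Odd (p - 3 + 1) := by
    obtain ⟨m, hm⟩ := hodd
    exact ⟨m - 1, by omega⟩
  rw [hev.neg_one_pow] at h
  have hmem : (0, p - 3) ∈ (Finset.HasAntidiagonal.antidiagonal (p - 3)).filter (fun a => a.1 < p - 3) := by
    simp; omega
  rw [← Finset.add_sum_erase _ _ hmem] at h
  have h2 : (p : ℤ) ^ 2 ∣ ∑ a ∈ ((Finset.HasAntidiagonal.antidiagonal (p - 3)).filter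
      (fun a => a.1 < p - 3)).erase (0, p - 3), (-1) ^ a.1 * es p a.1 *
        ∑ i ∈ Finset.range p, (i : ℤ) ^ a.2 := by
    refine Finset.dvd_sum fun a ha => ?_
    rw [Finset.mem_erase, Finset.mem_filter, Finset.HasAntidiagonal.mem_antidiagonal] at ha
    have ha0 : a.1 ≠ 0 := fun h0 => ha.1 (Prod.ext h0 (by simp; omega))
    rw [sq]
    exact mul_dvd_mul (Dvd.dvd.mul_left (es_dvd hp _ (by omega) (by omega)) _)
      (powsum_dvd hp _ (by omega))
  have h3 : (p : ℤ) ^ 2 ∣ p * es p (p - 3) := by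
    rw [sq]; exact mul_dvd_mul_left _ (es_dvd hp _ (by omega) (by omega))
  have e : ((p - 3 : ℕ) : ℤ) = p - 3 := by push_cast [Nat.cast_sub (show 3 ≤ p by omega)]; rfl
  rw [e] at h
  simp only [pow_zero, es_zero, one_mul] at h
  have h4 := h3.add h2
  obtain ⟨w, hw⟩ := h4
  exact ⟨w, by linear_combination hw - h⟩

/-- `a₂/p ≡ B_{p-3}/3`. -/
theorem phi_two {p : ℕ} (hp : p.Prime) (h11 : 11 ≤ p) :
    PI p 2 (3 * ((phi p).coeff 2 : ℚ) - p * bernoulli (p - 3)) := by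
  rw [phi_coeff p 2 (by omega), show p - 1 - 2 = p - 3 by omega]
  have h1 := PI.of_int hp (es_sq hp h11)
  have h2 := powsum_one hp (p - 3) (by omega)
  have := h1.add hp h2
  push_cast at this
  convert this using 1
  ring

theorem phi_dvd {p : ℕ} (hp : p.Prime) {k : ℕ} (h0 : 0 < k) (hk : k + 1 < p) :
    (p : ℤ) ∣ (phi p).coeff k := by
  rw [phi_coeff p k (by omega)]
  exact es_dvd hp _ (by omega) (by omega)
open Polynomial in
theorem taylor_expand (f : ℤ[X]) (c : ℤ) (k : ℕ) : ∃ m : ℤ, (taylor c f).coeff k =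
    f.coeff k + (k + 1) * c * f.coeff (k + 1)
      + ((k + 2).choose k : ℤ) * c ^ 2 * f.coeff (k + 2) + c ^ 3 * m := by
  rw [taylor_coeff, eval_eq_sum_range' (n := (hasseDeriv k f).natDegree + 3) (by omega)]
  rw [Finset.sum_range_succ', Finset.sum_range_succ', Finset.sum_range_succ']
  simp only [hasseDeriv_coeff]
  refine ⟨∑ i ∈ Finset.range (hasseDeriv k f).natDegree,
    ((i + 3 + k).choose k : ℤ) * f.coeff (i + 3 + k) * c ^ i, ?_⟩
  rw [Finset.mul_sum]
  have : ∀ i, ((i + 1 + 1 + 1 + k).choose k : ℤ) * f.coeff (i + 1 + 1 + 1 + k) * c ^ (i + 1 + 1 + 1)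
    = c ^ 3 * (((i + 3 + k).choose k : ℤ) * f.coeff (i + 3 + k) * c ^ i) := by
      intro i
      rw [show i + 1 + 1 + 1 + k = i + 3 + k by ring]; ring
  simp only [this]
  rw [show 0 + 1 + 1 + k = k + 2 by ring, show 0 + 1 + k = k + 1 by ring, show 0 + k = k by ring,
    Nat.choose_self, Nat.choose_succ_self_right]
  push_cast
  ring

open Polynomial in
theorem phi_symm {p : ℕ} (hp : p.Prime) (h11 : 11 ≤ p) :
    (taylor (-(p : ℤ)) (phi p)).comp (-X) = phi p := by
  have hodd : Odd p := hp.odd_of_ne_two (by omega)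
  have hev : Even (p - 1) := by
    obtain ⟨m, hm⟩ := hodd
    exact ⟨m, by omega⟩
  have h1 : (taylor (-(p : ℤ)) (phi p)).comp (-X) =
      ∏ i : Fin (p - 1), (-1 : ℤ[X]) * (X + C ((Fin.rev i : ℤ) + 1)) := by
    rw [taylor_apply, phi, prod_comp, prod_comp]
    refine Finset.prod_congr rfl fun i _ => ?_
    have h3 : ((Fin.rev i : ℕ) : ℤ) = p - 2 - i := by
      rw [Fin.val_rev]; have := i.2; omega
    simp only [add_comp, X_comp, C_comp, h3]
    simp only [map_add, map_sub, map_neg, map_one, C_ofNat]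
    ring
  rw [h1, Finset.prod_mul_distrib, phi]
  simp only [Finset.prod_const, Finset.card_univ, Fintype.card_fin, hev.neg_one_pow, one_mul]
  exact Equiv.prod_comp Fin.revPerm (fun i : Fin (p - 1) => (X + C ((i : ℤ) + 1) : ℤ[X]))

open Polynomial in
theorem phi_odd {p : ℕ} (hp : p.Prime) (h11 : 11 ≤ p) (k : ℕ) (hk : Odd k) (hk2 : k + 2 < p) :
    (p : ℤ) ^ 2 ∣ (phi p).coeff k := by
  have h := congrArg (fun f => f.coeff k) (phi_symm hp h11)
  rw [show (-X : ℤ[X]) = C (-1) * X by simp] at h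
  simp only [comp_C_mul_X_coeff, hk.neg_one_pow] at h
  obtain ⟨m, hm⟩ := taylor_expand (phi p) (-(p : ℤ)) k
  rw [hm] at h
  obtain ⟨c, hc⟩ := phi_dvd hp (k := k + 1) (by omega) (by omega)
  rw [hc] at h
  have h2 : (p : ℤ) ^ 2 ∣ 2 * (phi p).coeff k :=
    ⟨(k + 1) * c - ((k + 2).choose k : ℤ) * (phi p).coeff (k + 2) + p * m, by linear_combination -h⟩
  have h3 : IsCoprime ((p : ℤ) ^ 2) 2 := by
    apply IsCoprime.pow_left
    have := (Nat.coprime_primes hp Nat.prime_two).2 (by omega)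
    exact_mod_cast Nat.isCoprime_iff_coprime.2 this
  exact h3.dvd_of_dvd_mul_left h2

/-- The key integer congruence. -/
theorem bracket {p : ℕ} (hp : p.Prime) (h11 : 11 ≤ p) (a b : ℕ → ℤ)
    (ha : ∀ k, a k = (phi p).coeff k)
    (hb : ∀ k, b k = (Polynomial.taylor (p : ℤ) (phi p)).coeff k) :
    (p : ℤ) ^ 3 ∣ (a 0 * b 4 + a 1 * b 3 + a 2 * b 2 + a 3 * b 1 + a 4 * b 0)
      + p * (a 0 * b 5 + a 1 * b 4 + a 2 * b 3 + a 3 * b 2 + a 4 * b 1 + a 5 * b 0)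
      - 2 * b 0 * a 4 - a 2 ^ 2 := by
  obtain ⟨m0, h0⟩ := taylor_expand (phi p) p 0
  obtain ⟨m1, h1⟩ := taylor_expand (phi p) p 1
  obtain ⟨m2, h2⟩ := taylor_expand (phi p) p 2
  obtain ⟨m3, h3⟩ := taylor_expand (phi p) p 3
  obtain ⟨m4, h4⟩ := taylor_expand (phi p) p 4
  obtain ⟨m5, h5⟩ := taylor_expand (phi p) p 5
  simp only [← ha, ← hb] at h0 h1 h2 h3 h4 h5
  obtain ⟨c1, e1⟩ := phi_odd hp h11 1 (by decide) (by omega)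
  obtain ⟨c3, e3⟩ := phi_odd hp h11 3 (by decide) (by omega)
  obtain ⟨c5, e5⟩ := phi_odd hp h11 5 (by decide) (by omega)
  obtain ⟨c2, e2⟩ := phi_dvd hp (k := 2) (by omega) (by omega)
  obtain ⟨c4, e4⟩ := phi_dvd hp (k := 4) (by omega) (by omega)
  obtain ⟨c6, e6⟩ := phi_dvd hp (k := 6) (by omega) (by omega)
  rw [← ha] at e1 e2 e3 e4 e5 e6
  norm_num [Nat.choose] at h0 h1 h2 h3 h4 h5
  rw [e1, e2] at h0
  rw [e1, e2, e3] at h1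
  rw [e2, e3, e4] at h2
  rw [e3, e4, e5] at h3
  rw [e4, e5, e6] at h4
  rw [e5, e6] at h5
  -- b0 = a0 + p^3 n0 etc.
  obtain ⟨n0, g0⟩ : ∃ n, b 0 = a 0 + p ^ 3 * n := ⟨c1 + c2 + m0, by rw [h0]; ring⟩
  obtain ⟨n1, g1⟩ : ∃ n, b 1 = p ^ 2 * n := ⟨c1 + 2 * c2 + 3 * p ^ 2 * c3 + p * m1, by rw [h1]; ring⟩
  obtain ⟨n2, g2⟩ : ∃ n, b 2 = p * c2 + p ^ 3 * n := ⟨3 * c3 + 6 * c4 + m2, by rw [h2]; ring⟩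
  obtain ⟨n3, g3⟩ : ∃ n, b 3 = p ^ 2 * n := ⟨c3 + 4 * c4 + 10 * p ^ 2 * c5 + p * m3, by rw [h3]; ring⟩
  obtain ⟨n4, g4⟩ : ∃ n, b 4 = p * c4 + p ^ 3 * n := ⟨5 * c5 + 15 * c6 + m4, by rw [h4]; ring⟩
  obtain ⟨n5, g5⟩ : ∃ n, b 5 = p ^ 2 * n := ⟨c5 + 6 * c6 + 21 * a 7 + p * m5, by rw [h5]; ring⟩
  rw [e1, e2, e3, e4, e5, g0, g1, g2, g3, g4, g5]
  refine ⟨a 0 * n4 - n0 * p * c4 + p * c1 * n3 + p * c2 * n2 + p * c3 * n1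
    + (a 0 * n5 + c1 * (p * c4 + p ^ 3 * n4) + p * c2 * n3 + c3 * (p * c2 + p ^ 3 * n2)
      + p * c4 * n1 + c5 * (a 0 + p ^ 3 * n0)), by ring⟩
theorem PI.cancel_int {p k : ℕ} {x : ℚ} (hp : p.Prime) {n : ℤ} (h : ¬ (p : ℤ) ∣ n)
    (hx : PI p k ((n : ℚ) * x)) : PI p k x := by
  have h' : ¬ p ∣ n.natAbs := fun h2 => h (Int.natCast_dvd.2 h2)
  refine PI.cancel hp h' ?_
  rcases Int.natAbs_eq n with e | e
  · have : ((n.natAbs : ℕ) : ℚ) = n := by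
      have : (n.natAbs : ℤ) = n := by omega
      rw [← Int.cast_natCast, this]
    rwa [this]
  · have : ((n.natAbs : ℕ) : ℚ) = -n := by
      have : (n.natAbs : ℤ) = -n := by omega
      rw [← Int.cast_natCast, this, Int.cast_neg]
    rw [this, neg_mul]
    exact hx.neg

/-! ### Power series -/

/-- `-log(1-X)`. -/
noncomputable def Lser : PowerSeries ℚ := PowerSeries.mk fun l => (1 : ℚ) / l

/-- `∑_{p ∤ l} X^l / l`. -/
noncomputable def fser (p : ℕ) : PowerSeries ℚ := PowerSeries.mk fun l => if p ∣ l then 0 else (1 : ℚ) / l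

noncomputable def Gser (k : ℕ) : PowerSeries ℚ :=
  PowerSeries.mk fun N => (ascPochhammer ℚ N).coeff k / (N.factorial : ℚ)

open PowerSeries in
theorem Lser_deriv : (1 - X) * derivative ℚ Lser = 1 := by
  ext n
  rw [sub_mul, one_mul, map_sub]
  rcases n with _ | n
  · simp [Lser, coeff_derivative]
  · rw [coeff_succ_X_mul, coeff_derivative, coeff_derivative, Lser, coeff_mk, coeff_mk, coeff_one]
    push_cast
    have h1 : (n : ℚ) + 1 ≠ 0 := by positivity
    have h2 : (n : ℚ) + 1 + 1 ≠ 0 := by positivity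
    field_simp
    simp

open PowerSeries in
theorem Gser_deriv (k : ℕ) : (1 - X) * derivative ℚ (Gser (k + 1)) = Gser k := by
  ext n
  rw [sub_mul, one_mul, map_sub]
  have key : ∀ m : ℕ, coeff m (derivative ℚ (Gser (k + 1))) =
      ((ascPochhammer ℚ m).coeff k + m * (ascPochhammer ℚ m).coeff (k + 1)) / (m.factorial : ℚ) := by
    intro m
    rw [coeff_derivative, Gser, coeff_mk, ascPochhammer_succ_right, mul_add (ascPochhammer ℚ m),
      Polynomial.coeff_add,
      Polynomial.coeff_mul_X, ← Polynomial.C_eq_natCast, Polynomial.coeff_mul_C, Nat.factorial_succ]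
    have h1 : (m : ℚ) + 1 ≠ 0 := by positivity
    have h2 : (m.factorial : ℚ) ≠ 0 := by positivity
    push_cast
    field_simp
  rcases n with _ | n
  · rw [key]; simp [Gser]
  · rw [coeff_succ_X_mul, key (n + 1), coeff_derivative, Gser, Gser, coeff_mk, coeff_mk,
      Nat.factorial_succ]
    push_cast
    have h1 : (n : ℚ) + 1 ≠ 0 := by positivity
    have h2 : (n.factorial : ℚ) ≠ 0 := by positivity
    field_simp
    ring

open PowerSeries in
theorem Lser_pow (k : ℕ) : Lser ^ k = C (k.factorial : ℚ) * Gser k := by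
  induction k with
  | zero =>
    ext n
    rw [pow_zero, Nat.factorial_zero, Nat.cast_one, coeff_C_mul, one_mul, Gser, coeff_mk, coeff_one]
    rcases n with _ | n
    · simp
    · simp [ascPochhammer_succ_left]
  | succ k ih =>
    apply derivative.ext
    · have hX : (1 - X : PowerSeries ℚ) ≠ 0 := by
        intro h
        have := congrArg (coeff 0) h
        simp at this
      apply mul_left_cancel₀ hX
      rw [Derivation.leibniz_pow, Derivation.leibniz]
      have h1 := Lser_deriv
      have h2 := Gser_deriv k
      have h3 : derivative ℚ (C ((k + 1).factorial : ℚ)) = 0 := derivative_C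
      rw [h3, smul_zero, add_zero, Nat.add_sub_cancel, ih, nsmul_eq_mul, smul_eq_mul, smul_eq_mul]
      rw [Nat.factorial_succ]
      have h4 : (C (((k + 1) * k.factorial : ℕ) : ℚ) : PowerSeries ℚ)
        = ((k + 1 : ℕ) : PowerSeries ℚ) * C (k.factorial : ℚ) := by
          rw [← map_natCast (C (R := ℚ)) (k + 1), ← map_mul]; push_cast; rfl
      rw [h4]
      linear_combination (((k + 1 : ℕ) : PowerSeries ℚ) * C (k.factorial : ℚ) * Gser k) * h1 -
        (((k + 1 : ℕ) : PowerSeries ℚ) * C (k.factorial : ℚ)) * h2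
    · have hL : constantCoeff Lser = 0 := by
        rw [← coeff_zero_eq_constantCoeff_apply, Lser, coeff_mk]; simp
      have hG : constantCoeff (Gser (k + 1)) = 0 := by
        rw [← coeff_zero_eq_constantCoeff_apply, Gser, coeff_mk]; simp [Polynomial.coeff_one]
      rw [map_pow, map_mul, hL, hG]; simp

theorem Lser_pow_coeff (k N : ℕ) : PowerSeries.coeff N (Lser ^ k) =
    k.factorial * ((ascPochhammer ℚ N).coeff k / (N.factorial : ℚ)) := by
  rw [Lser_pow, PowerSeries.coeff_C_mul, Gser, PowerSeries.coeff_mk]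

theorem asc_coeff_one (N : ℕ) (h : 0 < N) :
    ((ascPochhammer ℚ N).coeff 1) * N = (N.factorial : ℚ) := by
  have h1 := Lser_pow_coeff 1 N
  rw [pow_one, Lser, PowerSeries.coeff_mk] at h1
  have h2 : (N.factorial : ℚ) ≠ 0 := by positivity
  have h3 : (N : ℚ) ≠ 0 := by positivity
  simp at h1
  field_simp at h1
  linarith

open PowerSeries in
theorem L_decomp {p : ℕ} (hp : 0 < p) : ∃ u2 f' : PowerSeries ℚ,
    Lser = fser p + X ^ p * (C ((1 : ℚ) / p) + X ^ p * u2) ∧ fser p = X * f' := by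
  refine ⟨mk fun j => if p ∣ j then 1 / ((j : ℚ) + 2 * p) else 0,
    mk fun j => coeff (j + 1) (fser p), ?_, ?_⟩
  · ext n
    rw [mul_add, ← mul_assoc, ← pow_add, map_add, map_add, coeff_X_pow_mul', coeff_X_pow_mul', coeff_C,
      coeff_mk, Lser, fser, coeff_mk, coeff_mk]
    by_cases hd : p ∣ n
    · obtain ⟨m, rfl⟩ := hd
      rcases m with _ | _ | m
      · simp [hp.ne']
      · have : ¬ (p + p ≤ p) := by omega
        simp [this]
      · have h1 : p ≤ p * (m + 1 + 1) := by nlinarith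
        have h2 : p + p ≤ p * (m + 1 + 1) := by nlinarith
        have h3 : p * (m + 1 + 1) - (p + p) = p * m := by
          rw [mul_add, mul_add]; omega
        have h4 : p * (m + 1 + 1) - p ≠ 0 := by
          rw [mul_add, mul_add]; omega
        simp only [h1, h2, h3, h4, dvd_mul_right, if_true, if_false]
        push_cast
        ring
    · have h1 : ¬ (p ≤ n ∧ n - p = 0) := fun ⟨h, h'⟩ => hd (by rw [show n = p by omega])
      have h2 : p + p ≤ n → ¬ p ∣ n - (p + p) := fun h h' => hd (by
        have := (Nat.dvd_add_iff_left (m := n - (p + p)) (n := p + p) (k := p) ⟨2, by ring⟩).1 h'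
        rwa [Nat.sub_add_cancel h] at this)
      by_cases c1 : p ≤ n
      · have c3 : n - p ≠ 0 := fun h => h1 ⟨c1, h⟩
        by_cases c2 : p + p ≤ n
        · simp [hd, c1, c2, c3, h2 c2]
        · simp [hd, c1, c2, c3]
      · have c2 : ¬ (p + p ≤ n) := by omega
        simp [hd, c1, c2]
  · ext n
    rcases n with _ | n
    · simp [fser]
    · rw [coeff_succ_X_mul, coeff_mk]

open PowerSeries in
theorem coeff_of_dvd {F G H : PowerSeries ℚ} {N : ℕ} (h : F = G + X ^ (N + 1) * H) :
    coeff (R := ℚ) N F = coeff (R := ℚ) N G := by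
  rw [h, map_add, coeff_X_pow_mul']; simp

open PowerSeries in
theorem f_coeffs {p : ℕ} (hp : 0 < p) :
    coeff (R := ℚ) p (fser p ^ 6) = coeff (R := ℚ) p (Lser ^ 6) ∧
    coeff (R := ℚ) (2 * p) (fser p ^ 6) =
      coeff (R := ℚ) (2 * p) (Lser ^ 6) - 6 / (p : ℚ) * coeff (R := ℚ) p (Lser ^ 5) := by
  obtain ⟨u2, f', hL, hf⟩ := L_decomp hp
  set u := C ((1 : ℚ) / p) + X ^ p * u2 with hu
  obtain ⟨q, rfl⟩ : ∃ q, p = q + 1 := ⟨p - 1, by omega⟩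
  have h5 : coeff (q + 1) (Lser ^ 5) = coeff (q + 1) (fser (q + 1) ^ 5) := by
    refine coeff_of_dvd (H := u * (5 * X ^ 3 * f' ^ 4 + 10 * X ^ 2 * f' ^ 3 * (X ^ (q + 1) * u)
      + 10 * X * f' ^ 2 * (X ^ (q + 1) * u) ^ 2 + 5 * f' * (X ^ (q + 1) * u) ^ 3
      + X ^ q * u * (X ^ (q + 1) * u) ^ 3)) ?_
    rw [hL, hf]; ring
  have h6 : coeff (q + 1) (Lser ^ 6) = coeff (q + 1) (fser (q + 1) ^ 6) := by
    refine coeff_of_dvd (H := u * (6 * X ^ 4 * f' ^ 5 + 15 * X ^ 3 * f' ^ 4 * (X ^ (q + 1) * u)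
      + 20 * X ^ 2 * f' ^ 3 * (X ^ (q + 1) * u) ^ 2
      + 15 * X * f' ^ 2 * (X ^ (q + 1) * u) ^ 3 + 6 * f' * (X ^ (q + 1) * u) ^ 4
      + X ^ q * u * (X ^ (q + 1) * u) ^ 4)) ?_
    rw [hL, hf]; ring
  refine ⟨h6.symm, ?_⟩
  have h7 : coeff (2 * (q + 1)) (Lser ^ 6) = coeff (2 * (q + 1)) (fser (q + 1) ^ 6 +
      X ^ (q + 1) * (C (6 * ((1 : ℚ) / (q + 1 : ℕ))) * fser (q + 1) ^ 5)) := by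
    refine coeff_of_dvd (H := 6 * X ^ 4 * f' ^ 5 * u2 + u ^ 2 * (15 * X ^ 3 * f' ^ 4
      + 20 * X ^ 2 * f' ^ 3 * (X ^ (q + 1) * u)
      + 15 * X * f' ^ 2 * (X ^ (q + 1) * u) ^ 2 + 6 * f' * (X ^ (q + 1) * u) ^ 3
      + X ^ q * u * (X ^ (q + 1) * u) ^ 3)) ?_
    rw [map_mul, hL, hf]
    have : (C (6 : ℚ) : PowerSeries ℚ) = 6 := map_ofNat _ 6
    rw [this]
    have e : C ((1 : ℚ) / (q + 1 : ℕ)) = u - X ^ (q + 1) * u2 := by rw [hu]; ring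
    rw [e]
    ring
  rw [h7, map_add, coeff_X_pow_mul', if_pos (by omega), show 2 * (q + 1) - (q + 1) = q + 1 by omega,
    coeff_C_mul, h5]
  ring
open Polynomial in
theorem asc_p {p : ℕ} (hp : 0 < p) : ascPochhammer ℤ p = X * phi p := by
  obtain ⟨q, rfl⟩ : ∃ q, p = q + 1 := ⟨p - 1, by omega⟩
  have key : ∀ q : ℕ, ascPochhammer ℤ (q + 1) = X * ∏ i : Fin q, (X + C ((i : ℤ) + 1)) := by
    intro q
    induction q with
    | zero => simp
    | succ q ih =>
      rw [ascPochhammer_succ_right, ih, Fin.prod_univ_castSucc, mul_assoc]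
      congr 2
  exact key q

open Polynomial in
theorem asc_2p {p : ℕ} (hp : 0 < p) :
    ascPochhammer ℤ (2 * p) = X * ((phi p * taylor (p : ℤ) (phi p)) * (X + C (p : ℤ))) := by
  rw [two_mul, ← ascPochhammer_mul, asc_p hp, taylor_apply, mul_comp, X_comp]
  rw [show (C (p:ℤ) : ℤ[X]) = (p : ℤ[X]) by simp]
  ring

theorem asc_coeff_cast (N k : ℕ) : (ascPochhammer ℚ N).coeff k = ((ascPochhammer ℤ N).coeff k : ℚ) := by
  rw [← ascPochhammer_map (Int.castRingHom ℚ), Polynomial.coeff_map]; rfl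

/-- the coefficients of `f^6` at `p` and `2p` in terms of those of `φ`. -/
theorem f_values {p : ℕ} (hp : p.Prime) (a b : ℕ → ℤ)
    (ha : ∀ k, a k = (phi p).coeff k)
    (hb : ∀ k, b k = (Polynomial.taylor (p : ℤ) (phi p)).coeff k) :
    (p : ℚ) * a 0 = p.factorial ∧
    (p : ℚ) * a 0 * PowerSeries.coeff (R := ℚ) p (fser p ^ 6) = 720 * a 5 ∧
    (p : ℚ) ^ 2 * (a 0 * b 0) * PowerSeries.coeff (R := ℚ) (2 * p) (fser p ^ 6) = 360 *
      ((a 0 * b 4 + a 1 * b 3 + a 2 * b 2 + a 3 * b 1 + a 4 * b 0)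
      + p * (a 0 * b 5 + a 1 * b 4 + a 2 * b 3 + a 3 * b 2 + a 4 * b 1 + a 5 * b 0)
      - 2 * b 0 * a 4) := by
  have hp0 : (p : ℚ) ≠ 0 := by exact_mod_cast hp.ne_zero
  have cp : ∀ k, (ascPochhammer ℚ p).coeff (k + 1) = a k := by
    intro k
    rw [asc_coeff_cast, asc_p hp.pos, Polynomial.coeff_X_mul, ha]
  have c1 : (ascPochhammer ℚ (2 * p)).coeff 1 = p * (a 0 * b 0) := by
    rw [asc_coeff_cast, asc_2p hp.pos, Polynomial.coeff_X_mul, mul_add, Polynomial.coeff_add,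
      Polynomial.coeff_mul_C, Polynomial.mul_coeff_zero, Polynomial.mul_coeff_zero, ← ha, ← hb]
    simp; ring
  have c6 : (ascPochhammer ℚ (2 * p)).coeff 6 =
      ((a 0 * b 4 + a 1 * b 3 + a 2 * b 2 + a 3 * b 1 + a 4 * b 0)
      + p * (a 0 * b 5 + a 1 * b 4 + a 2 * b 3 + a 3 * b 2 + a 4 * b 1 + a 5 * b 0)) := by
    rw [asc_coeff_cast, asc_2p hp.pos, Polynomial.coeff_X_mul, mul_add, Polynomial.coeff_add,
      Polynomial.coeff_mul_C, Polynomial.coeff_mul_X, Polynomial.coeff_mul, Polynomial.coeff_mul]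
    simp only [← ha, ← hb, Finset.Nat.antidiagonal_succ, Finset.Nat.antidiagonal_zero]
    simp
    ring
  have h1 := asc_coeff_one p hp.pos
  rw [show (1 : ℕ) = 0 + 1 from rfl, cp] at h1
  have h2 := asc_coeff_one (2 * p) (by have := hp.pos; omega)
  rw [c1] at h2
  have ha0 : (a 0 : ℚ) ≠ 0 := by
    intro h; rw [h] at h1; have : (p.factorial : ℚ) ≠ 0 := by positivity
    apply this; rw [← h1]; ring
  have hab : (a 0 : ℚ) * b 0 ≠ 0 := by
    intro h; rw [h] at h2; have : ((2 * p).factorial : ℚ) ≠ 0 := by positivity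
    apply this; rw [← h2]; ring
  have hb0 : (b 0 : ℚ) ≠ 0 := right_ne_zero_of_mul hab
  obtain ⟨f1, f2⟩ := f_coeffs hp.pos
  refine ⟨by rw [← h1]; ring, ?_, ?_⟩
  · rw [f1, Lser_pow_coeff, cp 5, ← h1]
    have : Nat.factorial 6 = 720 := rfl
    rw [this]; push_cast
    field_simp
  · rw [f2, Lser_pow_coeff, Lser_pow_coeff, cp 4, c6, ← h1, ← h2]
    have e6 : Nat.factorial 6 = 720 := rfl
    have e5 : Nat.factorial 5 = 120 := rfl
    rw [e6, e5]; push_cast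
    field_simp
    ring

theorem main_values {p : ℕ} (hp : p.Prime) (h11 : 11 ≤ p) :
    PI p 1 (PowerSeries.coeff (R := ℚ) p (fser p ^ 6)) ∧
    PI p 1 (PowerSeries.coeff (R := ℚ) (2 * p) (fser p ^ 6) - 40 * bernoulli (p - 3) ^ 2) := by
  have hp0 : (p : ℚ) ≠ 0 := by exact_mod_cast hp.ne_zero
  obtain ⟨a, ha⟩ : ∃ a : ℕ → ℤ, ∀ k, a k = (phi p).coeff k := ⟨_, fun _ => rfl⟩
  obtain ⟨b, hb⟩ : ∃ b : ℕ → ℤ, ∀ k, b k = (Polynomial.taylor (p : ℤ) (phi p)).coeff k :=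
    ⟨_, fun _ => rfl⟩
  obtain ⟨h0, h1, h2⟩ := f_values hp a b ha hb
  obtain ⟨w, hw⟩ := bracket hp h11 a b ha hb
  have a0 : a 0 = ((p - 1).factorial : ℕ) := by
    rw [← Nat.mul_factorial_pred hp.ne_zero] at h0
    push_cast at h0
    have := mul_left_cancel₀ hp0 h0
    exact_mod_cast this
  have hnd : ¬ (p : ℤ) ∣ a 0 := by
    rw [a0, Int.natCast_dvd_natCast, hp.dvd_factorial]
    have := hp.pos
    omega
  have hb0 : (p : ℤ) ∣ b 0 - a 0 := by
    obtain ⟨m, hm⟩ := taylor_expand (phi p) p 0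
    rw [hb, hm, ha]
    exact ⟨(phi p).coeff 1 + p * (phi p).coeff 2 + p ^ 2 * m, by norm_num; ring⟩
  have hwil : (p : ℤ) ∣ a 0 + 1 := by
    have := Fact.mk hp
    have := ZMod.wilsons_lemma p
    rw [← ZMod.intCast_zmod_eq_zero_iff_dvd, a0]
    push_cast
    rw [this]; ring
  have hab : (p : ℤ) ∣ a 0 * b 0 - 1 := by
    obtain ⟨s, hs⟩ := hb0
    obtain ⟨t, ht⟩ := hwil
    exact ⟨a 0 * s + (a 0 - 1) * t, by linear_combination a 0 * hs + (a 0 - 1) * ht⟩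
  have hnab : ¬ (p : ℤ) ∣ a 0 * b 0 := by
    intro h
    have h3 := dvd_sub h hab
    rw [sub_sub_cancel] at h3
    have := Int.le_of_dvd one_pos h3
    omega
  constructor
  · refine PI.cancel_int hp hnd ?_
    obtain ⟨c, hc⟩ := phi_odd hp h11 5 (by decide) (by omega)
    rw [← ha] at hc
    have : (a 0 : ℚ) * PowerSeries.coeff (R := ℚ) p (fser p ^ 6) = ((p ^ 1 * (720 * c) : ℤ) : ℚ) := by
      apply mul_left_cancel₀ hp0
      rw [← mul_assoc, h1, hc]; push_cast; ring
    rw [this]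
    exact PI.of_int hp (dvd_mul_right _ _)
  · refine PI.cancel_int hp hnab ?_
    obtain ⟨c, hc⟩ := phi_dvd hp (k := 2) (by omega) (by omega)
    have hB : PI p 1 (3 * (c : ℚ) - bernoulli (p - 3)) := by
      have := PI.div_ppow (k := 1) (l := 1) hp (phi_two hp h11)
      rw [hc] at this
      convert this using 1
      push_cast
      field_simp
    have hBi := bern_int hp (p - 3) (by omega)
    rw [← ha] at hc
    have e : (a 0 : ℚ) * b 0 * PowerSeries.coeff (R := ℚ) (2 * p) (fser p ^ 6) =
        360 * c ^ 2 + 360 * p * w := by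
      apply mul_left_cancel₀ (pow_ne_zero 2 hp0)
      rw [← mul_assoc, h2]
      have hw' : ((a 0 * b 4 + a 1 * b 3 + a 2 * b 2 + a 3 * b 1 + a 4 * b 0)
        + p * (a 0 * b 5 + a 1 * b 4 + a 2 * b 3 + a 3 * b 2 + a 4 * b 1 + a 5 * b 0)
        - 2 * b 0 * a 4 : ℚ) = p ^ 3 * w + a 2 ^ 2 := by
        have : ((a 0 * b 4 + a 1 * b 3 + a 2 * b 2 + a 3 * b 1 + a 4 * b 0)
          + p * (a 0 * b 5 + a 1 * b 4 + a 2 * b 3 + a 3 * b 2 + a 4 * b 1 + a 5 * b 0)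
          - 2 * b 0 * a 4 : ℤ) = p ^ 3 * w + a 2 ^ 2 := by linear_combination hw
        exact_mod_cast this
      rw [hw', hc]; push_cast; ring
    have e2 : ((a 0 * b 0 : ℤ) : ℚ) * (PowerSeries.coeff (R := ℚ) (2 * p) (fser p ^ 6)
        - 40 * bernoulli (p - 3) ^ 2) =
        ((40 : ℤ) : ℚ) * ((3 * (c : ℚ) - bernoulli (p - 3)) * ((3 * c : ℤ) + bernoulli (p - 3)))
        + ((p ^ 1 * (360 * w) : ℤ) : ℚ)
        - ((a 0 * b 0 - 1 : ℤ) : ℚ) * (((40 : ℤ) : ℚ) * (bernoulli (p - 3) * bernoulli (p - 3))) := by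
      push_cast
      rw [mul_sub, e]; ring
    rw [e2]
    refine PI.sub hp (PI.add hp ?_ ?_) ?_
    · exact (PI.int hp _).mul_left hp (hB.mul_right hp ((PI.int hp _).add hp hBi))
    · exact PI.of_int hp (dvd_mul_right _ _)
    · exact (PI.of_int hp (by simpa using hab)).mul_right hp
        ((PI.int hp _).mul_right hp (hBi.mul_right hp hBi))

open PowerSeries in
noncomputable def Wser (p m : ℕ) : PowerSeries ℚ :=
  mk fun N => if p ∣ N then ((N / p + m).choose m : ℚ) else 0

open PowerSeries in
theorem Wser_zero {p : ℕ} (hp : 0 < p) : (1 - X ^ p) * Wser p 0 = 1 := by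
  ext N
  rw [sub_mul, one_mul, map_sub, coeff_X_pow_mul', Wser, coeff_mk, coeff_mk, coeff_one]
  by_cases h : p ≤ N
  · have h0 : N ≠ 0 := by omega
    have : p ∣ N - p ↔ p ∣ N := by
      constructor
      · intro h1
        have := Nat.dvd_add h1 (dvd_refl p); rwa [Nat.sub_add_cancel h] at this
      · intro h1; exact Nat.dvd_sub h1 (dvd_refl p)
    simp [h, h0, this]
  · by_cases h0 : N = 0
    · simp [h0, hp.ne']
    · have : ¬ p ∣ N := fun h1 => h (Nat.le_of_dvd (by omega) h1)
      simp [h, h0, this]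

open PowerSeries in
theorem Wser_succ {p : ℕ} (hp : 0 < p) (m : ℕ) :
    (1 - X ^ p) * Wser p (m + 1) = Wser p m := by
  ext N
  rw [sub_mul, one_mul, map_sub, coeff_X_pow_mul', Wser, Wser, coeff_mk, coeff_mk, coeff_mk]
  by_cases hd : p ∣ N
  · obtain ⟨k, rfl⟩ := hd
    rcases k with _ | k
    · simp [hp.ne']
    · have h1 : p ≤ p * (k + 1) := Nat.le_mul_of_pos_right _ (by omega)
      have h2 : p * (k + 1) - p = p * k := by rw [mul_add, mul_one]; omega
      rw [h2]
      simp only [h1, dvd_mul_right, if_true, Nat.mul_div_cancel_left _ hp]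
      have : (k + 1 + (m + 1)).choose (m + 1) = (k + 1 + m).choose m + (k + (m + 1)).choose (m + 1) := by
        rw [show k + 1 + (m + 1) = (k + 1 + m) + 1 by ring, Nat.choose_succ_succ]
        congr 2; ring
      rw [this]; push_cast; ring
  · by_cases h : p ≤ N
    · have : ¬ p ∣ N - p := fun h1 => hd (by
        have := Nat.dvd_add h1 (dvd_refl p); rwa [Nat.sub_add_cancel h] at this)
      simp [hd, this]
    · simp [hd, h]

open PowerSeries in
theorem Wser_pow {p : ℕ} (hp : 0 < p) (m : ℕ) : Wser p 0 ^ (m + 1) = Wser p m := by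
  induction m with
  | zero => simp
  | succ m ih =>
    rw [pow_succ, ih]
    calc Wser p m * Wser p 0 = ((1 - X ^ p) * Wser p 0) * Wser p (m + 1) := by
          rw [← Wser_succ hp m]; ring
      _ = _ := by rw [Wser_zero hp, one_mul]

/-- coefficient of `X^e W^{m+1}` -/
noncomputable def Ecf (p N e m : ℕ) : ℚ :=
  if e ≤ N ∧ p ∣ N - e then (((N - e) / p + m).choose m : ℚ) else 0

open PowerSeries in
theorem coeff_XW {p : ℕ} (hp : 0 < p) (N e m : ℕ) :
    coeff N (X ^ e * Wser p 0 ^ (m + 1)) = Ecf p N e m := by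
  rw [coeff_X_pow_mul', Wser_pow hp, Wser, coeff_mk, Ecf]
  by_cases h : e ≤ N <;> simp [h]

/-- Newton coefficients of `1/(x+pk)`. -/
noncomputable def ncf (p x i : ℕ) : ℚ :=
  (-(p : ℚ)) ^ i * i.factorial / ∏ j ∈ Finset.range (i + 1), ((x : ℚ) + p * j)

theorem ncf_zero (p x : ℕ) : ncf p x 0 = 1 / (x : ℚ) := by simp [ncf]

theorem ncf_PI {p : ℕ} (hp : p.Prime) {x : ℕ} (hx : ¬ p ∣ x) (i : ℕ) : PI p i (ncf p x i) := by
  have h1 : ¬ p ∣ ∏ j ∈ Finset.range (i + 1), (x + p * j) := by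
    rw [hp.prime.dvd_finsetProd_iff]
    rintro ⟨j, -, hj⟩
    exact hx ((Nat.dvd_add_left (dvd_mul_right p j)).1 hj)
  have h2 := (PI.ppow (k := i) hp).mul_right hp ((PI.int hp ((-1) ^ i * i.factorial)).mul_right hp (PI.inv_nat hp h1))
  convert h2 using 1
  rw [ncf]
  push_cast
  rw [neg_pow]
  ring

theorem newton_exp {p x : ℕ} (hx : 0 < x) (k : ℕ) :
    (1 : ℚ) / ((x + p * k : ℕ) : ℚ) = ∑ i ∈ Finset.range (k + 1), (k.choose i : ℚ) * ncf p x i := by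
  have key : ∀ i : ℕ, ∀ y : ℕ, (fwdDiff (1 : ℕ))^[i] (fun y : ℕ => (1 : ℚ) / ((x : ℚ) + p * y)) y =
      (-(p : ℚ)) ^ i * i.factorial / ∏ j ∈ Finset.range (i + 1), ((x : ℚ) + p * (y + j)) := by
    intro i
    induction i with
    | zero => intro y; simp
    | succ i ih =>
      intro y
      have pos : ∀ z : ℕ, (x : ℚ) + p * z ≠ 0 := fun z => by positivity
      rw [Function.iterate_succ_apply', fwdDiff, ih, ih]
      rw [Finset.prod_range_succ (fun j : ℕ => (x : ℚ) + p * (((y + 1 : ℕ) : ℚ) + j)) i]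
      rw [Finset.prod_range_succ (fun j : ℕ => (x : ℚ) + p * ((y : ℚ) + j)) (i + 1)]
      rw [Finset.prod_range_succ' (fun j : ℕ => (x : ℚ) + p * ((y : ℚ) + j)) i]
      have e : ∏ j ∈ Finset.range i, ((x : ℚ) + p * (((y + 1 : ℕ) : ℚ) + j)) =
          ∏ j ∈ Finset.range i, ((x : ℚ) + p * ((y : ℚ) + ((j + 1 : ℕ) : ℚ))) := by
        refine Finset.prod_congr rfl fun j _ => ?_
        push_cast; ring
      rw [e]
      have hQ : ∏ j ∈ Finset.range i, ((x : ℚ) + p * ((y : ℚ) + ((j + 1 : ℕ) : ℚ))) ≠ 0 :=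
        Finset.prod_ne_zero_iff.2 fun j _ => by positivity
      have h1 : (x : ℚ) + p * (y + ((0 : ℕ) : ℚ)) ≠ 0 := by positivity
      have h2 : (x : ℚ) + p * (y + ((i + 1 : ℕ) : ℚ)) ≠ 0 := by positivity
      have h3 : (x : ℚ) + p * (((y + 1 : ℕ) : ℚ) + i) = (x : ℚ) + p * (y + ((i + 1 : ℕ) : ℚ)) := by
        push_cast; ring
      rw [h3]
      generalize (∏ j ∈ Finset.range i, ((x : ℚ) + p * ((y : ℚ) + ((j + 1 : ℕ) : ℚ)))) = Q at *
      rw [Nat.factorial_succ, div_sub_div _ _ (by positivity) (by positivity),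
        div_eq_div_iff (by positivity) (by positivity)]
      push_cast
      ring
  have := shift_eq_sum_fwdDiff_iter (1 : ℕ) (fun y : ℕ => (1 : ℚ) / ((x : ℚ) + p * y)) k 0
  simp only [key] at this
  simp only [smul_eq_mul, mul_one, zero_add, nsmul_eq_mul, Nat.cast_zero] at this
  push_cast
  rw [this]
  rfl

open PowerSeries in
theorem pow_coeff_congr {F G : PowerSeries ℚ} {n : ℕ} (h : ∀ N ≤ n, coeff N F = coeff N G) (k : ℕ) :
    coeff n (F ^ k) = coeff n (G ^ k) := by
  have h1 : (X : PowerSeries ℚ) ^ (n + 1) ∣ F - G := by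
    rw [X_pow_dvd_iff]
    intro m hm
    rw [map_sub, h m (by omega), sub_self]
  have h2 := (X_pow_dvd_iff.1 (h1.trans (sub_dvd_pow_sub_pow F G k))) n (by omega)
  rw [map_sub] at h2
  linarith

open PowerSeries in
theorem hsum_eq (p n : ℕ) : hsum p 6 n = coeff n (fser p ^ 6) := by
  have e : coeff n (fser p ^ 6) = coeff n ((∑ l ∈ Finset.Icc 1 n,
      C (if p ∣ l then 0 else (1 : ℚ) / l) * X ^ l) ^ 6) := by
    apply pow_coeff_congr
    intro N hN
    rw [map_sum, fser, coeff_mk]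
    simp only [coeff_C_mul, coeff_X_pow, mul_ite, mul_one, mul_zero]
    rw [Finset.sum_ite_eq]
    by_cases h0 : N = 0
    · simp [h0]
    · have : N ∈ Finset.Icc 1 n := Finset.mem_Icc.2 ⟨by omega, hN⟩
      simp only [this, if_true]
  rw [e, Finset.sum_pow', map_sum, hsum, Finset.sum_filter]
  refine Finset.sum_congr rfl fun l hl => ?_
  rw [Finset.prod_mul_distrib, Finset.prod_pow_eq_pow_sum, ← map_prod, coeff_C_mul, coeff_X_pow]
  by_cases h1 : ∑ i, l i = n
  · by_cases h2 : ∀ i, ¬ p ∣ l i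
    · rw [if_pos ⟨h1, h2⟩, if_pos h1.symm, mul_one]
      exact Finset.prod_congr rfl fun i _ => by rw [if_neg (h2 i)]
    · rw [if_neg (fun h => h2 h.2)]
      push Not at h2
      obtain ⟨i, hi⟩ := h2
      rw [Finset.prod_eq_zero (Finset.mem_univ i) (by rw [if_pos hi]), zero_mul]
  · rw [if_neg (fun h => h1 h.1), if_neg (fun h => h1 h.symm), mul_zero]

theorem fser_coeff {p : ℕ} (hp : 0 < p) {n N : ℕ} (hN : N ≤ n) :
    PowerSeries.coeff N (fser p) = ∑ s ∈ Finset.Icc 1 (p - 1) ×ˢ Finset.range (n + 1),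
      ncf p s.1 s.2 * Ecf p N (s.1 + p * s.2) s.2 := by
  rw [fser, PowerSeries.coeff_mk, Finset.sum_product]
  by_cases hd : p ∣ N
  · rw [if_pos hd]
    symm
    refine Finset.sum_eq_zero fun x hx => Finset.sum_eq_zero fun i _ => ?_
    rw [Finset.mem_Icc] at hx
    rw [Ecf, if_neg, mul_zero]
    rintro ⟨h1, h2⟩
    have h3 : p ∣ x + p * i := by
      have := Nat.dvd_sub hd h2
      rwa [Nat.sub_sub_self h1] at this
    rw [Nat.dvd_add_left (dvd_mul_right p i)] at h3
    have := Nat.le_of_dvd (by omega) h3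
    omega
  · rw [if_neg hd]
    obtain ⟨x0, k, hx0, hx1, rfl⟩ : ∃ x0 k, 0 < x0 ∧ x0 < p ∧ N = x0 + p * k :=
      ⟨N % p, N / p, Nat.pos_of_ne_zero fun h => hd (Nat.dvd_of_mod_eq_zero h), Nat.mod_lt _ hp,
        (Nat.mod_add_div N p).symm⟩
    have hkn : k ≤ n := (Nat.le_mul_of_pos_left k hp).trans (by omega)
    rw [Finset.sum_eq_single x0]
    · rw [newton_exp hx0]
      rw [← Finset.sum_subset (Finset.range_mono (by omega : k + 1 ≤ n + 1))]
      · refine Finset.sum_congr rfl fun i hi => ?_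
        have hi' : i ≤ k := by rw [Finset.mem_range] at hi; omega
        obtain ⟨d, rfl⟩ := Nat.exists_eq_add_of_le hi'
        have h3 : x0 + p * (i + d) - (x0 + p * i) = p * d := by rw [mul_add]; omega
        have h4 : x0 + p * i ≤ x0 + p * (i + d) := by rw [mul_add]; omega
        rw [Ecf, h3, if_pos ⟨h4, dvd_mul_right _ _⟩, Nat.mul_div_cancel_left _ hp, add_comm d i]
        ring
      · intro i _ hi
        rw [Ecf, if_neg, mul_zero]
        rintro ⟨h1, -⟩
        apply hi
        dsimp only at h1
        have : p * i ≤ p * k := by omega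
        have := Nat.le_of_mul_le_mul_left this hp
        rw [Finset.mem_range]; omega
    · intro x hx hne
      rw [Finset.mem_Icc] at hx
      refine Finset.sum_eq_zero fun i _ => ?_
      rw [Ecf, if_neg, mul_zero]
      rintro ⟨h1, h2⟩
      have h4 : (x + p * i) ≡ (x0 + p * k) [MOD p] := (Nat.modEq_iff_dvd' h1).2 h2
      have h5 : x ≡ x0 [MOD p] := by
        simpa [Nat.ModEq] using h4
      have := Nat.ModEq.eq_of_lt_of_lt h5 (by omega) (by omega)
      exact hne this
    · intro h
      exact absurd (Finset.mem_Icc.2 ⟨by omega, by omega⟩) h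

open PowerSeries in
theorem expand6 {p : ℕ} (hp : 0 < p) (n : ℕ) (S : Finset (ℕ × ℕ)) (c : ℕ × ℕ → ℚ) :
    coeff n ((∑ s ∈ S, C (c s) * (X ^ (s.1 + p * s.2) * Wser p 0 ^ (s.2 + 1))) ^ 6) =
    ∑ t ∈ Fintype.piFinset (fun _ : Fin 6 => S), (∏ i, c (t i)) *
      Ecf p n (∑ i, (t i).1 + p * ∑ i, (t i).2) (∑ i, (t i).2 + 5) := by
  rw [Finset.sum_pow', map_sum]
  refine Finset.sum_congr rfl fun l hl => ?_
  rw [Finset.prod_mul_distrib, ← map_prod, coeff_C_mul, Finset.prod_mul_distrib,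
    Finset.prod_pow_eq_pow_sum, Finset.prod_pow_eq_pow_sum, ← coeff_XW hp]
  congr 4
  · rw [Finset.sum_add_distrib, Finset.mul_sum]
  · rw [Finset.sum_add_distrib]; simp

theorem fser6_coeff {p : ℕ} (hp : 0 < p) (n : ℕ) :
    PowerSeries.coeff n (fser p ^ 6) =
    ∑ t ∈ Fintype.piFinset (fun _ : Fin 6 => Finset.Icc 1 (p - 1) ×ˢ Finset.range (n + 1)),
      (∏ i, ncf p (t i).1 (t i).2) *
      Ecf p n (∑ i, (t i).1 + p * ∑ i, (t i).2) (∑ i, (t i).2 + 5) := by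
  rw [← expand6 hp n _ (fun s => ncf p s.1 s.2)]
  apply pow_coeff_congr
  intro N hN
  rw [fser_coeff hp hN, map_sum]
  refine Finset.sum_congr rfl fun s _ => ?_
  rw [PowerSeries.coeff_C_mul, coeff_XW hp]

/-- sum over residues tuples with sum `a*p` -/
noncomputable def hh (p a : ℕ) : ℚ :=
  ∑ x ∈ (Fintype.piFinset fun _ : Fin 6 => Finset.Icc 1 (p - 1)) with ∑ i, x i = a * p,
    ∏ i, (1 : ℚ) / x i

theorem sum_bounds {p : ℕ} (hp : 0 < p) {x : Fin 6 → ℕ} (hx : ∀ i, x i ∈ Finset.Icc 1 (p - 1)) {a : ℕ}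
    (h : ∑ i, x i = a * p) : a ∈ Finset.Icc 1 5 := by
  have h1 : ∀ i, 1 ≤ x i ∧ x i + 1 ≤ p := fun i => by
    have := Finset.mem_Icc.1 (hx i); omega
  rw [Fin.sum_univ_six] at h
  have := h1 0; have := h1 1; have := h1 2; have := h1 3; have := h1 4; have := h1 5
  rw [Finset.mem_Icc]
  constructor
  · by_contra h0
    have : a = 0 := by omega
    subst this
    omega
  · by_contra h0
    have : 6 * p ≤ a * p := Nat.mul_le_mul_right p (by omega)
    omega

/-- the `J = 0` part -/
theorem zero_part {p : ℕ} (hp : 0 < p) (m : ℕ) :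
    ∑ x ∈ (Fintype.piFinset fun _ : Fin 6 => Finset.Icc 1 (p - 1)),
      (∏ i, (1 : ℚ) / x i) * Ecf p (p * m) (∑ i, x i) 5 =
    ∑ a ∈ Finset.Icc 1 5, hh p a * (if a ≤ m then ((m - a + 5).choose 5 : ℚ) else 0) := by
  simp only [hh, Finset.sum_mul, Finset.sum_filter]
  rw [Finset.sum_comm]
  refine Finset.sum_congr rfl fun x hx => ?_
  rw [Fintype.mem_piFinset] at hx
  by_cases hd : p ∣ ∑ i, x i
  · obtain ⟨a, ha⟩ := hd
    rw [mul_comm] at ha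
    have hb := sum_bounds hp hx ha
    rw [Finset.sum_eq_single a]
    · rw [if_pos ha, Ecf, ha]
      congr 1
      have h1 : a * p ≤ p * m ↔ a ≤ m := by
        rw [mul_comm a p]; exact Nat.mul_le_mul_left_iff hp
      have h2 : p * m - a * p = p * (m - a) := by rw [Nat.mul_sub, mul_comm a p]
      rw [h2, Nat.mul_div_cancel_left _ hp]
      simp [h1]
    · intro b _ hne
      rw [if_neg, zero_mul]
      intro h
      exact hne (Nat.eq_of_mul_eq_mul_right hp (h.symm.trans ha))
    · intro h; exact absurd hb h
  · rw [Ecf, if_neg, mul_zero]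
    · symm
      refine Finset.sum_eq_zero fun a _ => ?_
      rw [if_neg, zero_mul]
      intro h; exact hd (h ▸ dvd_mul_left p a)
    · rintro ⟨h1, h2⟩
      apply hd
      have := Nat.dvd_sub (dvd_mul_right p m) h2
      rwa [Nat.sub_sub_self h1] at this

/-- reduction of the coefficient to the `J = 0` part. -/
theorem reduction {p : ℕ} (hp : p.Prime) (m k : ℕ)
    (H : ∀ J a, 0 < J → a ∈ Finset.Icc 1 5 → a + J ≤ m →
      PI p k ((p : ℚ) ^ J * ((m - a + 5).choose (J + 5) : ℚ))) :
    PI p k (PowerSeries.coeff (p * m) (fser p ^ 6) -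
      ∑ a ∈ Finset.Icc 1 5, hh p a * (if a ≤ m then ((m - a + 5).choose 5 : ℚ) else 0)) := by
  rw [fser6_coeff hp.pos, ← zero_part hp.pos]
  set T := Fintype.piFinset (fun _ : Fin 6 => Finset.Icc 1 (p - 1) ×ˢ Finset.range (p * m + 1)) with hT
  rw [← Finset.sum_filter_add_sum_filter_not T (fun t => ∑ i, (t i).2 = 0)]
  have e : ∑ t ∈ T with ∑ i, (t i).2 = 0, (∏ i, ncf p (t i).1 (t i).2) *
      Ecf p (p * m) (∑ i, (t i).1 + p * ∑ i, (t i).2) (∑ i, (t i).2 + 5) =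
      ∑ x ∈ (Fintype.piFinset fun _ : Fin 6 => Finset.Icc 1 (p - 1)),
      (∏ i, (1 : ℚ) / x i) * Ecf p (p * m) (∑ i, x i) 5 := by
    refine Finset.sum_bij' (fun t _ => fun i => (t i).1) (fun x _ => fun i => (x i, 0)) ?_ ?_ ?_ ?_ ?_
    · intro t ht
      rw [Finset.mem_filter, hT, Fintype.mem_piFinset] at ht
      rw [Fintype.mem_piFinset]
      exact fun i => (Finset.mem_product.1 (ht.1 i)).1
    · intro x hx
      rw [Fintype.mem_piFinset] at hx
      rw [Finset.mem_filter, hT, Fintype.mem_piFinset]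
      exact ⟨fun i => Finset.mem_product.2 ⟨hx i, by simp⟩, by simp⟩
    · intro t ht
      have h0 := (Finset.mem_filter.1 ht).2
      rw [Finset.sum_eq_zero_iff] at h0
      funext i
      exact Prod.ext rfl (h0 i (Finset.mem_univ i)).symm
    · intro x hx; rfl
    · intro t ht
      have h0 := (Finset.mem_filter.1 ht).2
      rw [h0, mul_zero, add_zero, zero_add]
      rw [Finset.sum_eq_zero_iff] at h0
      congr 1
      refine Finset.prod_congr rfl fun i _ => ?_
      rw [h0 i (Finset.mem_univ i), ncf_zero]
  rw [e, add_sub_cancel_left]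
  refine PI.sum hp fun t ht => ?_
  rw [Finset.mem_filter, hT, Fintype.mem_piFinset] at ht
  obtain ⟨ht, hJ⟩ := ht
  have hx : ∀ i, (t i).1 ∈ Finset.Icc 1 (p - 1) := fun i => (Finset.mem_product.1 (ht i)).1
  set J := ∑ i, (t i).2 with hJd
  have hc : PI p J (∏ i, ncf p (t i).1 (t i).2) := by
    refine PI.prod hp (e := fun i => (t i).2) fun i _ => ncf_PI hp ?_ _
    intro h
    have h1 := Finset.mem_Icc.1 (hx i)
    have := Nat.le_of_dvd (by omega) h
    omega
  rw [Ecf]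
  split_ifs with hE
  · obtain ⟨h1, h2⟩ := hE
    have h3 : p ∣ ∑ i, (t i).1 := by
      have := Nat.dvd_sub (dvd_mul_right p m) h2
      rw [Nat.sub_sub_self h1] at this
      exact (Nat.dvd_add_left (dvd_mul_right p J)).1 this
    obtain ⟨a, ha⟩ := h3
    rw [ha, ← mul_add] at h1
    have h4 : a + J ≤ m := Nat.le_of_mul_le_mul_left h1 hp.pos
    have h5 := H J a (Nat.pos_of_ne_zero hJ) (sum_bounds hp.pos hx (ha.trans (mul_comm _ _))) h4
    rw [ha, ← mul_add, ← Nat.mul_sub, Nat.mul_div_cancel_left _ hp.pos]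
    have h6 : m - (a + J) + (J + 5) = m - a + 5 := by omega
    rw [h6]
    obtain ⟨z, hz, hzd⟩ := hc
    rw [hz, mul_right_comm]
    exact h5.mul_right hp ⟨z, by simp, hzd⟩
  · rw [mul_zero]; exact PI.zero hp

theorem choose_PI {p : ℕ} (hp : p.Prime) (h11 : 11 ≤ p) {r m s J : ℕ} (hr : 1 ≤ r)
    (hm : p ^ (r - 1) ∣ m) (hm0 : 0 < m) (hJ : 0 < J) (hs : s ≤ 4) :
    PI p r ((p : ℚ) ^ J * ((m + s).choose (J + 5) : ℚ)) := by
  rw [Nat.add_choose_eq, Nat.cast_sum, Finset.mul_sum]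
  refine PI.sum hp fun ij hij => ?_
  obtain ⟨u, v⟩ := ij
  rw [Finset.HasAntidiagonal.mem_antidiagonal] at hij
  dsimp only at hij ⊢
  by_cases hv : s < v
  · rw [Nat.choose_eq_zero_of_lt hv]; simp only [mul_zero, Nat.cast_zero]; exact PI.zero hp
  · have hu : u ≠ 0 := by omega
    obtain ⟨e, u', hu', hue⟩ := Nat.exists_eq_pow_mul_and_not_dvd hu p hp.ne_one
    have hlt : u < p ^ J := by
      have h1 : ∀ J : ℕ, 0 < J → J + 5 < 11 ^ J := by
        intro J hJ
        induction J, hJ using Nat.le_induction with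
        | base => norm_num
        | succ k hk ih => rw [pow_succ]; omega
      have := h1 J hJ
      have := Nat.pow_le_pow_left h11 J
      omega
    have heJ : e < J := by
      have hu0 : 0 < u' := Nat.pos_of_ne_zero fun h => hu' (h ▸ dvd_zero p)
      have h1 : p ^ e ≤ u := by rw [hue]; exact Nat.le_mul_of_pos_right _ hu0
      exact (Nat.pow_lt_pow_iff_right hp.one_lt).1 (lt_of_le_of_lt h1 hlt)
    have hab : u * m.choose u = m * (m - 1).choose (u - 1) := by
      obtain ⟨m', rfl⟩ : ∃ m', m = m' + 1 := ⟨m - 1, by omega⟩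
      obtain ⟨w, rfl⟩ : ∃ w, u = w + 1 := ⟨u - 1, by omega⟩
      have := Nat.add_one_mul_choose_eq m' w
      simp only [Nat.add_sub_cancel]
      rw [this]; ring
    rw [Nat.cast_mul, ← mul_assoc]
    refine PI.mul_right hp (PI.cancel hp hu' ?_) (PI.nat hp _)
    have e1 : (u' : ℚ) * ((p : ℚ) ^ J * (m.choose u : ℚ)) =
        (p : ℚ) ^ (J - e) * ((m : ℚ) * ((m - 1).choose (u - 1) : ℕ)) := by
      have h2 : ((u * m.choose u : ℕ) : ℚ) = ((m * (m - 1).choose (u - 1) : ℕ) : ℚ) := by rw [hab]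
      push_cast at h2
      have h3 : (u : ℚ) = (p : ℚ) ^ e * u' := by rw [hue]; push_cast; ring
      rw [← h2, h3]
      have h4 : (p : ℚ) ^ J = (p : ℚ) ^ (J - e) * (p : ℚ) ^ e := by rw [← pow_add]; congr 1; omega
      rw [h4]; ring
    rw [e1]
    have hmP : PI p (r - 1) (m : ℚ) := by
      have := PI.of_int (p := p) (k := r - 1) (a := (m : ℤ)) hp (by exact_mod_cast hm)
      simpa using this
    have := (PI.ppow (k := J - e) hp).mul hp (hmP.mul_right hp (PI.nat hp ((m - 1).choose (u - 1))))
    exact this.mono hp (by omega)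

theorem red_one {p : ℕ} (hp : p.Prime) (m : ℕ) :
    PI p 1 (PowerSeries.coeff (p * m) (fser p ^ 6) -
      ∑ a ∈ Finset.Icc 1 5, hh p a * (if a ≤ m then ((m - a + 5).choose 5 : ℚ) else 0)) := by
  refine reduction hp m 1 fun J a hJ _ _ => ?_
  exact ((PI.ppow (k := J) hp).mono hp hJ).mul_right hp (PI.nat hp _)

theorem h1_PI {p : ℕ} (hp : p.Prime) (h11 : 11 ≤ p) : PI p 1 (hh p 1) := by
  have h := red_one hp 1
  have e : Finset.Icc 1 5 = ({1, 2, 3, 4, 5} : Finset ℕ) := by decide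
  rw [e] at h
  simp at h
  have := ((main_values hp h11).1).sub hp h
  simpa using this

theorem h2_PI {p : ℕ} (hp : p.Prime) (h11 : 11 ≤ p) :
    PI p 1 (hh p 2 - 40 * bernoulli (p - 3) ^ 2) := by
  have h := red_one hp 2
  have e : Finset.Icc 1 5 = ({1, 2, 3, 4, 5} : Finset ℕ) := by decide
  rw [e] at h
  simp at h
  have h2 := (main_values hp h11).2
  rw [mul_comm 2 p] at h2
  have h3 := (PI.nat hp 6).mul_left hp (h1_PI hp h11)
  have := (h2.sub hp h).sub hp h3
  convert this using 1
  push_cast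
  ring

theorem inv_diff {p : ℕ} (hp : p.Prime) {a b : ℚ} (ha0 : a ≠ 0) (hb0 : b ≠ 0) (ha : PI p 0 a⁻¹)
    (hb : PI p 0 b⁻¹) (h : PI p 1 (b - a)) : PI p 1 (1 / a - 1 / b) := by
  have := h.mul_right hp (ha.mul_right hp hb)
  convert this using 1
  field_simp

theorem not_dvd_Icc {p x : ℕ} (hx : x ∈ Finset.Icc 1 (p - 1)) : ¬ p ∣ x := by
  intro h
  have h1 := Finset.mem_Icc.1 hx
  have := Nat.le_of_dvd (by omega) h
  omega

theorem hh_symm {p : ℕ} (hp : p.Prime) {a : ℕ} (ha : a ≤ 6) :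
    PI p 1 (hh p (6 - a) - hh p a) := by
  have e : hh p (6 - a) =
      ∑ x ∈ (Fintype.piFinset fun _ : Fin 6 => Finset.Icc 1 (p - 1)) with ∑ i, x i = a * p,
        ∏ i, (1 : ℚ) / ((p - x i : ℕ) : ℚ) := by
    have mem : ∀ b ≤ 6, ∀ x : Fin 6 → ℕ, x ∈ Finset.filter (fun x : Fin 6 → ℕ => ∑ i, x i = b * p)
        (Fintype.piFinset fun _ : Fin 6 => Finset.Icc 1 (p - 1)) → (fun i => p - x i) ∈
        Finset.filter (fun x : Fin 6 → ℕ => ∑ i, x i = (6 - b) * p)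
        (Fintype.piFinset fun _ : Fin 6 => Finset.Icc 1 (p - 1)) := by
      intro b hb x hx
      rw [Finset.mem_filter, Fintype.mem_piFinset] at hx ⊢
      obtain ⟨hx, hs⟩ := hx
      have h1 : ∀ i, 1 ≤ x i ∧ x i ≤ p - 1 := fun i => Finset.mem_Icc.1 (hx i)
      refine ⟨fun i => Finset.mem_Icc.2 (by have := h1 i; omega), ?_⟩
      rw [Nat.sub_mul, ← hs, Fin.sum_univ_six, Fin.sum_univ_six]
      have := h1 0; have := h1 1; have := h1 2; have := h1 3; have := h1 4; have := h1 5
      omega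
    have inv : ∀ b : ℕ, ∀ x : Fin 6 → ℕ, x ∈ Finset.filter (fun x : Fin 6 → ℕ => ∑ i, x i = b * p)
        (Fintype.piFinset fun _ : Fin 6 => Finset.Icc 1 (p - 1)) →
        (fun i => p - (p - x i)) = x := by
      intro b x hx
      rw [Finset.mem_filter, Fintype.mem_piFinset] at hx
      funext i
      have := Finset.mem_Icc.1 (hx.1 i)
      omega
    rw [hh]
    refine Finset.sum_bij' (fun x _ => fun i => p - x i) (fun x _ => fun i => p - x i) ?_ ?_ ?_ ?_ ?_
    · intro x hx
      have := mem (6 - a) (by omega) x hx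
      rwa [show 6 - (6 - a) = a by omega] at this
    · intro x hx
      exact mem a ha x hx
    · intro x hx; exact inv _ x hx
    · intro x hx; exact inv _ x hx
    · intro x hx
      have := inv _ x hx
      refine Finset.prod_congr rfl fun i _ => ?_
      rw [congrFun this i]
  rw [e, hh, ← Finset.sum_sub_distrib]
  refine PI.sum hp fun x hx => ?_
  rw [Finset.mem_filter, Fintype.mem_piFinset] at hx
  have e2 : ∏ i, (1 : ℚ) / x i = ∏ i, (1 : ℚ) / (-(x i : ℚ)) := by
    rw [Fin.prod_univ_six, Fin.prod_univ_six]
    simp only [div_neg]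
    ring
  rw [e2]
  have hnd := fun i => not_dvd_Icc (hx.1 i)
  have hb := fun i => Finset.mem_Icc.1 (hx.1 i)
  have hnd2 : ∀ i, ¬ p ∣ p - x i := fun i => not_dvd_Icc (Finset.mem_Icc.2 (by have := hb i; omega))
  have i1 : ∀ i, PI p 0 (((p - x i : ℕ) : ℚ)⁻¹) := fun i => PI.inv_nat hp (hnd2 i)
  have i2 : ∀ i, PI p 0 ((-(x i : ℚ))⁻¹) := fun i => by
    rw [inv_neg]; exact (PI.inv_nat hp (hnd i)).neg
  refine PI.prod_sub hp (fun i _ => ?_) (fun i _ => ?_) (fun i _ => ?_)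
  · rw [one_div]; exact i1 i
  · rw [one_div]; exact i2 i
  · have := hb i
    refine inv_diff hp ?_ ?_ (i1 i) (i2 i) ?_
    · have : p - x i ≠ 0 := by omega
      exact_mod_cast this
    · have : x i ≠ 0 := by omega
      simpa using this
    · rw [Nat.cast_sub (by omega)]
      have h2 := (PI.ppow (p := p) (k := 1) hp).neg
      convert h2 using 1
      ring

theorem hh_PI {p : ℕ} (hp : p.Prime) (a : ℕ) : PI p 0 (hh p a) := by
  refine PI.sum hp fun x hx => ?_
  rw [Finset.mem_filter, Fintype.mem_piFinset] at hx
  have := PI.prod hp (s := Finset.univ) (f := fun i => (1 : ℚ) / x i) (e := fun _ => 0) fun i _ => by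
    rw [one_div]; exact PI.inv_nat hp (not_dvd_Icc (hx.1 i))
  simpa using this

theorem hh_total {p : ℕ} (hp : 0 < p) : ∑ a ∈ Finset.Icc 1 5, hh p a =
    ∑ x ∈ (Fintype.piFinset fun _ : Fin 6 => Finset.Icc 1 (p - 1)) with p ∣ ∑ i, x i,
      ∏ i, (1 : ℚ) / x i := by
  simp only [hh, Finset.sum_filter]
  rw [Finset.sum_comm]
  refine Finset.sum_congr rfl fun x hx => ?_
  rw [Fintype.mem_piFinset] at hx
  by_cases hd : p ∣ ∑ i, x i
  · obtain ⟨a, ha⟩ := hd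
    rw [mul_comm] at ha
    have hb := sum_bounds hp hx ha
    rw [if_pos (ha ▸ dvd_mul_left p a), Finset.sum_eq_single a]
    · rw [if_pos ha]
    · intro b _ hne
      rw [if_neg]
      intro h
      exact hne (Nat.eq_of_mul_eq_mul_right hp (h.symm.trans ha))
    · intro h; exact absurd hb h
  · rw [if_neg hd]
    refine Finset.sum_eq_zero fun a _ => ?_
    rw [if_neg]
    intro h; exact hd (h ▸ dvd_mul_left p a)

theorem total_PI {p : ℕ} (hp : p.Prime) (h11 : 11 ≤ p) : PI p 1 (∑ a ∈ Finset.Icc 1 5, hh p a) := by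
  rw [hh_total hp.pos]
  set D := Finset.filter (fun x : Fin 6 → ℕ => p ∣ ∑ i, x i)
    (Fintype.piFinset fun _ : Fin 6 => Finset.Icc 1 (p - 1)) with hD
  obtain ⟨q, hq⟩ : ∃ q, p = 2 * q + 1 := by
    have := hp.eq_two_or_odd'
    rcases this with h | ⟨q, h⟩
    · omega
    · exact ⟨q, h⟩
  have mem : ∀ c : ℕ, ¬ p ∣ c → ∀ x ∈ D, (fun i => (c * x i) % p) ∈ D := by
    intro c hc x hx
    rw [hD, Finset.mem_filter, Fintype.mem_piFinset] at hx ⊢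
    refine ⟨fun i => ?_, ?_⟩
    · rw [Finset.mem_Icc]
      have h1 : ¬ p ∣ c * x i := by
        rw [hp.dvd_mul]
        exact fun h => h.elim hc (not_dvd_Icc (hx.1 i))
      have h2 : c * x i % p ≠ 0 := fun h => h1 (Nat.dvd_of_mod_eq_zero h)
      have h3 := Nat.mod_lt (c * x i) hp.pos
      omega
    · rw [Nat.dvd_iff_mod_eq_zero, ← Finset.sum_nat_mod, ← Finset.mul_sum, ← Nat.dvd_iff_mod_eq_zero]
      exact hx.2.mul_left c
  have inv : ∀ c d : ℕ, d * c % p = 1 → ∀ x ∈ D, (fun i => (d * ((c * x i) % p)) % p) = x := by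
    intro c d hcd x hx
    rw [hD, Finset.mem_filter, Fintype.mem_piFinset] at hx
    funext i
    have h1 := Finset.mem_Icc.1 (hx.1 i)
    rw [Nat.mul_mod, Nat.mod_mod, ← Nat.mul_mod, ← mul_assoc, Nat.mul_mod, hcd, one_mul, Nat.mod_mod]
    exact Nat.mod_eq_of_lt (by omega)
  have hc1 : (q + 1) * 2 % p = 1 := by
    rw [show (q + 1) * 2 = p + 1 by omega, Nat.add_mod_left]
    exact Nat.mod_eq_of_lt hp.one_lt
  have n2 : ¬ p ∣ 2 := fun h => by have := Nat.le_of_dvd (by norm_num) h; omega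
  have nq : ¬ p ∣ q + 1 := fun h => by have := Nat.le_of_dvd (by omega) h; omega
  have e : ∑ x ∈ D, ∏ i, (1 : ℚ) / x i = ∑ x ∈ D, ∏ i, (1 : ℚ) / ((2 * x i % p : ℕ) : ℚ) := by
    refine Finset.sum_bij' (fun x _ => fun i => (q + 1) * x i % p) (fun x _ => fun i => 2 * x i % p)
      ?_ ?_ ?_ ?_ ?_
    · exact fun x hx => mem _ nq x hx
    · exact fun x hx => mem _ n2 x hx
    · exact fun x hx => inv _ _ (by rw [mul_comm]; exact hc1) x hx
    · exact fun x hx => inv _ _ hc1 x hx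
    · intro x hx
      have := inv _ _ (by rw [mul_comm]; exact hc1) x hx
      refine Finset.prod_congr rfl fun i _ => ?_
      rw [congrFun this i]
  have e2 : ∑ x ∈ D, ∏ i, (1 : ℚ) / ((2 * x i : ℕ) : ℚ) = (1 / 64) * ∑ x ∈ D, ∏ i, (1 : ℚ) / x i := by
    rw [Finset.mul_sum]
    refine Finset.sum_congr rfl fun x _ => ?_
    rw [Fin.prod_univ_six, Fin.prod_univ_six]
    push_cast
    simp only [one_div, mul_inv]
    ring
  have key : PI p 1 (∑ x ∈ D, ∏ i, (1 : ℚ) / ((2 * x i % p : ℕ) : ℚ) -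
      ∑ x ∈ D, ∏ i, (1 : ℚ) / ((2 * x i : ℕ) : ℚ)) := by
    rw [← Finset.sum_sub_distrib]
    refine PI.sum hp fun x hx => ?_
    have hx2 := mem 2 n2 x hx
    rw [hD, Finset.mem_filter, Fintype.mem_piFinset] at hx hx2
    have hnd : ∀ i, ¬ p ∣ 2 * x i := fun i => by
      rw [hp.dvd_mul]
      exact fun h => h.elim n2 (not_dvd_Icc (hx.1 i))
    have hnd2 : ∀ i, ¬ p ∣ 2 * x i % p := fun i => not_dvd_Icc (hx2.1 i)
    have i1 : ∀ i, PI p 0 (((2 * x i % p : ℕ) : ℚ)⁻¹) := fun i => PI.inv_nat hp (hnd2 i)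
    have i2 : ∀ i, PI p 0 (((2 * x i : ℕ) : ℚ)⁻¹) := fun i => PI.inv_nat hp (hnd i)
    refine PI.prod_sub hp (fun i _ => ?_) (fun i _ => ?_) (fun i _ => ?_)
    · rw [one_div]; exact i1 i
    · rw [one_div]; exact i2 i
    · refine inv_diff hp ?_ ?_ (i1 i) (i2 i) ?_
      · have h3 : 2 * x i % p ≠ 0 := fun h => hnd2 i (by rw [h]; exact dvd_zero p)
        exact Nat.cast_ne_zero.2 h3
      · have h3 : 2 * x i ≠ 0 := fun h => hnd i (by rw [h]; exact dvd_zero p)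
        exact Nat.cast_ne_zero.2 h3
      · have h3 := (PI.ppow (p := p) (k := 1) hp).mul_right hp (PI.nat hp (2 * x i / p))
        have h4 : ((2 * x i : ℕ) : ℚ) = ((2 * x i % p + p * (2 * x i / p) : ℕ) : ℚ) := by
          rw [Nat.mod_add_div]
        convert h3 using 1
        rw [h4]; push_cast; ring
  rw [← e, e2] at key
  have n63 : ¬ p ∣ 63 := by
    intro h
    rw [show 63 = 3 * (3 * 7) by norm_num, hp.dvd_mul, hp.dvd_mul] at h
    rcases h with h | h | h <;> · have := Nat.le_of_dvd (by norm_num) h; omega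
  refine PI.cancel hp n63 ?_
  have := (PI.nat hp 64).mul_left hp key
  convert this using 1
  push_cast
  ring

theorem choose_five (d k : ℕ) (hk : 5 ≤ k) : (120 : ℚ) * ((d + k).choose 5 : ℚ) =
    (d + k) * (d + k - 1) * (d + k - 2) * (d + k - 3) * (d + k - 4) := by
  obtain ⟨N, hN⟩ : ∃ N, d + k = N + 5 := ⟨d + k - 5, by omega⟩
  have h1 : (N + 5).descFactorial 5 = 120 * (N + 5).choose 5 :=
    Nat.descFactorial_eq_factorial_mul_choose _ _
  have h2 : (N + 5).descFactorial 5 = (N + 5) * (N + 4) * (N + 3) * (N + 2) * (N + 1) := by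
    simp only [Nat.descFactorial_succ, Nat.descFactorial_zero]
    rw [show N + 5 - 4 = N + 1 by omega, show N + 5 - 3 = N + 2 by omega,
      show N + 5 - 2 = N + 3 by omega, show N + 5 - 1 = N + 4 by omega, show N + 5 - 0 = N + 5 by omega]
    ring
  have h3 : ((120 * (N + 5).choose 5 : ℕ) : ℚ) = ((N + 5) * (N + 4) * (N + 3) * (N + 2) * (N + 1) : ℕ) := by
    rw [← h1, h2]
  have h4 : (d : ℚ) + k = N + 5 := by exact_mod_cast hN
  rw [hN, h4]
  push_cast at h3
  rw [h3]; ring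

theorem stmt_15 (p r n : ℕ) (hp : p.Prime) (hp11 : 11 ≤ p) (hr : 2 ≤ r) (hn : 0 < n)
    (hpn : p ^ r ∣ n) (hp2n : ¬ p ^ (r + 1) ∣ n) :
    ratCong p r (hsum p 6 n)
      (-((Nat.factorial 5 : ℚ) / 18) * ((n / p : ℕ) : ℚ) * bernoulli (p - 3) ^ 2) := by
  change PI p r (hsum p 6 n -
      (-((Nat.factorial 5 : ℚ) / 18) * ((n / p : ℕ) : ℚ) * bernoulli (p - 3) ^ 2))
  obtain ⟨m, hm, hmn⟩ : ∃ m, p ^ (r - 1) ∣ m ∧ n = p * m := by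
    obtain ⟨c, rfl⟩ := hpn
    refine ⟨p ^ (r - 1) * c, dvd_mul_right _ _, ?_⟩
    rw [← mul_assoc, ← pow_succ', Nat.sub_add_cancel (by omega)]
  subst hmn
  have hm0 : 0 < m := Nat.pos_of_mul_pos_left hn
  have hm11 : 11 ≤ m := by
    have h1 : p ∣ m := (dvd_pow_self p (by omega)).trans hm
    exact hp11.trans (Nat.le_of_dvd hm0 h1)
  rw [Nat.mul_div_cancel_left _ hp.pos, hsum_eq]
  have R := reduction hp m r fun J a hJ ha haJ => by
    rw [Finset.mem_Icc] at ha
    rw [show m - a + 5 = m + (5 - a) by omega]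
    exact choose_PI hp hp11 (by omega) hm hm0 hJ (by omega)
  have e : Finset.Icc 1 5 = ({1, 2, 3, 4, 5} : Finset ℕ) := by decide
  have T := total_PI hp hp11
  rw [e] at R T
  rw [Finset.sum_insert (by decide), Finset.sum_insert (by decide), Finset.sum_insert (by decide),
    Finset.sum_insert (by decide), Finset.sum_singleton] at R T
  rw [if_pos (by omega), if_pos (by omega), if_pos (by omega), if_pos (by omega),
    if_pos (by omega)] at R
  obtain ⟨d, rfl⟩ : ∃ d, m = d + 5 := ⟨m - 5, by omega⟩
  rw [show d + 5 - 1 + 5 = d + 9 by omega, show d + 5 - 2 + 5 = d + 8 by omega,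
    show d + 5 - 3 + 5 = d + 7 by omega, show d + 5 - 4 + 5 = d + 6 by omega,
    show d + 5 - 5 + 5 = d + 5 by omega] at R
  have c9 := choose_five d 9 (by norm_num)
  have c8 := choose_five d 8 (by norm_num)
  have c7 := choose_five d 7 (by norm_num)
  have c6 := choose_five d 6 (by norm_num)
  have c5 := choose_five d 5 (by norm_num)
  have h1 := h1_PI hp hp11
  have h2 := h2_PI hp hp11
  have s4 : PI p 1 (hh p 4 - hh p 2) := hh_symm (a := 2) hp (by norm_num)
  have s5 : PI p 1 (hh p 5 - hh p 1) := hh_symm (a := 1) hp (by norm_num)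
  have hmP : PI p (r - 1) ((d + 5 : ℕ) : ℚ) := by
    have := PI.of_int (p := p) (k := r - 1) (a := ((d + 5 : ℕ) : ℤ)) hp (by exact_mod_cast hm)
    simpa using this
  have n360 : ¬ p ∣ 360 := by
    intro h
    rw [show 360 = 8 * (9 * 5) by norm_num, hp.dvd_mul, hp.dvd_mul] at h
    rcases h with h | h | h <;> · have := Nat.le_of_dvd (by norm_num) h; omega
  refine PI.cancel hp n360 ?_
  have t1 := (PI.nat hp 360).mul_left hp R
  have t2 := hmP.mul hp ((((((PI.int hp 12).mul_left hp T).add hp ((PI.int hp 120).mul_left hp h1)).add hp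
    ((PI.int hp 60).mul_left hp s5)).add hp ((PI.int hp (-30)).mul_left hp s4)).add hp
    ((PI.int hp (-60)).mul_left hp h2))
  have t3 := (hmP.mul hp hmP).mul_right hp ((PI.int hp 3).mul_left hp
    (((((PI.int hp (50 + 35 * (d + 5) + 10 * (d + 5) ^ 2 + (d + 5) ^ 3)).mul_left hp (hh_PI hp 1)).add hp
    ((PI.int hp (-5 + 5 * (d + 5) + 5 * (d + 5) ^ 2 + (d + 5) ^ 3)).mul_left hp (hh_PI hp 2))).add hp
    ((PI.int hp (-5 * (d + 5) + (d + 5) ^ 3)).mul_left hp (hh_PI hp 3))).add hp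
    ((PI.int hp (5 + 5 * (d + 5) - 5 * (d + 5) ^ 2 + (d + 5) ^ 3)).mul_left hp (hh_PI hp 4)) |>.add hp
    ((PI.int hp (-50 + 35 * (d + 5) - 10 * (d + 5) ^ 2 + (d + 5) ^ 3)).mul_left hp (hh_PI hp 5))))
  have := (t1.add hp (t2.mono hp (by omega : r ≤ r - 1 + 1))).add hp
    (t3.mono hp (by omega : r ≤ r - 1 + (r - 1)))
  convert this using 1
  have f5 : Nat.factorial 5 = 120 := rfl
  rw [f5]
  push_cast at c9 c8 c7 c6 c5 ⊢
  linear_combination (3 * hh p 1) * c9 + (3 * hh p 2) * c8 + (3 * hh p 3) * c7 + (3 * hh p 4) * c6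
    + (3 * hh p 5) * c5
end
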